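/- arXiv:2402.09829 — 3 statements merged into one kernel-verified Lean document; each statement's English description precedes it below -/
import Mathlib

section
/- Fix c with 1/2 ≤ c < 1. Then Σ_{h < x^{1−c}, h even} (1/h)·∏_{p | h, p > 2}(1 + 1/(p − 2)) · (log(x/h))^{−2} = (1 + o(1))·(1/𝔖)·(1/(2c) − 1/2)·(log x)^{−1} as x → ∞; that is, for every ε > 0 there is x₀ such that the sum differs from (1/𝔖)(1/(2c) − 1/2)(log x)^{−1} by at most ε·(log x)^{−1} for all x ≥ x₀. -/
open Real Finset

attribute [local instance] Classical.propDecidable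

/-- The twin-prime constant `𝔖 = ∏_{p > 2 prime} (1 − 1/(p−1)²)`. -/
noncomputable def twinConst : ℝ :=
  ∏' p : Nat.Primes, if 2 < (p : ℕ) then 1 - 1 / ((p : ℕ) - 1 : ℝ) ^ 2 else 1

lemma swa_tel (X B : ℝ) (hB : 1 ≤ B) (n : ℕ)
    (h : ∀ m : ℕ, m ≤ n → B ≤ X - Real.log (m + 1)) :
    |(∑ i ∈ Finset.range (n + 1), (1 / ((i : ℝ) + 1)) * (1 / (X - Real.log (i + 1)) ^ 2))
      - (1 / (X - Real.log (n + 1)) - 1 / X)| ≤ (3 - 2 / ((n : ℝ) + 1)) / B ^ 2 := by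
  induction n with
  | zero =>
    have h0 := h 0 le_rfl
    simp only [Nat.cast_zero, zero_add, Real.log_one, sub_zero] at h0
    simp only [zero_add, Finset.sum_range_one, Nat.cast_zero, Real.log_one, sub_zero, sub_self]
    rw [abs_of_nonneg (by positivity)]
    have : 1 / X ^ 2 ≤ 1 / B ^ 2 := by gcongr
    norm_num at this ⊢
    exact this
  | succ n ih =>
    have ih := ih (fun m hm => h m (by omega))
    rw [Finset.sum_range_succ]
    have hu := h n (by omega)
    have hv := h (n + 1) le_rfl
    push_cast at hv ⊢
    set u := X - Real.log ((n : ℝ) + 1) with hu_def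
    set v := X - Real.log ((n : ℝ) + 1 + 1) with hv_def
    set S := ∑ i ∈ Finset.range (n + 1), (1 / ((i : ℝ) + 1)) * (1 / (X - Real.log (i + 1)) ^ 2)
    have hm : (0 : ℝ) < (n : ℝ) + 1 := by positivity
    set m : ℝ := (n : ℝ) + 1 with hm_def
    have hδ : u - v = Real.log ((m + 1) / m) := by
      rw [Real.log_div (by positivity) (by positivity)]; simp only [hu_def, hv_def]; ring
    have hd1 : u - v ≤ 1 / m := by
      rw [hδ]
      have := Real.log_le_sub_one_of_pos (show 0 < (m + 1) / m by positivity)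
      have e : (m + 1) / m - 1 = 1 / m := by field_simp; ring
      linarith
    have hd2 : 1 / (m + 1) ≤ u - v := by
      rw [hδ]
      have := Real.one_sub_inv_le_log_of_pos (show 0 < (m + 1) / m by positivity)
      have e : 1 - ((m + 1) / m)⁻¹ = 1 / (m + 1) := by field_simp; ring
      linarith
    have hu0 : 0 < u := by linarith
    have hv0 : 0 < v := by linarith
    have key : |(1 / (m + 1)) * (1 / v ^ 2) - (1 / v - 1 / u)| ≤ 2 * (1 / m - 1 / (m + 1)) / B ^ 2 := by
      have e : (1 / (m + 1)) * (1 / v ^ 2) - (1 / v - 1 / u)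
          = (1 / (m + 1)) * ((u - v) * (1 / (u * v ^ 2))) - ((u - v) - 1 / (m + 1)) * (1 / (u * v)) := by
        field_simp; ring
      have b1 : 1 / (u * v ^ 2) ≤ 1 / B ^ 2 := by
        apply one_div_le_one_div_of_le (by positivity)
        have : B ^ 2 ≤ v ^ 2 := by gcongr
        nlinarith [sq_nonneg v]
      have b2 : 1 / (u * v) ≤ 1 / B ^ 2 := by
        apply one_div_le_one_div_of_le (by positivity)
        nlinarith
      have f : 1 / m - 1 / (m + 1) = (1 / (m + 1)) * (1 / m) := by field_simp; ring
      have d0 : 0 ≤ u - v := le_trans (by positivity) hd2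
      have c1 : (1 / (m + 1)) * ((u - v) * (1 / (u * v ^ 2))) ≤ (1 / (m + 1)) * ((1 / m) * (1 / B ^ 2)) := by
        gcongr
      have c2 : ((u - v) - 1 / (m + 1)) * (1 / (u * v)) ≤ (1 / m - 1 / (m + 1)) * (1 / B ^ 2) := by
        apply mul_le_mul (by linarith) b2 (by positivity)
        linarith
      have c3 : 0 ≤ (1 / (m + 1)) * ((u - v) * (1 / (u * v ^ 2))) := by positivity
      have c4 : 0 ≤ ((u - v) - 1 / (m + 1)) * (1 / (u * v)) :=
        mul_nonneg (by linarith) (by positivity)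
      rw [e]
      have g : 2 * (1 / m - 1 / (m + 1)) / B ^ 2 = (1 / (m + 1)) * ((1 / m) * (1 / B ^ 2)) + (1 / m - 1 / (m + 1)) * (1 / B ^ 2) := by
        rw [f]; ring
      rw [g, abs_le]
      constructor <;> linarith
    have e2 : S + (1 / (m + 1)) * (1 / v ^ 2) - (1 / v - 1 / X)
      = (S - (1 / u - 1 / X)) + ((1 / (m + 1)) * (1 / v ^ 2) - (1 / v - 1 / u)) := by ring
    rw [e2]
    refine (abs_add_le _ _).trans ((add_le_add ih key).trans (le_of_eq ?_))
    ring


noncomputable def swaW (c x : ℝ) (q : ℕ) : ℝ :=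
  ∑ i ∈ Finset.range (⌈x ^ (1 - c) / q⌉₊ - 1),
    (1 / ((i : ℝ) + 1)) * (1 / (Real.log (x / q) - Real.log (i + 1)) ^ 2)

lemma swa_W_eq (c x : ℝ) (hx : 0 < x) (q : ℕ) (hq : 0 < q) :
    (∑ h ∈ (Finset.range (⌈x ^ (1 - c)⌉₊ + 1)).filter
            (fun h : ℕ => q ∣ h ∧ 0 < h ∧ (h : ℝ) < x ^ (1 - c)),
          (1 / (h : ℝ)) * (Real.log (x / h)) ^ (-2 : ℤ)) = (1 / (q : ℝ)) * swaW c x q := by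
  unfold swaW
  have hq' : (0 : ℝ) < q := by exact_mod_cast hq
  rw [Finset.mul_sum]
  symm
  apply Finset.sum_bij (fun i _ => q * (i + 1))
  · intro i hi
    rw [Finset.mem_range] at hi
    have h1 : i + 1 < ⌈x ^ (1 - c) / q⌉₊ := by omega
    rw [Nat.lt_ceil, lt_div_iff₀ hq'] at h1
    have h2 : ((q * (i + 1) : ℕ) : ℝ) < x ^ (1 - c) := by push_cast at h1 ⊢; linarith
    rw [Finset.mem_filter, Finset.mem_range]
    refine ⟨?_, dvd_mul_right _ _, by positivity, h2⟩
    have := Nat.lt_ceil.mpr h2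
    omega
  · intro i _ j _ h
    have := Nat.eq_of_mul_eq_mul_left hq h
    omega
  · intro h hh
    rw [Finset.mem_filter, Finset.mem_range] at hh
    obtain ⟨_, ⟨k, rfl⟩, hpos, hlt⟩ := hh
    have hk : 0 < k := Nat.pos_of_mul_pos_left hpos
    refine ⟨k - 1, ?_, by rw [Nat.sub_add_cancel hk]⟩
    have : k < ⌈x ^ (1 - c) / q⌉₊ := by
      rw [Nat.lt_ceil, lt_div_iff₀ hq']; push_cast at hlt; linarith
    rw [Finset.mem_range]; omega
  · intro i _
    have hi : (0 : ℝ) < (i : ℝ) + 1 := by positivity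
    push_cast
    rw [← Real.log_div (by positivity) (by positivity), div_div, zpow_neg]
    rw [one_div, one_div, one_div, one_div, mul_inv]
    norm_cast
    ring

lemma swa_u_lower (c x : ℝ) (hx : 0 < x) (q : ℕ) (hq : 0 < q) (m : ℕ)
    (hm : m + 1 < ⌈x ^ (1 - c) / q⌉₊) :
    c * Real.log x ≤ Real.log (x / q) - Real.log (m + 1) := by
  have hq' : (0 : ℝ) < q := by exact_mod_cast hq
  rw [Nat.lt_ceil] at hm
  push_cast at hm
  have := Real.log_le_log (by positivity) hm.le
  rw [Real.log_div (by positivity) (by positivity), Real.log_rpow hx] at this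
  rw [Real.log_div (by positivity) (by positivity)]
  linarith

lemma swa_W_bound (c x : ℝ) (hc : 0 < c) (hc2 : c < 1) (hx : 0 < x) (hL : 1 ≤ Real.log x)
    (q : ℕ) (hq : 0 < q) : |Real.log x * swaW c x q| ≤ 2 / c ^ 2 := by
  have hq' : (1 : ℝ) ≤ q := by exact_mod_cast hq
  have hn : 0 ≤ swaW c x q := Finset.sum_nonneg fun i _ => by positivity
  rw [abs_of_nonneg (by positivity)]
  have hL0 : 0 < Real.log x := by linarith
  set N := ⌈x ^ (1 - c) / q⌉₊ - 1 with hN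
  have h1 : swaW c x q ≤ (∑ i ∈ Finset.range N, (1 / ((i : ℝ) + 1))) * (1 / (c * Real.log x) ^ 2) := by
    unfold swaW
    rw [Finset.sum_mul]
    apply Finset.sum_le_sum
    intro i hi
    rw [Finset.mem_range] at hi
    have := swa_u_lower c x hx q hq i (by omega)
    gcongr
  have h2 : (∑ i ∈ Finset.range N, (1 / ((i : ℝ) + 1))) ≤ 1 + Real.log N := by
    refine le_trans (le_of_eq ?_) (harmonic_le_one_add_log N)
    simp [harmonic]
  have h3 : Real.log N ≤ Real.log x := by
    rcases Nat.eq_zero_or_pos N with h | h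
    · rw [h]; simp; linarith
    · have : N < ⌈x ^ (1 - c) / q⌉₊ := by omega
      rw [Nat.lt_ceil] at this
      have h4 : x ^ (1 - c) / q ≤ x ^ (1 - c) := div_le_self (by positivity) hq'
      have h5 := Real.log_le_log (by exact_mod_cast h) (this.le.trans h4)
      rw [Real.log_rpow hx] at h5
      nlinarith
  calc Real.log x * swaW c x q
      ≤ Real.log x * ((2 * Real.log x) * (1 / (c * Real.log x) ^ 2)) := by
        gcongr
        refine h1.trans ?_
        gcongr
        linarith
    _ = 2 / c ^ 2 := by field_simp

open Filter Topology in
lemma swa_W_lim (c : ℝ) (hc : 0 < c) (hc2 : c < 1) (q : ℕ) (hq : 0 < q) :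
    Tendsto (fun x : ℝ => Real.log x * swaW c x q) atTop (𝓝 (1 / c - 1)) := by
  have hq' : (1 : ℝ) ≤ q := by exact_mod_cast hq
  have hq0 : (0 : ℝ) < q := by linarith
  have t0 : Tendsto (fun L : ℝ => 1 / L) atTop (𝓝 0) := by
    simpa using tendsto_inv_atTop_zero (𝕜 := ℝ)
  have tA : ∀ a b : ℝ, 0 < a → Tendsto (fun L : ℝ => L / (a * L + b)) atTop (𝓝 (1 / a)) := by
    intro a b ha
    have : Tendsto (fun L : ℝ => 1 / (a + b * (1 / L))) atTop (𝓝 (1 / (a + b * 0))) :=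
      tendsto_const_nhds.div (tendsto_const_nhds.add (t0.const_mul b)) (by simpa using ha.ne')
    rw [mul_zero, add_zero] at this
    refine this.congr' ?_
    filter_upwards [eventually_gt_atTop 0] with L hL
    rw [← mul_div_mul_left _ _ hL.ne']
    congr 1
    · ring
    · field_simp
  have tE : Tendsto (fun L : ℝ => 3 / c ^ 2 * (1 / L)) atTop (𝓝 0) := by
    simpa using t0.const_mul (3 / c ^ 2)
  have t1 := tA 1 (-Real.log q) one_pos
  have lo : Tendsto (fun L : ℝ => L / (c * L + Real.log 2) - L / (1 * L + -Real.log q) - 3 / c ^ 2 * (1 / L))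
      atTop (𝓝 (1 / c - 1)) := by
    simpa using ((tA c (Real.log 2) hc).sub t1).sub tE
  have hi : Tendsto (fun L : ℝ => 1 / c - L / (1 * L + -Real.log q) + 3 / c ^ 2 * (1 / L))
      atTop (𝓝 (1 / c - 1)) := by
    simpa using (t1.const_sub (1 / c)).add tE
  have key : ∀ᶠ x : ℝ in atTop,
      Real.log x / (c * Real.log x + Real.log 2) - Real.log x / (1 * Real.log x + -Real.log q) - 3 / c ^ 2 * (1 / Real.log x)
        ≤ Real.log x * swaW c x q ∧ Real.log x * swaW c x q ≤
      1 / c - Real.log x / (1 * Real.log x + -Real.log q) + 3 / c ^ 2 * (1 / Real.log x) := by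
    have e1 : ∀ᶠ x : ℝ in atTop, 1 / c ≤ Real.log x := Real.tendsto_log_atTop.eventually_ge_atTop _
    have e2 : ∀ᶠ x : ℝ in atTop, (q : ℝ) < x ^ (1 - c) :=
      (tendsto_rpow_atTop (by linarith)).eventually_gt_atTop _
    filter_upwards [e1, e2, eventually_gt_atTop 0] with x h1 h2 hx
    have hL0 : 0 < Real.log x := lt_of_lt_of_le (by positivity) h1
    set L := Real.log x with hLdef
    have hB : 1 ≤ c * L := by rw [div_le_iff₀ hc] at h1; linarith
    have h3 : 1 < ⌈x ^ (1 - c) / q⌉₊ := by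
      rw [Nat.lt_ceil, lt_div_iff₀ hq0]; simpa using h2
    obtain ⟨n, hn⟩ : ∃ n, ⌈x ^ (1 - c) / q⌉₊ = n + 2 := ⟨⌈x ^ (1 - c) / q⌉₊ - 2, by omega⟩
    have hW := swa_tel (Real.log (x / q)) (c * L) hB n
      (fun m hm => swa_u_lower c x hx q hq m (by omega))
    have hWe : swaW c x q = ∑ i ∈ Finset.range (n + 1),
      (1 / ((i : ℝ) + 1)) * (1 / (Real.log (x / q) - Real.log (i + 1)) ^ 2) := by
      unfold swaW; rw [hn]; rfl
    rw [← hWe] at hW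
    have hlow := swa_u_lower c x hx q hq n (by omega)
    have hup : Real.log (x / q) - Real.log (n + 1) ≤ c * L + Real.log 2 := by
      have h4 := Nat.le_ceil (x ^ (1 - c) / q)
      rw [hn] at h4
      push_cast at h4
      have h5 : x ^ (1 - c) / q ≤ 2 * ((n : ℝ) + 1) := by
        have : (0 : ℝ) ≤ n := by positivity
        linarith
      have := Real.log_le_log (by positivity) h5
      rw [Real.log_div (by positivity) (by positivity), Real.log_rpow hx,
        Real.log_mul (by positivity) (by positivity)] at this
      rw [Real.log_div (by positivity) (by positivity)]
      linarith
    set u := Real.log (x / q) - Real.log (n + 1) with hu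
    have hX : Real.log (x / q) = 1 * L + - Real.log q := by
      rw [Real.log_div (by positivity) (by positivity)]; ring
    rw [hX] at hW
    have hu0 : 0 < u := by linarith
    have hW2 : (3 - 2 / ((n : ℝ) + 1)) / (c * L) ^ 2 ≤ 3 / (c * L) ^ 2 := by
      gcongr
      have : 0 ≤ 2 / ((n : ℝ) + 1) := by positivity
      linarith
    have hW3 := abs_le.mp (hW.trans hW2)
    have m1 := mul_le_mul_of_nonneg_left hW3.1 hL0.le
    have m2 := mul_le_mul_of_nonneg_left hW3.2 hL0.le
    have e3 : L * (3 / (c * L) ^ 2) = 3 / c ^ 2 * (1 / L) := by field_simp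
    have e4 : L * (swaW c x q - (1 / u - 1 / (1 * L + -Real.log q)))
      = L * swaW c x q - (L / u - L / (1 * L + -Real.log q)) := by ring
    rw [e4, mul_neg, e3] at m1
    rw [e4, e3] at m2
    have u1 : L / (c * L + Real.log 2) ≤ L / u := by gcongr
    have u2 : L / u ≤ 1 / c := by
      rw [div_le_div_iff₀ hu0 hc]; linarith
    constructor <;> linarith
  refine tendsto_of_tendsto_of_tendsto_of_le_of_le' (lo.comp Real.tendsto_log_atTop)
    (hi.comp Real.tendsto_log_atTop) ?_ ?_
  · filter_upwards [key] with x hx using hx.1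
  · filter_upwards [key] with x hx using hx.2

noncomputable def swaA (p : Nat.Primes) : ℝ :=
  if 2 < (p : ℕ) then 1 / (((p : ℕ) : ℝ) * (((p : ℕ) : ℝ) - 2)) else 0

noncomputable def swaB (p : Nat.Primes) : ℝ :=
  if 2 < (p : ℕ) then 1 / (((p : ℕ) : ℝ) - 2) else 0

lemma swaB_nonneg (p : Nat.Primes) : 0 ≤ swaB p := by
  unfold swaB
  split_ifs with h
  · have : (2 : ℝ) < (p : ℕ) := by exact_mod_cast h
    exact div_nonneg zero_le_one (by linarith)
  · exact le_rfl

lemma swaA_eq (p : Nat.Primes) : swaA p = swaB p * (1 / ((p : ℕ) : ℝ)) := by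
  unfold swaA swaB
  split_ifs <;> simp [mul_comm]

lemma swaA_nonneg (p : Nat.Primes) : 0 ≤ swaA p := by
  rw [swaA_eq]
  exact mul_nonneg (swaB_nonneg p) (by positivity)

lemma swa_summable_sq (C : ℝ) : Summable (fun p : Nat.Primes => C * (1 / (((p : ℕ) : ℝ)) ^ 2)) := by
  apply Summable.mul_left
  exact (Real.summable_one_div_nat_pow.mpr one_lt_two).comp_injective
    (i := fun p : Nat.Primes => (p : ℕ)) Subtype.val_injective

lemma swaA_summable : Summable swaA := by
  refine Summable.of_nonneg_of_le swaA_nonneg ?_ (swa_summable_sq 3)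
  intro p
  unfold swaA
  split_ifs with h
  · have h3 : (3 : ℝ) ≤ (p : ℕ) := by exact_mod_cast h
    rw [mul_one_div, div_le_div_iff₀ (by nlinarith) (by positivity)]
    nlinarith
  · positivity

lemma swa_twin : twinConst * ∏' p : Nat.Primes, (1 + swaA p) = 1 := by
  set t : Nat.Primes → ℝ := fun p =>
    if 2 < (p : ℕ) then - (1 / (((p : ℕ) : ℝ) - 1) ^ 2) else 0 with ht
  have hts : Summable t := by
    refine Summable.of_norm_bounded (swa_summable_sq 4) ?_
    intro p
    simp only [ht]
    split_ifs with h
    · have h3 : (3 : ℝ) ≤ (p : ℕ) := by exact_mod_cast h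
      rw [norm_neg, Real.norm_of_nonneg (by positivity), mul_one_div,
        div_le_div_iff₀ (by nlinarith) (by positivity)]
      nlinarith
    · rw [norm_zero]; positivity
  have e : twinConst = ∏' p, (1 + t p) := by
    unfold twinConst
    apply tprod_congr
    intro p
    simp only [ht]
    split_ifs <;> ring
  rw [e, ← (Real.multipliable_one_add_of_summable hts).tprod_mul
    (Real.multipliable_one_add_of_summable swaA_summable)]
  refine Eq.trans ?_ (tprod_one (α := ℝ) (L := SummationFilter.unconditional Nat.Primes))
  apply tprod_congr
  intro p
  simp only [ht, swaA]
  split_ifs with h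
  · have h3 : (3 : ℝ) ≤ (p : ℕ) := by exact_mod_cast h
    have h1 : (((p : ℕ) : ℝ) - 1) ≠ 0 := by intro h; linarith
    have h2 : (((p : ℕ) : ℝ) - 2) ≠ 0 := by intro h; linarith
    have h0 : (((p : ℕ) : ℝ)) ≠ 0 := by intro h; linarith
    field_simp
    ring
  · ring

lemma swa_prod_summable : Summable (fun s : Finset Nat.Primes => ∏ p ∈ s, swaA p) :=
  summable_finsetProd_of_summable_norm swaA_summable.norm

lemma swa_C : ∑' s : Finset Nat.Primes, ∏ p ∈ s, swaA p = 1 / twinConst := by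
  rw [← tprod_one_add swa_prod_summable]
  have := swa_twin
  have h0 : twinConst ≠ 0 := by intro h; rw [h, zero_mul] at this; exact zero_ne_one this
  rw [eq_div_iff h0, mul_comm]; exact this

/-- The set of prime factors, as a finset of `Nat.Primes`. -/
noncomputable def swaP (h : ℕ) : Finset Nat.Primes := h.primeFactors.subtype Nat.Prime

lemma swa_f_eq (h : ℕ) :
    ∏ p ∈ h.primeFactors.filter (fun p => 2 < p), (1 + 1 / ((p : ℝ) - 2))
      = ∑ s ∈ (swaP h).powerset, ∏ p ∈ s, swaB p := by
  rw [← Finset.prod_one_add, Finset.prod_filter]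
  unfold swaP
  have := Finset.prod_subtype_of_mem (s := h.primeFactors) (p := Nat.Prime)
    (fun p : ℕ => if 2 < p then (1 + 1 / ((p : ℝ) - 2)) else 1)
    (fun p hp => Nat.prime_of_mem_primeFactors hp)
  rw [← this]
  apply Finset.prod_congr rfl
  intro p _
  unfold swaB
  split_ifs <;> simp

def swaD (s : Finset Nat.Primes) : ℕ := ∏ p ∈ s, (p : ℕ)

lemma swaD_pos (s : Finset Nat.Primes) : 0 < swaD s :=
  Finset.prod_pos fun p _ => p.2.pos

lemma swa_subset_iff (h : ℕ) (hh : 0 < h) (s : Finset Nat.Primes)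
    (hs : ∀ p ∈ s, 2 < (p : ℕ)) : (2 ∣ h ∧ s ⊆ swaP h) ↔ 2 * swaD s ∣ h := by
  have hcop : Nat.Coprime 2 (swaD s) := by
    apply Nat.Coprime.prod_right
    intro p hp
    rw [Nat.coprime_primes Nat.prime_two p.2]
    exact (hs p hp).ne
  have hsub : s ⊆ swaP h ↔ swaD s ∣ h := by
    constructor
    · intro hsp
      have := Finset.prod_primes_dvd (s := s.map ⟨fun p : Nat.Primes => (p : ℕ), Subtype.val_injective⟩) h
        (by
          intro a ha
          obtain ⟨p, _, rfl⟩ := Finset.mem_map.mp ha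
          exact p.2.prime)
        (by
          intro a ha
          obtain ⟨p, hp, rfl⟩ := Finset.mem_map.mp ha
          have := hsp hp
          exact Nat.dvd_of_mem_primeFactors (Finset.mem_subtype.mp this))
      rw [Finset.prod_map] at this
      exact this
    · intro hd p hp
      refine Finset.mem_subtype.mpr ?_
      exact Nat.mem_primeFactors.mpr ⟨p.2, (Finset.dvd_prod_of_mem _ hp).trans hd, hh.ne'⟩
  rw [hsub]
  constructor
  · rintro ⟨h1, h2⟩
    exact hcop.mul_dvd_of_dvd_of_dvd h1 h2
  · intro h1
    exact ⟨(dvd_mul_right _ _).trans h1, (dvd_mul_left _ _).trans h1⟩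

lemma swa_sum_eq (c x : ℝ) (hx : 0 < x) :
    (∑ h ∈ (Finset.range (⌈x ^ (1 - c)⌉₊ + 1)).filter
            (fun h : ℕ => 2 ∣ h ∧ 0 < h ∧ (h : ℝ) < x ^ (1 - c)),
          (1 / (h : ℝ)) *
            (∏ p ∈ h.primeFactors.filter (fun p => 2 < p), (1 + 1 / ((p : ℝ) - 2))) *
            (Real.log (x / h)) ^ (-2 : ℤ))
      = ∑' s : Finset Nat.Primes, (∏ p ∈ s, swaA p) * (1 / 2 * swaW c x (2 * swaD s)) := by
  set F := (Finset.range (⌈x ^ (1 - c)⌉₊ + 1)).filter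
            (fun h : ℕ => 2 ∣ h ∧ 0 < h ∧ (h : ℝ) < x ^ (1 - c)) with hF
  have H : ∀ h ∈ F, HasSum (fun s : Finset Nat.Primes =>
      if s ⊆ swaP h then (∏ p ∈ s, swaB p) * ((1 / (h : ℝ)) * (Real.log (x / h)) ^ (-2 : ℤ)) else 0)
      ((1 / (h : ℝ)) *
            (∏ p ∈ h.primeFactors.filter (fun p => 2 < p), (1 + 1 / ((p : ℝ) - 2))) *
            (Real.log (x / h)) ^ (-2 : ℤ)) := by
    intro h _
    have := hasSum_sum_of_ne_finset_zero (L := SummationFilter.unconditional _) (s := (swaP h).powerset) (f := fun s : Finset Nat.Primes =>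
      if s ⊆ swaP h then (∏ p ∈ s, swaB p) * ((1 / (h : ℝ)) * (Real.log (x / h)) ^ (-2 : ℤ)) else 0)
      (by
        intro s hs
        rw [Finset.mem_powerset] at hs
        rw [if_neg hs])
    convert this using 1
    rw [swa_f_eq, mul_right_comm, mul_comm, Finset.sum_mul]
    apply Finset.sum_congr rfl
    intro s hs
    rw [Finset.mem_powerset] at hs
    rw [if_pos hs]
  rw [← (hasSum_sum H).tsum_eq]
  apply tsum_congr
  intro s
  have hA : ∏ p ∈ s, swaA p = (∏ p ∈ s, swaB p) * (1 / (swaD s : ℝ)) := by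
    simp only [swaA_eq, Finset.prod_mul_distrib, swaD]
    simp
  by_cases hs : ∀ p ∈ s, 2 < (p : ℕ)
  · have hW := swa_W_eq c x hx (2 * swaD s) (by have := swaD_pos s; positivity)
    rw [← Finset.sum_filter, ← Finset.mul_sum]
    have e : (1 / (swaD s : ℝ)) * (1 / 2 * swaW c x (2 * swaD s))
      = 1 / ((2 * swaD s : ℕ) : ℝ) * swaW c x (2 * swaD s) := by
      push_cast
      rw [← mul_assoc, one_div_mul_one_div_rev]
    rw [hA, mul_assoc, e, ← hW]
    congr 1
    apply Finset.sum_congr _ (fun _ _ => rfl)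
    ext h
    simp only [hF, Finset.mem_filter]
    constructor
    · rintro ⟨⟨h1, h2, h3, h4⟩, h5⟩
      exact ⟨h1, (swa_subset_iff h h3 s hs).mp ⟨h2, h5⟩, h3, h4⟩
    · rintro ⟨h1, h2, h3, h4⟩
      have := (swa_subset_iff h h3 s hs).mpr h2
      exact ⟨⟨h1, this.1, h3, h4⟩, this.2⟩
  · push Not at hs
    obtain ⟨p, hp, hp2⟩ := hs
    have hB : ∏ p ∈ s, swaB p = 0 := by
      apply Finset.prod_eq_zero hp
      rw [swaB, if_neg (by omega)]
    rw [hA, hB]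
    simp

open Filter Topology in
lemma swa_lim (c : ℝ) (hc1 : 1 / 2 ≤ c) (hc2 : c < 1) :
    Tendsto (fun x : ℝ => ∑' s : Finset Nat.Primes,
        (∏ p ∈ s, swaA p) * (1 / 2 * (Real.log x * swaW c x (2 * swaD s)))) atTop
      (𝓝 ((1 / twinConst) * (1 / (2 * c) - 1 / 2))) := by
  have hc : 0 < c := by linarith
  have e : (1 / twinConst) * (1 / (2 * c) - 1 / 2)
      = ∑' s : Finset Nat.Primes, (∏ p ∈ s, swaA p) * (1 / 2 * (1 / c - 1)) := by
    rw [tsum_mul_right, swa_C]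
    congr 1
    field_simp
  rw [e]
  have hpos : ∀ s, 0 < 2 * swaD s := fun s => by have := swaD_pos s; positivity
  apply tendsto_tsum_of_dominated_convergence
    (bound := fun s => (∏ p ∈ s, swaA p) * (1 / 2 * (2 / c ^ 2)))
  · exact swa_prod_summable.mul_right _
  · intro s
    exact ((swa_W_lim c hc hc2 _ (hpos s)).const_mul _).const_mul _
  · filter_upwards [Real.tendsto_log_atTop.eventually_ge_atTop 1, eventually_gt_atTop 0] with x h1 h2
    intro s
    have h0 : 0 ≤ ∏ p ∈ s, swaA p := Finset.prod_nonneg fun p _ => swaA_nonneg p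
    rw [norm_mul, norm_mul, Real.norm_of_nonneg h0, Real.norm_of_nonneg (by norm_num : (0:ℝ) ≤ 1 / 2),
      Real.norm_eq_abs]
    gcongr
    exact swa_W_bound c x hc hc2 h2 h1 _ (hpos s)

/-- For fixed `1/2 ≤ c < 1`,
`Σ_{h < x^{1−c}, h even} (1/h)·∏_{p∣h, p>2}(1+1/(p−2))·(log(x/h))⁻²
  = (1+o(1))·(1/𝔖)·(1/(2c) − 1/2)·(log x)⁻¹` as `x → ∞`. -/
theorem sum_weighted_asymptotic (c : ℝ) (hc1 : 1 / 2 ≤ c) (hc2 : c < 1) :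
    ∀ ε > (0 : ℝ), ∃ x₀ : ℝ, ∀ x ≥ x₀,
      |(∑ h ∈ (Finset.range (⌈x ^ (1 - c)⌉₊ + 1)).filter
            (fun h : ℕ => 2 ∣ h ∧ 0 < h ∧ (h : ℝ) < x ^ (1 - c)),
          (1 / (h : ℝ)) *
            (∏ p ∈ h.primeFactors.filter (fun p => 2 < p), (1 + 1 / ((p : ℝ) - 2))) *
            (Real.log (x / h)) ^ (-2 : ℤ)) -
        (1 / twinConst) * (1 / (2 * c) - 1 / 2) * (Real.log x)⁻¹| ≤
      ε * (Real.log x)⁻¹ := by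
  intro ε hε
  have h1 := Metric.tendsto_atTop.mp (swa_lim c hc1 hc2) ε hε
  obtain ⟨x₁, hx₁⟩ := h1
  refine ⟨max x₁ 2, fun x hx => ?_⟩
  have hx2 : 2 ≤ x := le_trans (le_max_right _ _) hx
  have hL : 0 < Real.log x := Real.log_pos (by linarith)
  have h := (hx₁ x (le_trans (le_max_left _ _) hx)).le
  rw [Real.dist_eq] at h
  rw [swa_sum_eq c x (by linarith)]
  have e : ∑' s : Finset Nat.Primes,
        (∏ p ∈ s, swaA p) * (1 / 2 * (Real.log x * swaW c x (2 * swaD s)))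
      = Real.log x * ∑' s : Finset Nat.Primes, (∏ p ∈ s, swaA p) * (1 / 2 * swaW c x (2 * swaD s)) := by
    rw [← tsum_mul_left]
    apply tsum_congr
    intro s
    ring
  rw [e] at h
  set T := ∑' s : Finset Nat.Primes, (∏ p ∈ s, swaA p) * (1 / 2 * swaW c x (2 * swaD s))
  have e2 : T - (1 / twinConst) * (1 / (2 * c) - 1 / 2) * (Real.log x)⁻¹
      = (Real.log x * T - (1 / twinConst) * (1 / (2 * c) - 1 / 2)) * (Real.log x)⁻¹ := by
    rw [sub_mul, mul_comm (Real.log x) T, mul_assoc T, mul_inv_cancel₀ hL.ne', mul_one]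
  rw [e2, abs_mul, abs_of_pos (inv_pos.mpr hL)]
  gcongr
end

section
/- For every c with 8/9 ≤ c < 1 and every ε > 0 there exists x₀ such that for all x ≥ x₀: T'_c(x) ≤ (1 + ε)·8·(1/c − 1)·x/log x. -/
open Real Finset

attribute [local instance] Classical.propDecidable

/-- `Pplus n` is the largest prime factor of `n`, with the convention `Pplus 1 = 1`. -/
noncomputable def Pplus (n : ℕ) : ℕ := if n = 1 then 1 else n.primeFactors.sup id

/-- `T' c x = #{p ≤ x : p prime, P⁺(p-1) ≥ x^c}`. -/
noncomputable def T' (c x : ℝ) : ℕ :=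
  ((Finset.range (⌊x⌋₊ + 1)).filter
    (fun p : ℕ => p.Prime ∧ x ^ c ≤ (Pplus (p - 1) : ℝ))).card

namespace SieveAux

/-- Alternating sum over a Boolean interval. -/
theorem sum_interval_neg_one {ι : Type*} (𝓓 : Finset (Finset ι))
    (hdown : ∀ D ∈ 𝓓, ∀ E, E ⊆ D → E ∈ 𝓓) (L E : Finset ι) (hE : E ∈ 𝓓) :
    ∑ D ∈ 𝓓 with (L ⊆ D ∧ D ⊆ E), (-1 : ℝ) ^ D.card = if L = E then (-1 : ℝ) ^ L.card else 0 := by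
  by_cases hLE : L ⊆ E
  · have h1 : ∑ D ∈ 𝓓 with (L ⊆ D ∧ D ⊆ E), (-1 : ℝ) ^ D.card
        = ∑ T ∈ (E \ L).powerset, (-1 : ℝ) ^ L.card * (-1 : ℝ) ^ T.card := by
      symm
      apply Finset.sum_bij' (fun T _ => L ∪ T) (fun D _ => D \ L)
      · intro T hT
        rw [Finset.mem_powerset] at hT
        have : L ∪ T ⊆ E := Finset.union_subset hLE (hT.trans Finset.sdiff_subset)
        simp only [Finset.mem_filter]
        exact ⟨hdown E hE _ this, Finset.subset_union_left, this⟩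
      · intro D hD
        simp only [Finset.mem_filter] at hD
        rw [Finset.mem_powerset]
        exact Finset.sdiff_subset_sdiff hD.2.2 (le_refl L)
      · intro T hT
        rw [Finset.mem_powerset] at hT
        ext x
        have := @hT x
        simp only [Finset.mem_sdiff, Finset.mem_union] at *
        tauto
      · intro D hD
        simp only [Finset.mem_filter] at hD
        exact Finset.union_sdiff_of_subset hD.2.1
      · intro T hT
        rw [Finset.mem_powerset] at hT
        rw [Finset.card_union_of_disjoint, pow_add]
        exact (Finset.disjoint_sdiff).mono_right hT
    rw [h1, ← Finset.mul_sum]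
    have h2 : ∑ T ∈ (E \ L).powerset, (-1 : ℝ) ^ T.card = if E \ L = ∅ then 1 else 0 := by
      have := @Finset.sum_powerset_neg_one_pow_card ι _ (E \ L)
      have h3 := congrArg (Int.cast : ℤ → ℝ) this
      push_cast at h3
      exact h3
    rw [h2]
    by_cases h : L = E
    · subst h; simp
    · have : ¬ (E \ L = ∅) := by
        rw [Finset.sdiff_eq_empty_iff_subset]
        intro h'
        exact h (Finset.Subset.antisymm hLE h')
      simp [h, this]
  · have h : L ≠ E := fun h => hLE (h ▸ le_refl _)
    rw [if_neg h]
    apply Finset.sum_eq_zero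
    intro D hD
    simp only [Finset.mem_filter] at hD
    exact absurd (hD.2.1.trans hD.2.2) hLE

section selberg
variable {ι : Type*} (𝓓 : Finset (Finset ι)) (ρ h : ι → ℝ)

/-- The Selberg denominators. -/
noncomputable def SS (𝓓 : Finset (Finset ι)) (h : ι → ℝ) : ℝ := ∑ D ∈ 𝓓, ∏ p ∈ D, h p

/-- The Selberg weights. -/
noncomputable def lam (𝓓 : Finset (Finset ι)) (ρ h : ι → ℝ) (D : Finset ι) : ℝ :=
  (-1) ^ D.card * (∑ E ∈ 𝓓 with D ⊆ E, ∏ p ∈ E, h p) / ((∏ p ∈ D, ρ p) * SS 𝓓 h)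

theorem SS_pos (hh : ∀ D ∈ 𝓓, ∀ p ∈ D, 0 < h p) (h0 : ∅ ∈ 𝓓) : 0 < SS 𝓓 h := by
  apply Finset.sum_pos
  · intro D hD
    exact Finset.prod_pos (hh D hD)
  · exact ⟨∅, h0⟩

theorem lam_empty (hh : ∀ D ∈ 𝓓, ∀ p ∈ D, 0 < h p) (h0 : ∅ ∈ 𝓓) : lam 𝓓 ρ h ∅ = 1 := by
  have := SS_pos 𝓓 h hh h0
  unfold lam
  simp
  exact div_self this.ne'

theorem abs_lam_le (hρ : ∀ D ∈ 𝓓, ∀ p ∈ D, 0 < ρ p) (hh : ∀ D ∈ 𝓓, ∀ p ∈ D, 0 < h p)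
    (hrel : ∀ D ∈ 𝓓, ∀ p ∈ D, h p = ρ p * (1 + h p)) (h0 : ∅ ∈ 𝓓)
    (hdown : ∀ D ∈ 𝓓, ∀ E, E ⊆ D → E ∈ 𝓓) (D : Finset ι) (hD : D ∈ 𝓓) :
    |lam 𝓓 ρ h D| ≤ 1 := by
  have hS := SS_pos 𝓓 h hh h0
  have hρD : 0 < ∏ p ∈ D, ρ p := Finset.prod_pos (hρ D hD)
  have hnn : 0 ≤ ∑ E ∈ 𝓓 with D ⊆ E, ∏ p ∈ E, h p := by
    apply Finset.sum_nonneg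
    intro E hE
    rw [Finset.mem_filter] at hE
    exact Finset.prod_nonneg fun p hp => (hh E hE.1 p hp).le
  unfold lam
  rw [abs_div, abs_mul, abs_pow, abs_neg, abs_one, one_pow, one_mul, abs_of_nonneg hnn,
    abs_of_pos (mul_pos hρD hS), div_le_one (mul_pos hρD hS)]
  have hhD : ∏ p ∈ D, h p = (∏ p ∈ D, ρ p) * ∑ T ∈ D.powerset, ∏ p ∈ T, h p := by
    rw [← Finset.prod_one_add, ← Finset.prod_mul_distrib]
    exact Finset.prod_congr rfl (hrel D hD)
  have h1 : ∀ E ∈ 𝓓.filter (fun E => D ⊆ E), ∏ p ∈ E, h p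
      = (∏ p ∈ D, ρ p) * ∑ T ∈ D.powerset, ∏ p ∈ T ∪ (E \ D), h p := by
    intro E hE
    rw [Finset.mem_filter] at hE
    rw [← Finset.prod_sdiff hE.2, hhD, mul_left_comm, Finset.mul_sum]
    congr 1
    apply Finset.sum_congr rfl
    intro T hT
    rw [Finset.mem_powerset] at hT
    rw [Finset.prod_union, mul_comm]
    exact Finset.disjoint_sdiff.mono_left hT
  rw [Finset.sum_congr rfl h1, ← Finset.mul_sum]
  apply mul_le_mul_of_nonneg_left _ hρD.le
  rw [← Finset.sum_product']
  unfold SS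
  have hinj : Set.InjOn (fun x : Finset ι × Finset ι => x.2 ∪ (x.1 \ D))
      ((𝓓.filter (fun E => D ⊆ E)) ×ˢ D.powerset : Finset _) := by
    rintro ⟨E, T⟩ hx ⟨E', T'⟩ hx' heq
    simp only [Finset.coe_product, Set.mem_prod, Finset.mem_coe, Finset.mem_filter,
      Finset.mem_powerset] at hx hx'
    simp only at heq
    have key : ∀ y, (y ∈ T ∨ y ∈ E ∧ y ∉ D) ↔ (y ∈ T' ∨ y ∈ E' ∧ y ∉ D) := by
      intro y
      have := congrArg (fun s => y ∈ s) heq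
      simpa using this
    have e1 : E = E' := by
      ext y
      have := key y
      have a1 := @hx.1.2 y
      have a2 := @hx'.1.2 y
      have a3 := @hx.2 y
      have a4 := @hx'.2 y
      tauto
    have e2 : T = T' := by
      ext y
      have := key y
      have a1 := @hx.1.2 y
      have a2 := @hx'.1.2 y
      have a3 := @hx.2 y
      have a4 := @hx'.2 y
      tauto
    rw [e1, e2]
  rw [← Finset.sum_image (f := fun E => ∏ p ∈ E, h p) hinj]
  apply Finset.sum_le_sum_of_subset_of_nonneg
  · intro F hF
    rw [Finset.mem_image] at hF
    obtain ⟨⟨E, T⟩, hx, rfl⟩ := hF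
    simp only [Finset.mem_product, Finset.mem_filter, Finset.mem_powerset] at hx
    exact hdown E hx.1.1 _ (Finset.union_subset (hx.2.trans hx.1.2) Finset.sdiff_subset)
  · intro F hF _
    exact Finset.prod_nonneg fun p hp => (hh F hF p hp).le

theorem sum_rho_lam (hρ : ∀ D ∈ 𝓓, ∀ p ∈ D, 0 < ρ p) 
    (hdown : ∀ D ∈ 𝓓, ∀ E, E ⊆ D → E ∈ 𝓓) (L : Finset ι) (hL : L ∈ 𝓓) :
    ∑ D ∈ 𝓓 with L ⊆ D, (∏ p ∈ D, ρ p) * lam 𝓓 ρ h D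
      = (-1) ^ L.card * (∏ p ∈ L, h p) / SS 𝓓 h := by
  have h1 : ∀ D ∈ 𝓓.filter (fun D => L ⊆ D), (∏ p ∈ D, ρ p) * lam 𝓓 ρ h D
      = ∑ E ∈ 𝓓, (if D ⊆ E then (-1) ^ D.card * (∏ p ∈ E, h p) / SS 𝓓 h else 0) := by
    intro D hD
    rw [Finset.mem_filter] at hD
    have hρD : 0 < ∏ p ∈ D, ρ p := Finset.prod_pos (hρ D hD.1)
    unfold lam
    rw [← Finset.sum_filter, ← Finset.sum_div, ← Finset.mul_sum]
    field_simp
  rw [Finset.sum_congr rfl h1, Finset.sum_comm]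
  have h2 : ∀ E ∈ 𝓓, ∑ D ∈ 𝓓 with L ⊆ D,
      (if D ⊆ E then (-1 : ℝ) ^ D.card * (∏ p ∈ E, h p) / SS 𝓓 h else 0)
      = if L = E then (-1) ^ L.card * (∏ p ∈ E, h p) / SS 𝓓 h else 0 := by
    intro E hE
    rw [← Finset.sum_filter, Finset.filter_filter, ← Finset.sum_div, ← Finset.sum_mul,
      sum_interval_neg_one 𝓓 hdown L E hE]
    split_ifs <;> simp
  rw [Finset.sum_congr rfl h2, Finset.sum_ite_eq, if_pos hL]

theorem quad_form (hρ : ∀ D ∈ 𝓓, ∀ p ∈ D, 0 < ρ p) (hh : ∀ D ∈ 𝓓, ∀ p ∈ D, 0 < h p)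
    (hrel : ∀ D ∈ 𝓓, ∀ p ∈ D, h p = ρ p * (1 + h p)) (h0 : ∅ ∈ 𝓓)
    (hdown : ∀ D ∈ 𝓓, ∀ E, E ⊆ D → E ∈ 𝓓) :
    ∑ D₁ ∈ 𝓓, ∑ D₂ ∈ 𝓓, lam 𝓓 ρ h D₁ * lam 𝓓 ρ h D₂ * ∏ p ∈ D₁ ∪ D₂, ρ p = 1 / SS 𝓓 h := by
  have hS := SS_pos 𝓓 h hh h0
  have h1 : ∀ D₁ ∈ 𝓓, ∀ D₂ ∈ 𝓓, ∏ p ∈ D₁ ∪ D₂, ρ p = ∑ L ∈ 𝓓, (∏ p ∈ L, h p)⁻¹ *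
      ((if L ⊆ D₁ then ∏ p ∈ D₁, ρ p else 0) * (if L ⊆ D₂ then ∏ p ∈ D₂, ρ p else 0)) := by
    intro D₁ hD₁ D₂ hD₂
    have hI : D₁ ∩ D₂ ∈ 𝓓 := hdown D₁ hD₁ _ Finset.inter_subset_left
    have hpos : 0 < ∏ p ∈ D₁ ∩ D₂, ρ p := Finset.prod_pos (hρ _ hI)
    have e1 : (∏ p ∈ D₁ ∩ D₂, ρ p)⁻¹ = ∑ L ∈ (D₁ ∩ D₂).powerset, (∏ p ∈ L, h p)⁻¹ := by
      simp_rw [← Finset.prod_inv_distrib]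
      rw [← Finset.prod_one_add]
      apply Finset.prod_congr rfl
      intro p hp
      have a1 := hρ _ hI p hp
      have a2 := hh _ hI p hp
      have a3 := hrel _ hI p hp
      field_simp
      linarith
    have e2 : ∏ p ∈ D₁ ∪ D₂, ρ p = (∏ p ∈ D₁, ρ p) * (∏ p ∈ D₂, ρ p) *
        (∏ p ∈ D₁ ∩ D₂, ρ p)⁻¹ := by
      rw [← Finset.prod_union_inter]
      field_simp
    rw [e2, e1, Finset.mul_sum]
    have e3 : (D₁ ∩ D₂).powerset = 𝓓.filter (fun L => L ⊆ D₁ ∧ L ⊆ D₂) := by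
      ext L
      simp only [Finset.mem_powerset, Finset.mem_filter, Finset.subset_inter_iff]
      constructor
      · intro hL
        exact ⟨hdown D₁ hD₁ L hL.1, hL⟩
      · exact fun hL => hL.2
    rw [e3, Finset.sum_filter]
    apply Finset.sum_congr rfl
    intro L _
    by_cases c1 : L ⊆ D₁ <;> by_cases c2 : L ⊆ D₂ <;> simp [c1, c2]
    ring
  have h2 : ∑ D₁ ∈ 𝓓, ∑ D₂ ∈ 𝓓, lam 𝓓 ρ h D₁ * lam 𝓓 ρ h D₂ * ∏ p ∈ D₁ ∪ D₂, ρ p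
      = ∑ L ∈ 𝓓, (∏ p ∈ L, h p)⁻¹ *
        (∑ D ∈ 𝓓 with L ⊆ D, (∏ p ∈ D, ρ p) * lam 𝓓 ρ h D) ^ 2 := by
    have : ∀ D₁ ∈ 𝓓, ∀ D₂ ∈ 𝓓, lam 𝓓 ρ h D₁ * lam 𝓓 ρ h D₂ * ∏ p ∈ D₁ ∪ D₂, ρ p
      = ∑ L ∈ 𝓓, (∏ p ∈ L, h p)⁻¹ *
      ((if L ⊆ D₁ then (∏ p ∈ D₁, ρ p) * lam 𝓓 ρ h D₁ else 0) *
        (if L ⊆ D₂ then (∏ p ∈ D₂, ρ p) * lam 𝓓 ρ h D₂ else 0)) := by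
      intro D₁ hD₁ D₂ hD₂
      rw [h1 D₁ hD₁ D₂ hD₂, Finset.mul_sum]
      apply Finset.sum_congr rfl
      intro L _
      by_cases c1 : L ⊆ D₁ <;> by_cases c2 : L ⊆ D₂ <;> simp [c1, c2]
      ring
    rw [Finset.sum_congr rfl fun D₁ hD₁ => Finset.sum_congr rfl (this D₁ hD₁)]
    rw [Finset.sum_congr rfl fun D₁ _ => Finset.sum_comm, Finset.sum_comm]
    apply Finset.sum_congr rfl
    intro L _
    rw [Finset.sum_filter, sq, Finset.sum_mul_sum, Finset.mul_sum]
    apply Finset.sum_congr rfl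
    intro D₁ _
    rw [Finset.mul_sum]
  rw [h2]
  have h3 : ∀ L ∈ 𝓓, (∏ p ∈ L, h p)⁻¹ *
        (∑ D ∈ 𝓓 with L ⊆ D, (∏ p ∈ D, ρ p) * lam 𝓓 ρ h D) ^ 2
        = (∏ p ∈ L, h p) / (SS 𝓓 h) ^ 2 := by
    intro L hL
    rw [sum_rho_lam 𝓓 ρ h hρ hdown L hL]
    have : 0 < ∏ p ∈ L, h p := Finset.prod_pos (hh L hL)
    have e : ((-1 : ℝ) ^ L.card) ^ 2 = 1 := by rw [← pow_mul, mul_comm, pow_mul]; simp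
    rw [div_pow, mul_pow, e]
    field_simp
  rw [Finset.sum_congr rfl h3, ← Finset.sum_div]
  change SS 𝓓 h / _ = _
  field_simp

/-- Abstract Selberg upper bound sieve. -/
theorem selberg_bound {α : Type*} (A : Finset α) (bad : α → ι → Prop) (X : ℝ)
    (r : Finset ι → ℝ)
    (hρ : ∀ D ∈ 𝓓, ∀ p ∈ D, 0 < ρ p) (hh : ∀ D ∈ 𝓓, ∀ p ∈ D, 0 < h p)
    (hrel : ∀ D ∈ 𝓓, ∀ p ∈ D, h p = ρ p * (1 + h p)) (h0 : ∅ ∈ 𝓓)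
    (hdown : ∀ D ∈ 𝓓, ∀ E, E ⊆ D → E ∈ 𝓓)
    (hcount : ∀ D₁ ∈ 𝓓, ∀ D₂ ∈ 𝓓,
      |((A.filter (fun n => ∀ p ∈ D₁ ∪ D₂, bad n p)).card : ℝ) - X * ∏ p ∈ D₁ ∪ D₂, ρ p|
        ≤ r D₁ * r D₂) :
    ((A.filter (fun n => ∀ D ∈ 𝓓, ∀ p ∈ D, ¬ bad n p)).card : ℝ)
      ≤ X / SS 𝓓 h + (∑ D ∈ 𝓓, r D) ^ 2 := by
  set l := lam 𝓓 ρ h with hl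
  have step1 : ((A.filter (fun n => ∀ D ∈ 𝓓, ∀ p ∈ D, ¬ bad n p)).card : ℝ)
      ≤ ∑ n ∈ A, (∑ D ∈ 𝓓, if (∀ p ∈ D, bad n p) then l D else 0) ^ 2 := by
    rw [Finset.card_eq_sum_ones, Nat.cast_sum]
    push_cast
    rw [Finset.sum_filter]
    apply Finset.sum_le_sum
    intro n _
    split_ifs with hn
    · have : ∑ D ∈ 𝓓, (if (∀ p ∈ D, bad n p) then l D else 0) = l ∅ := by
        rw [Finset.sum_eq_single ∅]
        · simp
        · intro D hD hne
          obtain ⟨p, hp⟩ := Finset.nonempty_iff_ne_empty.mpr hne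
          rw [if_neg]
          intro h'
          exact hn D hD p hp (h' p hp)
        · intro h'; exact absurd h0 h'
      rw [this, hl, lam_empty 𝓓 ρ h hh h0]
      norm_num
    · positivity
  have step2 : ∑ n ∈ A, (∑ D ∈ 𝓓, if (∀ p ∈ D, bad n p) then l D else 0) ^ 2
      = ∑ D₁ ∈ 𝓓, ∑ D₂ ∈ 𝓓, l D₁ * l D₂ *
        ((A.filter (fun n => ∀ p ∈ D₁ ∪ D₂, bad n p)).card : ℝ) := by
    have : ∀ n ∈ A, (∑ D ∈ 𝓓, if (∀ p ∈ D, bad n p) then l D else 0) ^ 2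
        = ∑ D₁ ∈ 𝓓, ∑ D₂ ∈ 𝓓, if (∀ p ∈ D₁ ∪ D₂, bad n p) then l D₁ * l D₂ else 0 := by
      intro n _
      rw [sq, Finset.sum_mul_sum]
      apply Finset.sum_congr rfl
      intro D₁ _
      apply Finset.sum_congr rfl
      intro D₂ _
      have : (∀ p ∈ D₁ ∪ D₂, bad n p) ↔ (∀ p ∈ D₁, bad n p) ∧ (∀ p ∈ D₂, bad n p) := by
        simp only [Finset.mem_union]
        constructor
        · intro h'
          exact ⟨fun p hp => h' p (Or.inl hp), fun p hp => h' p (Or.inr hp)⟩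
        · rintro ⟨a, b⟩ p (hp | hp)
          · exact a p hp
          · exact b p hp
      by_cases c1 : (∀ p ∈ D₁, bad n p)
      · by_cases c2 : (∀ p ∈ D₂, bad n p)
        · rw [if_pos c1, if_pos c2, if_pos (this.mpr ⟨c1, c2⟩)]
        · rw [if_neg c2, if_neg (fun h' => c2 (this.mp h').2), mul_zero]
      · rw [if_neg c1, if_neg (fun h' => c1 (this.mp h').1), zero_mul]
    rw [Finset.sum_congr rfl this, Finset.sum_comm]
    apply Finset.sum_congr rfl
    intro D₁ _
    rw [Finset.sum_comm]
    apply Finset.sum_congr rfl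
    intro D₂ _
    rw [← Finset.sum_filter, Finset.sum_const, nsmul_eq_mul, mul_comm]
  have step3 : ∑ D₁ ∈ 𝓓, ∑ D₂ ∈ 𝓓, l D₁ * l D₂ *
        ((A.filter (fun n => ∀ p ∈ D₁ ∪ D₂, bad n p)).card : ℝ)
      ≤ ∑ D₁ ∈ 𝓓, ∑ D₂ ∈ 𝓓, (X * (l D₁ * l D₂ * ∏ p ∈ D₁ ∪ D₂, ρ p) + r D₁ * r D₂) := by
    apply Finset.sum_le_sum
    intro D₁ hD₁
    apply Finset.sum_le_sum
    intro D₂ hD₂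
    have b1 := abs_lam_le 𝓓 ρ h hρ hh hrel h0 hdown D₁ hD₁
    have b2 := abs_lam_le 𝓓 ρ h hρ hh hrel h0 hdown D₂ hD₂
    have b3 := hcount D₁ hD₁ D₂ hD₂
    have b4 : |l D₁ * l D₂| ≤ 1 := by
      rw [abs_mul]; exact mul_le_one₀ b1 (abs_nonneg _) b2
    set C := ((A.filter (fun n => ∀ p ∈ D₁ ∪ D₂, bad n p)).card : ℝ)
    set R := ∏ p ∈ D₁ ∪ D₂, ρ p
    have b5 : l D₁ * l D₂ * (C - X * R) ≤ r D₁ * r D₂ := by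
      calc l D₁ * l D₂ * (C - X * R) ≤ |l D₁ * l D₂ * (C - X * R)| := le_abs_self _
        _ = |l D₁ * l D₂| * |C - X * R| := abs_mul _ _
        _ ≤ 1 * |C - X * R| := by gcongr
        _ ≤ _ := by rw [one_mul]; exact b3
    linarith
  rw [step2] at step1
  refine step1.trans (step3.trans (le_of_eq ?_))
  simp_rw [Finset.sum_add_distrib, ← Finset.mul_sum]
  rw [hl, quad_form 𝓓 ρ h hρ hh hrel h0 hdown, ← Finset.sum_mul]
  ring

end selberg
end SieveAux

namespace SieveAux

theorem prod_primes_dvd_iff (T : Finset ℕ) (hT : ∀ p ∈ T, p.Prime) (n : ℕ) :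
    (∏ p ∈ T, p) ∣ n ↔ ∀ p ∈ T, p ∣ n := by
  constructor
  · intro h p hp
    exact (Finset.dvd_prod_of_mem (fun p => p) hp).trans h
  · intro h
    exact Finset.prod_primes_dvd n (fun p hp => (hT p hp).prime) h

theorem card_modEq (N r v : ℕ) (hr : 0 < r) :
    |(((Ioc 0 N).filter (fun n => n ≡ v [MOD r])).card : ℝ) - N / r| ≤ 1 := by
  have h := Nat.Ioc_filter_modEq_card 0 N hr v
  have h' : (((Ioc 0 N).filter (fun n => n ≡ v [MOD r])).card : ℤ)
      = max (⌊((N : ℚ) - v) / (r : ℚ)⌋ - ⌊(((0 : ℕ) : ℚ) - v) / (r : ℚ)⌋) 0 := by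
    rw [← h]
  have hrq : (0 : ℚ) < r := by exact_mod_cast hr
  have hmono : ⌊(((0 : ℕ) : ℚ) - v) / (r : ℚ)⌋ ≤ ⌊((N : ℚ) - v) / (r : ℚ)⌋ := by
    apply Int.floor_le_floor
    gcongr
    simp
  rw [max_eq_left (by linarith)] at h'
  have a1 := Int.floor_le (((N : ℚ) - v) / (r : ℚ))
  have a2 := Int.lt_floor_add_one (((N : ℚ) - v) / (r : ℚ))
  have b1 := Int.floor_le ((((0 : ℕ) : ℚ) - v) / (r : ℚ))
  have b2 := Int.lt_floor_add_one ((((0 : ℕ) : ℚ) - v) / (r : ℚ))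
  have hq : |(((Ioc 0 N).filter (fun n => n ≡ v [MOD r])).card : ℚ) - N / r| ≤ 1 := by
    have h'' : (((Ioc 0 N).filter (fun n => n ≡ v [MOD r])).card : ℚ)
      = ⌊((N : ℚ) - v) / (r : ℚ)⌋ - ⌊(((0 : ℕ) : ℚ) - v) / (r : ℚ)⌋ := by exact_mod_cast h'
    rw [h'']
    have e : (N : ℚ) / r = ((N : ℚ) - v) / (r : ℚ) - (((0 : ℕ) : ℚ) - v) / (r : ℚ) := by
      field_simp; simp
    rw [e, abs_le]
    constructor <;> linarith
  have := (Rat.cast_le (K := ℝ)).mpr hq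
  push_cast at this
  exact this

theorem card_two_cond (m N : ℕ) (a b : ℕ) (ha : 0 < a) (hb : 0 < b) (hab : a.Coprime b)
    (hmb : m.Coprime b) :
    |(((Ioc 0 N).filter (fun n => a ∣ n ∧ b ∣ m * n + 1)).card : ℝ) - N / (a * b)| ≤ 1 := by
  have : NeZero b := ⟨hb.ne'⟩
  obtain ⟨v, hv⟩ : ∃ v : ℕ, b ∣ m * v + 1 := by
    refine ⟨(-(m : ZMod b)⁻¹).val, ?_⟩
    rw [← ZMod.natCast_eq_zero_iff]
    push_cast
    rw [ZMod.natCast_zmod_val, mul_neg, ZMod.coe_mul_inv_eq_one m hmb]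
    ring
  obtain ⟨n0, h1, h2⟩ := Nat.chineseRemainder hab 0 v
  have key : ∀ n, (a ∣ n ∧ b ∣ m * n + 1) ↔ n ≡ n0 [MOD a * b] := by
    intro n
    rw [← Nat.modEq_and_modEq_iff_modEq_mul hab]
    apply and_congr
    · rw [← Nat.modEq_zero_iff_dvd]
      exact ⟨fun h => h.trans h1.symm, fun h => h.trans h1⟩
    · constructor
      · intro h
        have e : m * n + 1 ≡ m * v + 1 [MOD b] :=
          ((Nat.modEq_zero_iff_dvd).mpr h).trans ((Nat.modEq_zero_iff_dvd).mpr hv).symm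
        have e2 : m * n ≡ m * v [MOD b] := Nat.ModEq.add_right_cancel' 1 e
        exact (Nat.ModEq.cancel_left_of_coprime (by simpa [Nat.coprime_comm] using hmb) e2).trans h2.symm
      · intro h
        have : m * n + 1 ≡ m * v + 1 [MOD b] := ((h.trans h2).mul_left m).add_right 1
        exact (Nat.modEq_zero_iff_dvd).mp (this.trans ((Nat.modEq_zero_iff_dvd).mpr hv))
  simp_rw [key]
  have := card_modEq N (a * b) n0 (Nat.mul_pos ha hb)
  push_cast at this
  exact this

/-- local densities -/
noncomputable def rho (m p : ℕ) : ℝ := if p ∣ m then 1 / p else 2 / p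

theorem card_bad (m N : ℕ) (D : Finset ℕ) (hD : ∀ p ∈ D, p.Prime) :
    |(((Ioc 0 N).filter (fun n => ∀ p ∈ D, (p ∣ n ∨ p ∣ m * n + 1))).card : ℝ)
      - N * ∏ p ∈ D, rho m p| ≤ 2 ^ D.card := by
  have e1 : (((Ioc 0 N).filter (fun n => ∀ p ∈ D, (p ∣ n ∨ p ∣ m * n + 1))).card : ℝ)
      = ∑ T ∈ D.powerset, (((Ioc 0 N).filter (fun n => (∏ p ∈ T, p) ∣ n ∧
          (∏ p ∈ D \ T, p) ∣ m * n + 1)).card : ℝ) := by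
    have : ∀ n, (if (∀ p ∈ D, (p ∣ n ∨ p ∣ m * n + 1)) then (1 : ℝ) else 0)
        = ∑ T ∈ D.powerset, if ((∏ p ∈ T, p) ∣ n ∧ (∏ p ∈ D \ T, p) ∣ m * n + 1)
          then (1 : ℝ) else 0 := by
      intro n
      have e : ∏ p ∈ D, ((if p ∣ n then (1 : ℝ) else 0) + (if p ∣ m * n + 1 then (1 : ℝ) else 0))
          = if (∀ p ∈ D, (p ∣ n ∨ p ∣ m * n + 1)) then (1 : ℝ) else 0 := by
        rw [← Finset.prod_boole]
        apply Finset.prod_congr rfl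
        intro p hp
        by_cases c1 : p ∣ n
        · have c2 : ¬ p ∣ m * n + 1 := by
            intro c2
            have : p ∣ 1 := (Nat.dvd_add_right (c1.mul_left m)).mp c2
            exact (hD p hp).one_lt.ne' (Nat.dvd_one.mp this)
          simp [c1, c2]
        · simp [c1]
      rw [← e, Finset.prod_add]
      apply Finset.sum_congr rfl
      intro T hT
      rw [Finset.mem_powerset] at hT
      rw [Finset.prod_boole, Finset.prod_boole]
      simp only [prod_primes_dvd_iff T (fun p hp => hD p (hT hp)),
        prod_primes_dvd_iff (D \ T) (fun p hp => hD p (Finset.sdiff_subset hp))]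
      by_cases c1 : ∀ p ∈ T, p ∣ n
      · by_cases c2 : ∀ p ∈ D \ T, p ∣ m * n + 1
        · rw [if_pos c1, if_pos c2, if_pos ⟨c1, c2⟩, one_mul]
        · rw [if_neg c2, mul_zero, if_neg (fun h => c2 h.2)]
      · rw [if_neg c1, zero_mul, if_neg (fun h => c1 h.1)]
    simp_rw [Finset.card_filter]
    push_cast
    simp_rw [this]
    rw [Finset.sum_comm]
  have e2 : ∏ p ∈ D, rho m p = ∑ T ∈ D.powerset, (∏ p ∈ T, (1 / (p : ℝ))) *
      ∏ p ∈ D \ T, ((if p ∣ m then 0 else 1) / (p : ℝ)) := by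
    rw [← Finset.prod_add]
    apply Finset.prod_congr rfl
    intro p _
    unfold rho
    split_ifs <;> ring
  rw [e1, e2, Finset.mul_sum, ← Finset.sum_sub_distrib]
  refine (Finset.abs_sum_le_sum_abs _ _).trans ?_
  have : (2 : ℝ) ^ D.card = ∑ T ∈ D.powerset, (1 : ℝ) := by simp
  rw [this]
  apply Finset.sum_le_sum
  intro T hT
  rw [Finset.mem_powerset] at hT
  by_cases c : ∃ p ∈ D \ T, p ∣ m
  · obtain ⟨p, hp, hpm⟩ := c
    have z1 : ∏ p ∈ D \ T, ((if p ∣ m then (0 : ℝ) else 1) / (p : ℝ)) = 0 := by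
      apply Finset.prod_eq_zero hp
      simp [hpm]
    have z2 : (Ioc 0 N).filter (fun n => (∏ p ∈ T, p) ∣ n ∧
          (∏ p ∈ D \ T, p) ∣ m * n + 1) = ∅ := by
      apply Finset.filter_eq_empty_iff.mpr
      rintro n _ ⟨_, h⟩
      have h2 : p ∣ m * n + 1 := (Finset.dvd_prod_of_mem (fun p => p) hp).trans h
      have : p ∣ 1 := (Nat.dvd_add_right (hpm.mul_right n)).mp h2
      exact (hD p (Finset.sdiff_subset hp)).one_lt.ne' (Nat.dvd_one.mp this)
    rw [z1, z2]
    simp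
  · push Not at c
    have z1 : ∏ p ∈ D \ T, ((if p ∣ m then (0 : ℝ) else 1) / (p : ℝ))
        = ∏ p ∈ D \ T, (1 / (p : ℝ)) := by
      apply Finset.prod_congr rfl
      intro p hp
      rw [if_neg (c p hp)]
    have := card_two_cond m N (∏ p ∈ T, p) (∏ p ∈ D \ T, p)
      (Finset.prod_pos fun p hp => (hD p (hT hp)).pos)
      (Finset.prod_pos fun p hp => (hD p (Finset.sdiff_subset hp)).pos)
      (by
        apply Nat.Coprime.prod_left
        intro p hp
        apply Nat.Coprime.prod_right
        intro q hq
        rw [Nat.coprime_primes (hD p (hT hp)) (hD q (Finset.sdiff_subset hq))]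
        rintro rfl
        exact (Finset.mem_sdiff.mp hq).2 hp)
      (by
        apply Nat.Coprime.prod_right
        intro q hq
        rw [Nat.coprime_comm, Nat.Prime.coprime_iff_not_dvd (hD q (Finset.sdiff_subset hq))]
        exact c q hq)
    rw [z1]
    push_cast at this
    have e3 : (N : ℝ) * ((∏ p ∈ T, (1 / (p : ℝ))) * ∏ p ∈ D \ T, (1 / (p : ℝ)))
      = N / ((∏ p ∈ T, (p : ℝ)) * ∏ p ∈ D \ T, (p : ℝ)) := by
      simp only [one_div, Finset.prod_inv_distrib]
      rw [← mul_inv]; rfl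
    rw [e3]
    exact this

/-- primes up to z -/
noncomputable def PR (z : ℕ) : Finset ℕ := (range (z + 1)).filter Nat.Prime

theorem mem_PR {z p : ℕ} : p ∈ PR z ↔ p.Prime ∧ p ≤ z := by
  unfold PR; simp [and_comm]

/-- the sieve support: sets of primes with product at most z -/
noncomputable def LV (P : Finset ℕ) (z : ℕ) : Finset (Finset ℕ) :=
  P.powerset.filter (fun D => ∏ p ∈ D, p ≤ z)

theorem mem_LV {P D : Finset ℕ} {z : ℕ} : D ∈ LV P z ↔ D ⊆ P ∧ ∏ p ∈ D, p ≤ z := by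
  unfold LV; simp

theorem LV_down (P : Finset ℕ) (hP : ∀ p ∈ P, p.Prime) (z : ℕ) :
    ∀ D ∈ LV P z, ∀ E, E ⊆ D → E ∈ LV P z := by
  intro D hD E hE
  rw [mem_LV] at *
  refine ⟨hE.trans hD.1, le_trans ?_ hD.2⟩
  apply Nat.le_of_dvd
  · exact Finset.prod_pos fun p hp => (hP p (hD.1 hp)).pos
  · exact Finset.prod_dvd_prod_of_subset _ _ _ hE

theorem prod_injOn : Set.InjOn (fun D : Finset ℕ => ∏ p ∈ D, p) {D | ∀ p ∈ D, p.Prime} := by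
  intro D hD E hE h
  simp only at h
  rw [← Nat.primeFactors_prod hD, ← Nat.primeFactors_prod hE, h]

theorem sum_card_divisors_le (z : ℕ) :
    ∑ n ∈ Ioc 0 z, (n.divisors.card : ℝ) ≤ z * (1 + Real.log z) := by
  have h := ArithmeticFunction.sum_Ioc_sigma0_eq_sum_div z
  have h2 : ∑ n ∈ Ioc 0 z, n.divisors.card = ∑ n ∈ Ioc 0 z, z / n := by
    rw [← h]
    apply Finset.sum_congr rfl
    intro n _
    rw [ArithmeticFunction.sigma_zero_apply]
  have h3 : ∑ n ∈ Ioc 0 z, (n.divisors.card : ℝ) = ∑ n ∈ Ioc 0 z, ((z / n : ℕ) : ℝ) := by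
    exact_mod_cast h2
  rw [h3]
  have h4 := harmonic_le_one_add_log z
  rw [harmonic_eq_sum_Icc] at h4
  push_cast at h4
  calc ∑ n ∈ Ioc 0 z, ((z / n : ℕ) : ℝ) ≤ ∑ n ∈ Ioc 0 z, (z : ℝ) * (n : ℝ)⁻¹ := by
        apply Finset.sum_le_sum
        intro n _
        rw [← div_eq_mul_inv]
        exact Nat.cast_div_le
    _ = z * ∑ n ∈ Icc 1 z, (n : ℝ)⁻¹ := by rw [← Finset.mul_sum]; rfl
    _ ≤ _ := by gcongr

theorem sum_two_pow_le (z : ℕ) :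
    ∑ D ∈ LV (PR z) z, (2 : ℝ) ^ D.card ≤ z * (1 + Real.log z) := by
  refine le_trans ?_ (sum_card_divisors_le z)
  have hpr : ∀ D ∈ LV (PR z) z, ∀ p ∈ D, p.Prime := by
    intro D hD p hp
    exact (mem_PR.mp ((mem_LV.mp hD).1 hp)).1
  have h1 : ∀ D ∈ LV (PR z) z, (2 : ℝ) ^ D.card ≤ ((∏ p ∈ D, p).divisors.card : ℝ) := by
    intro D hD
    have : D.powerset.card ≤ (∏ p ∈ D, p).divisors.card := by
      apply Finset.card_le_card_of_injOn (fun T => ∏ p ∈ T, p)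
      · intro T hT
        have hT : T ⊆ D := by simpa using hT
        simp only [Finset.mem_coe, Nat.mem_divisors]
        exact ⟨Finset.prod_dvd_prod_of_subset _ _ _ hT,
          Finset.prod_ne_zero_iff.mpr fun p hp => (hpr D hD p hp).ne_zero⟩
      · apply prod_injOn.mono
        intro T hT p hp
        have hT : T ⊆ D := by simpa using hT
        exact hpr D hD p (hT hp)
    rw [Finset.card_powerset] at this
    exact_mod_cast this
  refine (Finset.sum_le_sum h1).trans ?_
  rw [← Finset.sum_image (f := fun n : ℕ => (n.divisors.card : ℝ)) (g := fun D : Finset ℕ => ∏ p ∈ D, p)]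
  · apply Finset.sum_le_sum_of_subset_of_nonneg
    · intro n hn
      rw [Finset.mem_image] at hn
      obtain ⟨D, hD, rfl⟩ := hn
      rw [Finset.mem_Ioc]
      exact ⟨Finset.prod_pos fun p hp => (hpr D hD p hp).pos, (mem_LV.mp hD).2⟩
    · intros; positivity
  · exact prod_injOn.mono fun D hD => hpr D hD

/-- `h_m(p) = ρ/(1-ρ)` -/
noncomputable def hh (m p : ℕ) : ℝ := if p ∣ m then 1 / ((p : ℝ) - 1) else 2 / ((p : ℝ) - 2)

theorem three_le_of_not_dvd {m p : ℕ} (hm : 2 ∣ m) (hp : p.Prime) (h : ¬ p ∣ m) :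
    (3 : ℝ) ≤ p := by
  have : p ≠ 2 := by rintro rfl; exact h hm
  have h2 := hp.two_le
  have : 3 ≤ p := by omega
  exact_mod_cast this

theorem hh_pos {m p : ℕ} (hm : 2 ∣ m) (hp : p.Prime) : 0 < hh m p := by
  unfold hh
  have h2 : (2 : ℝ) ≤ p := by exact_mod_cast hp.two_le
  split_ifs with h
  · apply div_pos one_pos; linarith
  · have := three_le_of_not_dvd hm hp h
    apply div_pos two_pos; linarith

theorem rho_pos {m p : ℕ} (hp : p.Prime) : 0 < rho m p := by
  unfold rho
  have h2 : (2 : ℝ) ≤ p := by exact_mod_cast hp.two_le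
  split_ifs <;> positivity

theorem hh_rel {m p : ℕ} (hm : 2 ∣ m) (hp : p.Prime) : hh m p = rho m p * (1 + hh m p) := by
  unfold hh rho
  have h2 : (2 : ℝ) ≤ p := by exact_mod_cast hp.two_le
  split_ifs with h
  · have : (p : ℝ) - 1 ≠ 0 := by linarith
    field_simp; ring
  · have := three_le_of_not_dvd hm hp h
    have : (p : ℝ) - 2 ≠ 0 := by linarith
    field_simp; ring

/-- Selberg sieve for the pair `n, m n + 1`. -/
theorem sieve_pair (m N z : ℕ) (hm : 2 ∣ m) (hz : 1 ≤ z) :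
    (((Ioc 0 N).filter (fun n => ∀ p : ℕ, p.Prime → p ≤ z → ¬ (p ∣ n ∨ p ∣ m * n + 1))).card : ℝ)
      ≤ N / SS (LV (PR z) z) (hh m) + (z * (1 + Real.log z)) ^ 2 := by
  have hpr : ∀ D ∈ LV (PR z) z, ∀ p ∈ D, p.Prime := by
    intro D hD p hp
    exact (mem_PR.mp ((mem_LV.mp hD).1 hp)).1
  have main := selberg_bound (LV (PR z) z) (rho m) (hh m) (Ioc 0 N)
    (fun n p => p ∣ n ∨ p ∣ m * n + 1) N (fun D => (2 : ℝ) ^ D.card)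
    (fun D hD p hp => rho_pos (hpr D hD p hp))
    (fun D hD p hp => hh_pos hm (hpr D hD p hp))
    (fun D hD p hp => hh_rel hm (hpr D hD p hp))
    (by rw [mem_LV]; simpa using hz)
    (LV_down (PR z) (fun p hp => (mem_PR.mp hp).1) z)
    (by
      intro D₁ hD₁ D₂ hD₂
      have hcb := card_bad m N (D₁ ∪ D₂) (by
        intro p hp
        rcases Finset.mem_union.mp hp with h | h
        · exact hpr D₁ hD₁ p h
        · exact hpr D₂ hD₂ p h)
      have hcb2 : (2 : ℝ) ^ (D₁ ∪ D₂).card ≤ 2 ^ D₁.card * 2 ^ D₂.card := by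
        rw [← pow_add]
        exact pow_le_pow_right₀ (by norm_num) (Finset.card_union_le _ _)
      refine le_trans (le_of_eq ?_) (hcb.trans hcb2)
      congr!)
  have hle : (((Ioc 0 N).filter
      (fun n => ∀ p : ℕ, p.Prime → p ≤ z → ¬ (p ∣ n ∨ p ∣ m * n + 1))).card : ℝ)
      ≤ (((Ioc 0 N).filter
      (fun n => ∀ D ∈ LV (PR z) z, ∀ p ∈ D, ¬ (p ∣ n ∨ p ∣ m * n + 1))).card : ℝ) := by
    apply Nat.cast_le.mpr
    apply Finset.card_le_card
    intro n hn
    rw [Finset.mem_filter] at *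
    refine ⟨hn.1, fun D hD p hp => ?_⟩
    have := mem_PR.mp ((mem_LV.mp hD).1 hp)
    exact hn.2 p this.1 this.2
  have hfin : (∑ D ∈ LV (PR z) z, (2 : ℝ) ^ D.card) ^ 2 ≤ (z * (1 + Real.log z)) ^ 2 := by
    apply pow_le_pow_left₀
    · apply Finset.sum_nonneg; intros; positivity
    · exact sum_two_pow_le z
  refine le_trans (hle.trans (le_trans (le_of_eq ?_) main)) (by linarith)
  congr!

end SieveAux

namespace SieveAux

theorem sum_log_div (N : ℕ) (K : ℕ) (hK : K + 1 ≤ N) :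
    (Real.log N ^ 2 - Real.log ((N : ℝ) / ((K : ℝ) + 1)) ^ 2) / 2 ≤
      ∑ a ∈ Ioc 0 K, (a : ℝ)⁻¹ * Real.log ((N : ℝ) / a) := by
  induction K with
  | zero => simp
  | succ K ih =>
    have ih := ih (by omega)
    rw [← Finset.insert_Ioc_right_eq_Ioc_add_one (by omega : 0 ≤ K), Finset.sum_insert (by simp)]
    have hN : (0 : ℝ) < N := by
      have : 0 < N := by omega
      exact_mod_cast this
    have hKN : ((K : ℝ) + 1 + 1) ≤ N := by exact_mod_cast hK
    have hK0 : (0 : ℝ) ≤ K := by positivity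
    push_cast
    rw [Real.log_div hN.ne' (by positivity)] at ih ⊢
    rw [Real.log_div hN.ne' (by positivity)]
    set x := Real.log N - Real.log ((K : ℝ) + 1) with hx
    have h1 : Real.log ((K : ℝ) + 1 + 1) - Real.log ((K : ℝ) + 1) ≤ ((K : ℝ) + 1)⁻¹ := by
      rw [← Real.log_div (by positivity) (by positivity)]
      have : ((K : ℝ) + 1 + 1) / ((K : ℝ) + 1) = 1 + ((K : ℝ) + 1)⁻¹ := by field_simp
      rw [this]
      have := Real.log_le_sub_one_of_pos (x := 1 + ((K : ℝ) + 1)⁻¹) (by positivity)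
      linarith
    have h2 : 0 ≤ x := by
      rw [hx, sub_nonneg]
      exact Real.log_le_log (by positivity) (by linarith)
    set d := Real.log ((K : ℝ) + 1 + 1) - Real.log ((K : ℝ) + 1) with hd
    have e : Real.log N - Real.log ((K : ℝ) + 1 + 1) = x - d := by rw [hx, hd]; ring
    rw [e]
    nlinarith [mul_le_mul_of_nonneg_right h1 h2, sq_nonneg d]

theorem divisor_sum_lower (N : ℕ) (hN : 1 ≤ N) :
    Real.log N ^ 2 / 2 ≤ ∑ n ∈ Ioc 0 N, (n.divisors.card : ℝ) / n := by
  let f : ArithmeticFunction ℝ := ⟨fun n => (n : ℝ)⁻¹, by simp⟩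
  have hf : ∀ n, f n = (n : ℝ)⁻¹ := fun n => rfl
  have h1 : ∑ n ∈ Ioc 0 N, (n.divisors.card : ℝ) / n = ∑ n ∈ Ioc 0 N, (f * f) n := by
    apply Finset.sum_congr rfl
    intro n hn
    rw [ArithmeticFunction.mul_apply]
    have : ∀ x ∈ n.divisorsAntidiagonal, f x.1 * f x.2 = (n : ℝ)⁻¹ := by
      intro x hx
      rw [Nat.mem_divisorsAntidiagonal] at hx
      rw [hf, hf, ← mul_inv, ← hx.1]
      push_cast
      rfl
    rw [Finset.sum_congr rfl this, Finset.sum_const, nsmul_eq_mul, div_eq_mul_inv]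
    congr 2
    rw [← Nat.map_div_right_divisors, Finset.card_map]
  rw [h1, ArithmeticFunction.sum_Ioc_mul_eq_sum_sum]
  have h2 : ∀ n ∈ Ioc 0 N, (n : ℝ)⁻¹ * Real.log ((N : ℝ) / n) ≤ f n * ∑ k ∈ Ioc 0 (N / n), f k := by
    intro n hn
    rw [hf]
    apply mul_le_mul_of_nonneg_left _ (by positivity)
    have := log_le_harmonic_floor ((N : ℝ) / n) (by positivity)
    rw [Nat.floor_div_eq_div, harmonic_eq_sum_Icc] at this
    push_cast at this
    exact this
  refine le_trans ?_ (Finset.sum_le_sum h2)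
  obtain ⟨K, rfl⟩ : ∃ K, N = K + 1 := ⟨N - 1, by omega⟩
  have h3 := sum_log_div (K + 1) K (le_refl _)
  push_cast at h3 ⊢
  rw [div_self (by positivity), Real.log_one] at h3
  rw [← Finset.insert_Ioc_right_eq_Ioc_add_one (by omega : 0 ≤ K), Finset.sum_insert (by simp)]
  push_cast
  rw [div_self (by positivity), Real.log_one]
  linarith

/-- Local factor `(1-1/p)^{-2} - 1`. -/
noncomputable def gs (p : ℕ) : ℝ := ((p : ℝ) / (p - 1)) ^ 2 - 1

theorem gs_nonneg {p : ℕ} (hp : p.Prime) : 0 ≤ gs p := by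
  have h2 : (2 : ℝ) ≤ p := by exact_mod_cast hp.two_le
  unfold gs
  have : 1 ≤ (p : ℝ) / (p - 1) := by
    rw [le_div_iff₀ (by linarith)]; linarith
  nlinarith

theorem one_add_gs (p : ℕ) : 1 + gs p = ((p : ℝ) / (p - 1)) ^ 2 := by
  unfold gs; ring

theorem sum_geom_le {p : ℕ} (hp : p.Prime) (K : ℕ) :
    ∑ k ∈ Ioc 0 K, ((k : ℝ) + 1) / (p : ℝ) ^ k ≤ gs p := by
  have h2 : (2 : ℝ) ≤ p := by exact_mod_cast hp.two_le
  have h1 : (0 : ℝ) < (p : ℝ) - 1 := by linarith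
  have key : ∀ K : ℕ, ∑ k ∈ Ioc 0 K, ((k : ℝ) + 1) / (p : ℝ) ^ k
      = gs p - (((K : ℝ) + 2) * p - (K + 1)) / ((p - 1) ^ 2 * (p : ℝ) ^ K) := by
    intro K
    induction K with
    | zero => 
      unfold gs
      simp
      field_simp
      ring
    | succ K ih =>
      rw [← Finset.insert_Ioc_right_eq_Ioc_add_one (by omega : 0 ≤ K), Finset.sum_insert (by simp), ih]
      push_cast
      rw [pow_succ]
      field_simp
      ring
  rw [key]
  have : 0 ≤ (((K : ℝ) + 2) * p - (K + 1)) / ((p - 1) ^ 2 * (p : ℝ) ^ K) := by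
    apply div_nonneg
    · nlinarith [(by positivity : (0 : ℝ) ≤ K)]
    · positivity
  linarith

theorem sum_fiber_le (z : ℕ) (A : Finset ℕ) (hA : ∀ p ∈ A, p.Prime) :
    ∑ n ∈ Ioc 0 z with n.primeFactors = A, (n.divisors.card : ℝ) / n ≤ ∏ p ∈ A, gs p := by
  have h1 : ∏ p ∈ A, ∑ k ∈ Ioc 0 z, ((k : ℝ) + 1) / (p : ℝ) ^ k ≤ ∏ p ∈ A, gs p := by
    apply Finset.prod_le_prod
    · intros; apply Finset.sum_nonneg; intros; positivity
    · intro p hp; exact sum_geom_le (hA p hp) z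
  refine le_trans ?_ h1
  rw [Finset.prod_sum]
  have h2 : ∀ n ∈ (Ioc 0 z).filter (fun n => n.primeFactors = A), (n.divisors.card : ℝ) / n
      = (fun κ : (a : ℕ) → a ∈ A → ℕ =>
        ∏ x ∈ A.attach, ((κ x.1 x.2 : ℝ) + 1) / (x.1 : ℝ) ^ (κ x.1 x.2))
        (fun p _ => n.factorization p) := by
    intro n hn
    rw [Finset.mem_filter, Finset.mem_Ioc] at hn
    have hn0 : n ≠ 0 := by omega
    simp only
    rw [Finset.prod_attach A (fun p => ((n.factorization p : ℝ) + 1) / (p : ℝ) ^ (n.factorization p)),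
      Finset.prod_div_distrib, Nat.card_divisors hn0, hn.2]
    congr 1
    · push_cast; rfl
    · conv_lhs => rw [← Nat.prod_factorization_pow_eq_self hn0]
      rw [Finsupp.prod, Nat.support_factorization, hn.2]
      push_cast; rfl
  rw [Finset.sum_congr rfl h2]
  rw [← Finset.sum_image (f := fun κ : (a : ℕ) → a ∈ A → ℕ =>
        ∏ x ∈ A.attach, ((κ x.1 x.2 : ℝ) + 1) / (x.1 : ℝ) ^ (κ x.1 x.2))
        (g := fun n : ℕ => (fun p _ => n.factorization p))]
  · apply Finset.sum_le_sum_of_subset_of_nonneg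
    · intro κ hκ
      rw [Finset.mem_image] at hκ
      obtain ⟨n, hn, rfl⟩ := hκ
      rw [Finset.mem_filter, Finset.mem_Ioc] at hn
      rw [Finset.mem_pi]
      intro p hp
      rw [Finset.mem_Ioc]
      have hn0 : n ≠ 0 := by omega
      rw [← hn.2] at hp
      refine ⟨Nat.Prime.factorization_pos_of_dvd (Nat.prime_of_mem_primeFactors hp) hn0
        (Nat.dvd_of_mem_primeFactors hp), ?_⟩
      exact ((Nat.factorization_lt p hn0).le).trans hn.1.2
    · intros; apply Finset.prod_nonneg; intros; positivity
  · intro n hn n' hn' h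
    simp only [Finset.coe_filter, Finset.mem_Ioc, Set.mem_ofPred_eq] at hn hn'
    apply Nat.eq_of_factorization_eq (by omega) (by omega)
    intro p
    by_cases hp : p ∈ A
    · exact congrFun (congrFun h p) hp
    · have a1 : p ∉ n.factorization.support := by rw [Nat.support_factorization, hn.2]; exact hp
      have a2 : p ∉ n'.factorization.support := by rw [Nat.support_factorization, hn'.2]; exact hp
      rw [Finsupp.notMem_support_iff.mp a1, Finsupp.notMem_support_iff.mp a2]

theorem divisor_sum_le_SS (z : ℕ) :
    ∑ n ∈ Ioc 0 z, (n.divisors.card : ℝ) / n ≤ SS (LV (PR z) z) gs := by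
  rw [← Finset.sum_fiberwise_of_maps_to (t := LV (PR z) z) (g := Nat.primeFactors)]
  · apply Finset.sum_le_sum
    intro A hA
    exact sum_fiber_le z A fun p hp => (mem_PR.mp ((mem_LV.mp hA).1 hp)).1
  · intro n hn
    rw [Finset.mem_Ioc] at hn
    rw [mem_LV]
    refine ⟨fun p hp => ?_, ?_⟩
    · rw [mem_PR]
      exact ⟨Nat.prime_of_mem_primeFactors hp, (Nat.le_of_mem_primeFactors hp).trans hn.2⟩
    · exact (Nat.le_of_dvd hn.1 (Nat.prod_primeFactors_dvd n)).trans hn.2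

/-- The van Lint and Richert trick. -/
theorem SS_le_mul (P Q : Finset ℕ) (hP : ∀ p ∈ P, p.Prime) (hQ : Q ⊆ P) (z : ℕ) (g : ℕ → ℝ)
    (hg : ∀ p ∈ P, 0 ≤ g p) :
    SS (LV P z) g ≤ (∏ p ∈ Q, (1 + g p)) * SS (LV (P \ Q) z) g := by
  unfold SS
  rw [Finset.prod_one_add, Finset.sum_mul_sum, ← Finset.sum_product']
  have h1 : ∀ A ∈ LV P z, ∏ p ∈ A, g p =
      (fun x : Finset ℕ × Finset ℕ => (∏ p ∈ x.1, g p) * ∏ p ∈ x.2, g p) (A ∩ Q, A \ Q) := by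
    intro A _
    simp only
    rw [mul_comm, ← Finset.prod_sdiff (Finset.inter_subset_left (s₁ := A) (s₂ := Q))]
    congr 2
    ext x; simp
  rw [Finset.sum_congr rfl h1]
  rw [← Finset.sum_image (f := fun x : Finset ℕ × Finset ℕ => (∏ p ∈ x.1, g p) * ∏ p ∈ x.2, g p)
    (g := fun A => (A ∩ Q, A \ Q))]
  · apply Finset.sum_le_sum_of_subset_of_nonneg
    · intro x hx
      rw [Finset.mem_image] at hx
      obtain ⟨A, hA, rfl⟩ := hx
      rw [Finset.mem_product]
      refine ⟨Finset.mem_powerset.mpr Finset.inter_subset_right, ?_⟩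
      have hA' := LV_down P hP z A hA (A \ Q) Finset.sdiff_subset
      rw [mem_LV] at hA hA' ⊢
      exact ⟨Finset.sdiff_subset_sdiff hA.1 (le_refl Q), hA'.2⟩
    · intro x hx _
      rw [Finset.mem_product, Finset.mem_powerset, mem_LV] at hx
      apply mul_nonneg
      · exact Finset.prod_nonneg fun p hp => hg p (hQ (hx.1 hp))
      · exact Finset.prod_nonneg fun p hp => hg p (Finset.sdiff_subset (hx.2.1 hp))
  · intro A _ B _ h
    simp only [Prod.mk.injEq] at h
    rw [← Finset.sdiff_union_inter A Q, ← Finset.sdiff_union_inter B Q, h.1, h.2]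

theorem mul_SS_le (P R : Finset ℕ) (hR : R ⊆ P) (z z' : ℕ) (hz : (∏ p ∈ R, p) * z' ≤ z)
    (g : ℕ → ℝ) (hg : ∀ p ∈ P, 0 ≤ g p) (hP : ∀ p ∈ P, p.Prime) :
    (∏ p ∈ R, (1 + g p)) * SS (LV (P \ R) z') g ≤ SS (LV P z) g := by
  unfold SS
  rw [Finset.prod_one_add, Finset.sum_mul_sum, ← Finset.sum_product']
  have hdisj : ∀ x ∈ R.powerset ×ˢ LV (P \ R) z', Disjoint x.1 x.2 := by
    intro x hx
    rw [Finset.mem_product, Finset.mem_powerset, mem_LV] at hx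
    exact Finset.disjoint_of_subset_left hx.1
      (Finset.disjoint_of_subset_right hx.2.1 Finset.disjoint_sdiff)
  have h1 : ∀ x ∈ R.powerset ×ˢ LV (P \ R) z', (∏ p ∈ x.1, g p) * ∏ p ∈ x.2, g p
      = ∏ p ∈ x.1 ∪ x.2, g p := by
    intro x hx
    rw [Finset.prod_union (hdisj x hx)]
  rw [Finset.sum_congr rfl h1]
  rw [← Finset.sum_image (f := fun A : Finset ℕ => ∏ p ∈ A, g p)
    (g := fun x : Finset ℕ × Finset ℕ => x.1 ∪ x.2)]
  · apply Finset.sum_le_sum_of_subset_of_nonneg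
    · intro A hA
      rw [Finset.mem_image] at hA
      obtain ⟨x, hx, rfl⟩ := hA
      have hd := hdisj x hx
      rw [Finset.mem_product, Finset.mem_powerset, mem_LV] at hx
      rw [mem_LV]
      refine ⟨Finset.union_subset (hx.1.trans hR) (hx.2.1.trans Finset.sdiff_subset), ?_⟩
      rw [Finset.prod_union hd]
      refine le_trans (Nat.mul_le_mul ?_ hx.2.2) hz
      apply Nat.le_of_dvd
      · exact Finset.prod_pos fun p hp => (hP p (hR hp)).pos
      · exact Finset.prod_dvd_prod_of_subset _ _ _ hx.1
    · intro A hA _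
      rw [mem_LV] at hA
      exact Finset.prod_nonneg fun p hp => hg p (hA.1 hp)
  · rintro ⟨T, A⟩ hx ⟨T', A'⟩ hx' heq
    simp only [Finset.coe_product, Set.mem_prod, Finset.mem_coe,
      Finset.mem_powerset, mem_LV] at hx hx'
    simp only at heq
    have key : ∀ y, (y ∈ T ∨ y ∈ A) ↔ (y ∈ T' ∨ y ∈ A') := by
      intro y
      have := congrArg (fun s => y ∈ s) heq
      simpa using this
    have k1 : ∀ y, y ∈ T → y ∈ R := fun y hy => hx.1 hy
    have k2 : ∀ y, y ∈ T' → y ∈ R := fun y hy => hx'.1 hy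
    have k3 : ∀ y, y ∈ A → y ∉ R := fun y hy => (Finset.mem_sdiff.mp (hx.2.1 hy)).2
    have k4 : ∀ y, y ∈ A' → y ∉ R := fun y hy => (Finset.mem_sdiff.mp (hx'.2.1 hy)).2
    have e1 : T = T' := by
      ext y
      have := key y; have := k1 y; have := k2 y; have := k3 y; have := k4 y
      tauto
    have e2 : A = A' := by
      ext y
      have := key y; have := k1 y; have := k2 y; have := k3 y; have := k4 y
      tauto
    rw [e1, e2]

theorem gs_le_hh {m p : ℕ} (hm : 2 ∣ m) (hp : p.Prime) (h : ¬ p ∣ m) : gs p ≤ hh m p := by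
  have h3 := three_le_of_not_dvd hm hp h
  unfold gs hh
  rw [if_neg h]
  have a1 : (0 : ℝ) < (p : ℝ) - 1 := by linarith
  have a2 : (0 : ℝ) < (p : ℝ) - 2 := by linarith
  rw [div_pow, div_sub_one (by positivity), div_le_div_iff₀ (by positivity) a2]
  nlinarith

theorem SS_mono {𝓓 𝓔 : Finset (Finset ℕ)} (hsub : 𝓓 ⊆ 𝓔) {g h : ℕ → ℝ}
    (h1 : ∀ D ∈ 𝓓, ∀ p ∈ D, 0 ≤ g p ∧ g p ≤ h p) (h2 : ∀ D ∈ 𝓔, ∀ p ∈ D, 0 ≤ h p) :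
    SS 𝓓 g ≤ SS 𝓔 h := by
  unfold SS
  calc ∑ D ∈ 𝓓, ∏ p ∈ D, g p ≤ ∑ D ∈ 𝓓, ∏ p ∈ D, h p := by
        apply Finset.sum_le_sum
        intro D hD
        exact Finset.prod_le_prod (fun p hp => (h1 D hD p hp).1) (fun p hp => (h1 D hD p hp).2)
    _ ≤ _ := Finset.sum_le_sum_of_subset_of_nonneg hsub
        fun D hD _ => Finset.prod_nonneg (h2 D hD)

/-- Lower bound for the Selberg denominator. -/
theorem SS_lower (m w z z' : ℕ) (hm : 2 ∣ m) (hm0 : m ≠ 0) (hz' : 1 ≤ z')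
    (hz : (∏ p ∈ PR w, p) * z' ≤ z) :
    (∏ p ∈ PR w, (1 + hh m p)) * (Real.log z' ^ 2 / 2) ≤
      (∏ p ∈ PR w ∪ m.primeFactors, (1 + gs p)) * SS (LV (PR z) z) (hh m) := by
  have hprW : ∀ p ∈ PR w, p.Prime := fun p hp => (mem_PR.mp hp).1
  have hprz : ∀ p ∈ PR z, p.Prime := fun p hp => (mem_PR.mp hp).1
  have hW1 : 0 < ∏ p ∈ PR w, p := Finset.prod_pos fun p hp => (hprW p hp).pos
  have hz'z : z' ≤ z := le_trans (Nat.le_mul_of_pos_left z' hW1) hz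
  have hwz : PR w ⊆ PR z := by
    intro p hp
    rw [mem_PR]
    refine ⟨hprW p hp, ?_⟩
    have : p ≤ ∏ p ∈ PR w, p := Nat.le_of_dvd hW1 (Finset.dvd_prod_of_mem (fun p => p) hp)
    exact this.trans ((Nat.le_mul_of_pos_right _ (by omega)).trans hz)
  set Q := PR z ∩ (PR w ∪ m.primeFactors) with hQ
  have s1 : Real.log z' ^ 2 / 2 ≤ SS (LV (PR z) z') gs := by
    refine (divisor_sum_lower z' hz').trans ((divisor_sum_le_SS z').trans ?_)
    apply SS_mono
    · intro D hD
      rw [mem_LV] at *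
      refine ⟨fun p hp => ?_, hD.2⟩
      have := mem_PR.mp (hD.1 hp)
      exact mem_PR.mpr ⟨this.1, this.2.trans hz'z⟩
    · intro D hD p hp
      exact ⟨gs_nonneg (mem_PR.mp ((mem_LV.mp hD).1 hp)).1, le_refl _⟩
    · intro D hD p hp
      exact gs_nonneg (mem_PR.mp ((mem_LV.mp hD).1 hp)).1
  have s2 := SS_le_mul (PR z) Q hprz Finset.inter_subset_left z' gs
    (fun p hp => gs_nonneg (hprz p hp))
  have s3 : SS (LV (PR z \ Q) z') gs ≤ SS (LV (PR z \ PR w) z') (hh m) := by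
    apply SS_mono
    · intro D hD
      rw [mem_LV] at *
      refine ⟨fun p hp => ?_, hD.2⟩
      have := hD.1 hp
      rw [hQ] at this
      simp only [Finset.mem_sdiff, Finset.mem_inter, Finset.mem_union] at this ⊢
      tauto
    · intro D hD p hp
      have := (mem_LV.mp hD).1 hp
      rw [hQ] at this
      simp only [Finset.mem_sdiff, Finset.mem_inter, Finset.mem_union] at this
      have hpp := hprz p this.1
      refine ⟨gs_nonneg hpp, ?_⟩
      by_cases hpm : p ∣ m
      · exact absurd ⟨this.1, Or.inr (Nat.mem_primeFactors.mpr ⟨hpp, hpm, hm0⟩)⟩ this.2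
      · exact gs_le_hh hm hpp hpm
    · intro D hD p hp
      exact (hh_pos hm (hprz p (Finset.sdiff_subset ((mem_LV.mp hD).1 hp)))).le
  have s4 := mul_SS_le (PR z) (PR w) hwz z z' hz (hh m) (fun p hp => (hh_pos hm (hprz p hp)).le) hprz
  have s5 : ∏ p ∈ Q, (1 + gs p) ≤ ∏ p ∈ PR w ∪ m.primeFactors, (1 + gs p) := by
    apply Finset.prod_le_prod_of_subset_of_one_le
    · exact Finset.inter_subset_right
    · intro p hp
      have := gs_nonneg (hprz p (Finset.inter_subset_left hp)); linarith
    · intro p hp _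
      rcases Finset.mem_union.mp hp with h | h
      · have := gs_nonneg (hprW p h); linarith
      · have := gs_nonneg (Nat.prime_of_mem_primeFactors h); linarith
  have hWnn : 0 ≤ ∏ p ∈ PR w, (1 + hh m p) :=
    Finset.prod_nonneg fun p hp => by have := hh_pos hm (hprW p hp); linarith
  have hQnn : 0 ≤ ∏ p ∈ Q, (1 + gs p) :=
    Finset.prod_nonneg fun p hp => by
      have := gs_nonneg (hprz p (Finset.inter_subset_left hp)); linarith
  have hSnn : 0 ≤ SS (LV (PR z) z) (hh m) :=
    Finset.sum_nonneg fun D hD => Finset.prod_nonneg fun p hp =>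
      (hh_pos hm (hprz p ((mem_LV.mp hD).1 hp))).le
  calc (∏ p ∈ PR w, (1 + hh m p)) * (Real.log z' ^ 2 / 2)
      ≤ (∏ p ∈ PR w, (1 + hh m p)) * ((∏ p ∈ Q, (1 + gs p)) * SS (LV (PR z \ PR w) z') (hh m)) := by
        apply mul_le_mul_of_nonneg_left _ hWnn
        exact s1.trans (s2.trans (mul_le_mul_of_nonneg_left s3 hQnn))
    _ = (∏ p ∈ Q, (1 + gs p)) * ((∏ p ∈ PR w, (1 + hh m p)) * SS (LV (PR z \ PR w) z') (hh m)) := by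
        ring
    _ ≤ (∏ p ∈ Q, (1 + gs p)) * SS (LV (PR z) z) (hh m) := mul_le_mul_of_nonneg_left s4 hQnn
    _ ≤ _ := mul_le_mul_of_nonneg_right s5 hSnn

end SieveAux

namespace SieveAux

/-- local constants -/
noncomputable def ee (p : ℕ) : ℝ := if p = 2 then 2 else (p : ℝ) * (p - 2) / (p - 1) ^ 2

/-- local correction -/
noncomputable def kk (w p : ℕ) : ℝ := if p ≤ w then 1 / ((p : ℝ) - 2) else gs p

/-- the singular series -/
noncomputable def ff (w m : ℕ) : ℝ :=
  (∏ p ∈ PR w ∪ m.primeFactors, (1 + gs p)) / ∏ p ∈ PR w, (1 + hh m p)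

theorem three_le_of_ne_two {p : ℕ} (hp : p.Prime) (h : p ≠ 2) : (3 : ℝ) ≤ p := by
  have h2 := hp.two_le
  have : 3 ≤ p := by omega
  exact_mod_cast this

theorem kk_nonneg {w p : ℕ} (hp : p.Prime) (h : p ≠ 2) : 0 ≤ kk w p := by
  have := three_le_of_ne_two hp h
  unfold kk
  split_ifs
  · apply div_nonneg zero_le_one; linarith
  · exact gs_nonneg hp

theorem ff_eq (w m : ℕ) (hm : 2 ∣ m) (hm0 : m ≠ 0) (hw : 2 ≤ w) :
    ff w m = (∏ p ∈ PR w, ee p) * ∏ p ∈ m.primeFactors \ {2}, (1 + kk w p) := by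
  have hprW : ∀ p ∈ PR w, p.Prime := fun p hp => (mem_PR.mp hp).1
  unfold ff
  have hpos : 0 < ∏ p ∈ PR w, (1 + hh m p) :=
    Finset.prod_pos fun p hp => by have := hh_pos hm (hprW p hp); linarith
  rw [div_eq_iff hpos.ne', mul_right_comm, ← Finset.prod_mul_distrib]
  have e1 : ∏ p ∈ PR w, (ee p * (1 + hh m p)) = ∏ p ∈ PR w ∪ m.primeFactors,
      if p ∈ PR w then ee p * (1 + hh m p) else 1 := by
    rw [Finset.prod_ite_mem]
    congr 1
    ext x; simp
  have e2 : ∏ p ∈ m.primeFactors \ {2}, (1 + kk w p) = ∏ p ∈ PR w ∪ m.primeFactors,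
      if p ∈ m.primeFactors \ {2} then (1 + kk w p) else 1 := by
    rw [Finset.prod_ite_mem]
    congr 1
    ext x; simp only [Finset.mem_inter, Finset.mem_union, Finset.mem_sdiff]; tauto
  rw [e1, e2, ← Finset.prod_mul_distrib]
  apply Finset.prod_congr rfl
  intro p hp
  have hpp : p.Prime := by
    rcases Finset.mem_union.mp hp with h | h
    · exact hprW p h
    · exact Nat.prime_of_mem_primeFactors h
  have hmem : p ∈ m.primeFactors ↔ p ∣ m := by
    rw [Nat.mem_primeFactors]; exact ⟨fun h => h.2.1, fun h => ⟨hpp, h, hm0⟩⟩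
  rw [one_add_gs]
  by_cases h2 : p = 2
  · subst h2
    have : 2 ∈ PR w := mem_PR.mpr ⟨hpp, hw⟩
    rw [if_pos this, if_neg (by simp)]
    unfold ee hh
    rw [if_pos hm]
    norm_num
  · have h3 := three_le_of_ne_two hpp h2
    have a1 : (p : ℝ) - 1 ≠ 0 := by linarith
    have a2 : (p : ℝ) - 2 ≠ 0 := by linarith
    by_cases hw' : p ≤ w
    · rw [if_pos (mem_PR.mpr ⟨hpp, hw'⟩)]
      unfold ee hh kk
      rw [if_neg h2, if_pos hw']
      by_cases hpm : p ∣ m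
      · rw [if_pos hpm, if_pos (by simp [hmem, hpm, h2, hm0, hpp])]
        field_simp
        ring
      · rw [if_neg hpm, if_neg (by simp [hpm])]
        field_simp
        ring
    · have n1 : p ∉ PR w := fun h => hw' (mem_PR.mp h).2
      have n2 : p ∈ m.primeFactors := by
        rcases Finset.mem_union.mp hp with h | h
        · exact absurd h n1
        · exact h
      rw [if_neg n1, if_pos (by rw [Finset.mem_sdiff]; exact ⟨n2, by simpa using h2⟩)]
      unfold kk
      rw [if_neg hw', one_add_gs, one_mul]

theorem tail_sum (w M : ℕ) (hw : 2 ≤ w) :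
    ∑ n ∈ Ioc w M, 2 / (((n : ℝ) - 1) * (n - 2)) ≤ 2 / ((w : ℝ) - 1) := by
  have hw' : (2 : ℝ) ≤ w := by exact_mod_cast hw
  by_cases hM : w ≤ M
  · have key : ∑ n ∈ Ioc w M, 2 / (((n : ℝ) - 1) * (n - 2))
        = 2 / ((w : ℝ) - 1) - 2 / ((M : ℝ) - 1) := by
      induction M, hM using Nat.le_induction with
      | base => simp
      | succ M hM ih =>
        rw [← Finset.insert_Ioc_right_eq_Ioc_add_one hM, Finset.sum_insert (by simp), ih]
        have hM' : (2 : ℝ) ≤ M := by exact_mod_cast hw.trans hM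
        push_cast
        have a1 : (M : ℝ) + 1 - 1 ≠ 0 := by linarith
        have a2 : (M : ℝ) + 1 - 2 ≠ 0 := by linarith
        have a3 : (M : ℝ) - 1 ≠ 0 := by linarith
        have a4 : (w : ℝ) - 1 ≠ 0 := by linarith
        field_simp
        ring
    rw [key]
    have hM' : (2 : ℝ) ≤ M := by exact_mod_cast hw.trans hM
    have : 0 ≤ 2 / ((M : ℝ) - 1) := div_nonneg (by norm_num) (by linarith)
    linarith
  · rw [Finset.Ioc_eq_empty (by omega), Finset.sum_empty]
    exact div_nonneg (by norm_num) (by linarith)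

theorem euler_bound (w M : ℕ) (hw : 2 ≤ w) :
    (∏ p ∈ PR w, ee p) * ∏ p ∈ PR M \ {2}, (1 + kk w p / p) ≤ 2 * Real.exp (2 / ((w : ℝ) - 1)) := by
  have hprW : ∀ p ∈ PR w, p.Prime := fun p hp => (mem_PR.mp hp).1
  have hprM : ∀ p ∈ PR M, p.Prime := fun p hp => (mem_PR.mp hp).1
  have hfac : ∀ p : ℕ, p.Prime → p ≠ 2 → 1 ≤ 1 + kk w p / p := by
    intro p hp h
    have := kk_nonneg (w := w) hp h
    have : 0 ≤ kk w p / p := by positivity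
    linarith
  have hsub : PR M \ {2} ⊆ (PR w \ {2}) ∪ (PR M \ PR w) := by
    intro p hp
    simp only [Finset.mem_union, Finset.mem_sdiff] at *
    tauto
  have hne : ∀ p ∈ PR M \ PR w, p ≠ 2 := by
    rintro p hp rfl
    rw [Finset.mem_sdiff] at hp
    exact hp.2 (mem_PR.mpr ⟨Nat.prime_two, hw⟩)
  have s1 : ∏ p ∈ PR M \ {2}, (1 + kk w p / p) ≤
      (∏ p ∈ PR w \ {2}, (1 + kk w p / p)) * ∏ p ∈ PR M \ PR w, (1 + kk w p / p) := by
    rw [← Finset.prod_union]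
    · have hall : ∀ p ∈ (PR w \ {2}) ∪ (PR M \ PR w), 1 ≤ 1 + kk w p / p := by
        intro p hp
        rcases Finset.mem_union.mp hp with h | h
        · rw [Finset.mem_sdiff] at h
          exact hfac p (hprW p h.1) (by simpa using h.2)
        · exact hfac p (hprM p (Finset.mem_sdiff.mp h).1) (hne p h)
      apply Finset.prod_le_prod_of_subset_of_one_le hsub
      · intro p hp
        have := hall p (hsub hp); linarith
      · intro p hp _; exact hall p hp
    · apply Finset.disjoint_left.mpr
      intro p h1 h2
      exact (Finset.mem_sdiff.mp h2).2 (Finset.mem_sdiff.mp h1).1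
  have s2 : (∏ p ∈ PR w, ee p) * ∏ p ∈ PR w \ {2}, (1 + kk w p / p) = 2 := by
    have h2 : 2 ∈ PR w := mem_PR.mpr ⟨Nat.prime_two, hw⟩
    rw [← Finset.prod_sdiff (Finset.singleton_subset_iff.mpr h2), Finset.prod_singleton,
      mul_right_comm, ← Finset.prod_mul_distrib]
    rw [Finset.prod_eq_one]
    · simp [ee]
    · intro p hp
      rw [Finset.mem_sdiff] at hp
      have hne2 : p ≠ 2 := by simpa using hp.2
      have h3 := three_le_of_ne_two (hprW p hp.1) hne2
      have a1 : (p : ℝ) - 1 ≠ 0 := by linarith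
      have a2 : (p : ℝ) - 2 ≠ 0 := by linarith
      unfold ee kk
      rw [if_neg hne2, if_pos (mem_PR.mp hp.1).2]
      field_simp
      ring
  have s3 : ∏ p ∈ PR M \ PR w, (1 + kk w p / p) ≤ Real.exp (2 / ((w : ℝ) - 1)) := by
    have b1 : ∏ p ∈ PR M \ PR w, (1 + kk w p / p) ≤ ∏ p ∈ PR M \ PR w, Real.exp (kk w p / p) := by
      apply Finset.prod_le_prod
      · intro p hp
        have := hfac p (hprM p (Finset.mem_sdiff.mp hp).1) (hne p hp); linarith
      · intro p _
        have := Real.add_one_le_exp (kk w p / p)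
        linarith
    refine b1.trans ?_
    rw [← Real.exp_sum]
    apply Real.exp_le_exp.mpr
    refine le_trans ?_ (tail_sum w M hw)
    have hsub2 : PR M \ PR w ⊆ Ioc w M := by
      intro p hp
      rw [Finset.mem_sdiff] at hp
      have := mem_PR.mp hp.1
      rw [Finset.mem_Ioc]
      refine ⟨?_, this.2⟩
      by_contra hcon
      exact hp.2 (mem_PR.mpr ⟨this.1, by omega⟩)
    calc ∑ p ∈ PR M \ PR w, kk w p / p ≤ ∑ p ∈ PR M \ PR w, 2 / (((p : ℝ) - 1) * (p - 2)) := by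
          apply Finset.sum_le_sum
          intro p hp
          have h3 := three_le_of_ne_two (hprM p (Finset.mem_sdiff.mp hp).1) (hne p hp)
          have hwp := (Finset.mem_Ioc.mp (hsub2 hp)).1
          unfold kk gs
          rw [if_neg (by omega)]
          have a1 : (0 : ℝ) < (p : ℝ) - 1 := by linarith
          have a2 : (0 : ℝ) < (p : ℝ) - 2 := by linarith
          have a0 : (0 : ℝ) < (p : ℝ) := by linarith
          rw [div_pow, div_sub_one (by positivity), div_div, div_le_div_iff₀ (by positivity) (by positivity)]
          have : ((p : ℝ) ^ 2 - (p - 1) ^ 2) * (p - 2) ≤ 2 * ((p - 1) * p) := by nlinarith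
          nlinarith
      _ ≤ ∑ p ∈ Ioc w M, 2 / (((p : ℝ) - 1) * (p - 2)) := by
          apply Finset.sum_le_sum_of_subset_of_nonneg hsub2
          intro p hp _
          have hwp := (Finset.mem_Ioc.mp hp).1
          have : (3 : ℝ) ≤ p := by
            have : 3 ≤ p := by omega
            exact_mod_cast this
          apply div_nonneg (by norm_num)
          apply mul_nonneg <;> linarith
  have hEnn : 0 ≤ ∏ p ∈ PR w, ee p := by
    apply Finset.prod_nonneg
    intro p hp
    unfold ee
    split_ifs with h
    · norm_num
    · have := three_le_of_ne_two (hprW p hp) h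
      apply div_nonneg _ (by positivity)
      apply mul_nonneg <;> linarith
  calc _ ≤ (∏ p ∈ PR w, ee p) * ((∏ p ∈ PR w \ {2}, (1 + kk w p / p)) *
          ∏ p ∈ PR M \ PR w, (1 + kk w p / p)) := mul_le_mul_of_nonneg_left s1 hEnn
    _ = 2 * ∏ p ∈ PR M \ PR w, (1 + kk w p / p) := by rw [← mul_assoc, s2]
    _ ≤ _ := mul_le_mul_of_nonneg_left s3 (by norm_num)

/-- Averaging the singular series. -/
theorem sum_ff (w M : ℕ) (hw : 2 ≤ w) (φ : ℕ → ℝ) (hφ : ∀ m, 0 ≤ φ m) (K : ℝ) (hK0 : 0 ≤ K)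
    (hK : ∀ d : ℕ, 1 ≤ d → ∑ m ∈ Ioc 0 M with d ∣ m, φ m ≤ K / d) :
    ∑ m ∈ Ioc 0 M with 2 ∣ m, ff w m * φ m ≤ Real.exp (2 / ((w : ℝ) - 1)) * K := by
  have hprM : ∀ p ∈ PR M, p.Prime := fun p hp => (mem_PR.mp hp).1
  have hEnn : 0 ≤ ∏ p ∈ PR w, ee p := by
    apply Finset.prod_nonneg
    intro p hp
    unfold ee
    split_ifs with h
    · norm_num
    · have := three_le_of_ne_two (mem_PR.mp hp).1 h
      apply div_nonneg _ (by positivity)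
      apply mul_nonneg <;> linarith
  have h1 : ∑ m ∈ Ioc 0 M with 2 ∣ m, ff w m * φ m = (∏ p ∈ PR w, ee p) *
      ∑ m ∈ Ioc 0 M with 2 ∣ m, (∏ p ∈ m.primeFactors \ {2}, (1 + kk w p)) * φ m := by
    rw [Finset.mul_sum]
    apply Finset.sum_congr rfl
    intro m hm
    rw [Finset.mem_filter, Finset.mem_Ioc] at hm
    rw [ff_eq w m hm.2 (by omega) hw, mul_assoc]
  have h2 : ∑ m ∈ Ioc 0 M with 2 ∣ m, (∏ p ∈ m.primeFactors \ {2}, (1 + kk w p)) * φ m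
      = ∑ A ∈ (PR M \ {2}).powerset, (∏ p ∈ A, kk w p) *
        ∑ m ∈ Ioc 0 M with (2 * ∏ p ∈ A, p) ∣ m, φ m := by
    have : ∀ m ∈ (Ioc 0 M).filter (fun m => 2 ∣ m),
        (∏ p ∈ m.primeFactors \ {2}, (1 + kk w p)) * φ m
        = ∑ A ∈ (PR M \ {2}).powerset, if (∏ p ∈ A, p) ∣ m then (∏ p ∈ A, kk w p) * φ m else 0 := by
      intro m hm
      rw [Finset.mem_filter, Finset.mem_Ioc] at hm
      rw [Finset.prod_one_add, Finset.sum_mul, ← Finset.sum_filter]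
      apply Finset.sum_congr _ (fun _ _ => rfl)
      ext A
      rw [Finset.mem_filter, Finset.mem_powerset, Finset.mem_powerset]
      constructor
      · intro hA
        refine ⟨fun p hp => ?_, ?_⟩
        · have := Finset.mem_sdiff.mp (hA hp)
          rw [Finset.mem_sdiff, mem_PR]
          exact ⟨⟨Nat.prime_of_mem_primeFactors this.1,
            (Nat.le_of_mem_primeFactors this.1).trans hm.1.2⟩, this.2⟩
        · rw [prod_primes_dvd_iff]
          · intro p hp
            exact Nat.dvd_of_mem_primeFactors (Finset.mem_sdiff.mp (hA hp)).1
          · intro p hp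
            exact Nat.prime_of_mem_primeFactors (Finset.mem_sdiff.mp (hA hp)).1
      · rintro ⟨hA, hd⟩ p hp
        have := Finset.mem_sdiff.mp (hA hp)
        rw [Finset.mem_sdiff, Nat.mem_primeFactors]
        exact ⟨⟨hprM p this.1, (Finset.dvd_prod_of_mem (fun p => p) hp).trans hd, by omega⟩, this.2⟩
    rw [Finset.sum_congr rfl this, Finset.sum_comm]
    apply Finset.sum_congr rfl
    intro A hA
    rw [Finset.mem_powerset] at hA
    rw [← Finset.sum_filter, Finset.filter_filter, Finset.mul_sum]
    apply Finset.sum_congr _ (fun _ _ => rfl)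
    ext m
    simp only [Finset.mem_filter, and_congr_right_iff]
    intro _
    have hcop : Nat.Coprime 2 (∏ p ∈ A, p) := by
      apply Nat.Coprime.prod_right
      intro p hp
      have := Finset.mem_sdiff.mp (hA hp)
      rw [Nat.coprime_primes Nat.prime_two (hprM p this.1)]
      rintro rfl
      simp at this
    constructor
    · rintro ⟨a, b⟩; exact hcop.mul_dvd_of_dvd_of_dvd a b
    · intro h; exact ⟨(Dvd.intro _ rfl).trans h, (Dvd.intro_left _ rfl).trans h⟩
  have h3 : ∑ A ∈ (PR M \ {2}).powerset, (∏ p ∈ A, kk w p) *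
        ∑ m ∈ Ioc 0 M with (2 * ∏ p ∈ A, p) ∣ m, φ m
      ≤ K / 2 * ∏ p ∈ PR M \ {2}, (1 + kk w p / p) := by
    rw [Finset.prod_one_add, Finset.mul_sum]
    apply Finset.sum_le_sum
    intro A hA
    rw [Finset.mem_powerset] at hA
    have hApos : 0 < ∏ p ∈ A, p :=
      Finset.prod_pos fun p hp => (hprM p (Finset.mem_sdiff.mp (hA hp)).1).pos
    have hknn : 0 ≤ ∏ p ∈ A, kk w p := by
      apply Finset.prod_nonneg
      intro p hp
      have := Finset.mem_sdiff.mp (hA hp)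
      exact kk_nonneg (hprM p this.1) (by simpa using this.2)
    refine (mul_le_mul_of_nonneg_left (hK (2 * ∏ p ∈ A, p) (by omega)) hknn).trans (le_of_eq ?_)
    rw [Finset.prod_div_distrib]
    push_cast
    have : ((∏ p ∈ A, p : ℕ) : ℝ) ≠ 0 := Nat.cast_ne_zero.mpr hApos.ne'
    rw [Nat.cast_prod] at this
    field_simp
  rw [h1, h2]
  calc _ ≤ (∏ p ∈ PR w, ee p) * (K / 2 * ∏ p ∈ PR M \ {2}, (1 + kk w p / p)) :=
        mul_le_mul_of_nonneg_left h3 hEnn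
    _ = K / 2 * ((∏ p ∈ PR w, ee p) * ∏ p ∈ PR M \ {2}, (1 + kk w p / p)) := by ring
    _ ≤ K / 2 * (2 * Real.exp (2 / ((w : ℝ) - 1))) :=
        mul_le_mul_of_nonneg_left (euler_bound w M hw) (by positivity)
    _ = _ := by ring

theorem step_ineq (x s t : ℝ) (hs : 0 < s) (hst : s < t) (hx : 0 < x)
    (hu : 2 ≤ Real.log (x / t)) :
    (t - s) * (1 / (t * Real.log (x / t) ^ 2)) ≤ 1 / Real.log (x / t) - 1 / Real.log (x / s) := by
  have ht : 0 < t := hs.trans hst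
  set u := Real.log (x / t) with hudef
  set r := Real.log (t / s) with hr
  have e : Real.log (x / s) = u + r := by
    rw [hudef, hr, Real.log_div hx.ne' hs.ne', Real.log_div hx.ne' ht.ne', Real.log_div ht.ne' hs.ne']
    ring
  have hrpos : 0 < r := Real.log_pos (by rw [lt_div_iff₀ hs]; linarith)
  have h1 := Real.le_log_one_add_of_nonneg (x := t / s - 1) (by
    rw [sub_nonneg, le_div_iff₀ hs]; linarith)
  have e2 : 1 + (t / s - 1) = t / s := by ring
  rw [e2, ← hr] at h1
  have h2 : 2 * (t - s) ≤ r * (t + s) := by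
    have : 2 * (t / s - 1) / (t / s - 1 + 2) = 2 * (t - s) / (t + s) := by
      have q1 : t / s - 1 = (t - s) / s := by field_simp
      have q2 : t / s - 1 + 2 = (t + s) / s := by field_simp; ring
      rw [q2, q1]
      have q3 : t + s ≠ 0 := by linarith
      field_simp
    rw [this, div_le_iff₀ (by linarith)] at h1
    exact h1
  have h3 : t - s ≤ r * t := by nlinarith
  rw [e, div_sub_div _ _ (by linarith) (by linarith), mul_one_div,
    div_le_div_iff₀ (by positivity) (by positivity)]
  have h4 : (t - s) * (u + r) ≤ r * u * t := by nlinarith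
  have : (t - s) * (u * (u + r)) = u * ((t - s) * (u + r)) := by ring
  rw [this]
  have e3 : (1 * (u + r) - u * 1) * (t * u ^ 2) = u * (r * u * t) := by ring
  rw [e3]
  exact mul_le_mul_of_nonneg_left h4 (by linarith)

theorem phi_sum (x c : ℝ) (hc0 : 0 < c) (hc1 : c < 1) (hx : 1 < x) (hL : 2 ≤ c * Real.log x) (M : ℕ)
    (hM : (M : ℝ) ≤ x ^ (1 - c)) (d : ℕ) (hd : 1 ≤ d) :
    ∑ m ∈ Ioc 0 M with d ∣ m, 1 / ((m : ℝ) * Real.log (x / m) ^ 2) ≤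
      ((1 / c - 1) / Real.log x + 1 / (c * Real.log x) ^ 2) / d := by
  set L := Real.log x with hLdef
  have hx0 : 0 < x := by linarith
  have hLpos : 0 < L := Real.log_pos hx
  have hlog : ∀ t : ℝ, 1 ≤ t → t ≤ M → c * L ≤ Real.log (x / t) := by
    intro t h1 h2
    have : t ≤ x ^ (1 - c) := h2.trans hM
    have h3 := Real.log_le_log (by linarith) this
    rw [Real.log_rpow hx0] at h3
    rw [Real.log_div hx0.ne' (by linarith)]
    rw [← hLdef] at *
    linarith
  have hd' : (1 : ℝ) ≤ d := by exact_mod_cast hd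
  have key : ∀ J : ℕ, d * (J + 1) ≤ M →
      ∑ j ∈ Ioc 0 (J + 1), (d : ℝ) * (1 / (((d * j : ℕ) : ℝ) * Real.log (x / ((d * j : ℕ) : ℝ)) ^ 2))
      ≤ 1 / (c * L) ^ 2 + 1 / Real.log (x / ((d * (J + 1) : ℕ) : ℝ)) - 1 / Real.log (x / d) := by
    intro J
    induction J with
    | zero =>
      intro hJ
      have hdM : (d : ℝ) ≤ M := by
        have : d ≤ M := by simpa using hJ
        exact_mod_cast this
      have h1 := hlog d hd' hdM
      have h2 : (Real.log (x / d))⁻¹ ≤ (c * L)⁻¹ := inv_anti₀ (by positivity) h1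
      have h3 : 0 ≤ (Real.log (x / d))⁻¹ := inv_nonneg.mpr (by linarith)
      have h4 := pow_le_pow_left₀ h3 h2 2
      have hdp : (0 : ℝ) < d := by linarith
      have hlp : (0 : ℝ) < Real.log (x / d) := lt_of_lt_of_le (by positivity) h1
      have e1 : (d : ℝ) * (1 / ((d : ℝ) * Real.log (x / d) ^ 2)) = (Real.log (x / d))⁻¹ ^ 2 := by
        field_simp
      have e2 : 1 / (c * L) ^ 2 = (c * L)⁻¹ ^ 2 := by field_simp
      simp only [zero_add, Nat.Ioc_succ_singleton, Finset.sum_singleton, mul_one]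
      rw [e1, e2]
      linarith
    | succ J ih =>
      intro hJ
      have ih := ih (le_trans (Nat.mul_le_mul_left d (by omega)) hJ)
      rw [← Finset.insert_Ioc_right_eq_Ioc_add_one (by omega : 0 ≤ J + 1), Finset.sum_insert (by simp)]
      have hdM : ((d * (J + 1 + 1) : ℕ) : ℝ) ≤ M := by exact_mod_cast hJ
      have hs := step_ineq x ((d * (J + 1) : ℕ) : ℝ) ((d * (J + 1 + 1) : ℕ) : ℝ)
        (by push_cast; positivity) (by push_cast; nlinarith) hx0
        (hL.trans (hlog _ (by push_cast; nlinarith [(by positivity : (0 : ℝ) ≤ J)]) hdM))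
      have e : ((d * (J + 1 + 1) : ℕ) : ℝ) - ((d * (J + 1) : ℕ) : ℝ) = d := by push_cast; ring
      rw [e] at hs
      linarith
  have hre : ∑ m ∈ Ioc 0 M with d ∣ m, 1 / ((m : ℝ) * Real.log (x / m) ^ 2)
      = ∑ j ∈ Ioc 0 (M / d), 1 / (((d * j : ℕ) : ℝ) * Real.log (x / ((d * j : ℕ) : ℝ)) ^ 2) := by
    symm
    apply Finset.sum_bij (fun j _ => d * j)
    · intro j hj
      rw [Finset.mem_Ioc] at hj
      rw [Finset.mem_filter, Finset.mem_Ioc]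
      refine ⟨⟨Nat.mul_pos hd hj.1, ?_⟩, Dvd.intro _ rfl⟩
      exact (Nat.mul_le_mul_left d hj.2).trans (Nat.mul_div_le M d)
    · intro a _ b _ h
      exact Nat.eq_of_mul_eq_mul_left hd h
    · intro m hm
      rw [Finset.mem_filter, Finset.mem_Ioc] at hm
      obtain ⟨⟨h1, h2⟩, j, rfl⟩ := hm
      refine ⟨j, ?_, rfl⟩
      rw [Finset.mem_Ioc]
      refine ⟨Nat.pos_of_mul_pos_left h1, ?_⟩
      rw [Nat.le_div_iff_mul_le hd, mul_comm]; exact h2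
    · intros; rfl
  rw [hre, le_div_iff₀ (by linarith), mul_comm, Finset.mul_sum]
  have hcinv : 0 ≤ 1 / c - 1 := by
    rw [sub_nonneg, le_div_iff₀ hc0]; linarith
  rcases Nat.eq_zero_or_pos (M / d) with h0 | hpos
  · rw [h0]; simp
    have : 0 ≤ (1 / c - 1) / L := by positivity
    rw [one_div] at this
    positivity
  · obtain ⟨J, hJ⟩ : ∃ J, M / d = J + 1 := ⟨M / d - 1, by omega⟩
    rw [hJ]
    have hle : d * (J + 1) ≤ M := by rw [← hJ]; exact Nat.mul_div_le M d
    refine (key J hle).trans ?_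
    have hleR : ((d * (J + 1) : ℕ) : ℝ) ≤ M := by exact_mod_cast hle
    have g1 := hlog _ (by push_cast; nlinarith [(by positivity : (0 : ℝ) ≤ J)]) hleR
    have g2 : 1 / Real.log (x / ((d * (J + 1) : ℕ) : ℝ)) ≤ 1 / (c * L) :=
      one_div_le_one_div_of_le (by positivity) g1
    have g3 : 1 / L ≤ 1 / Real.log (x / d) := by
      have hdM : (d : ℝ) ≤ M := by
        have : d ≤ M := le_trans (Nat.le_mul_of_pos_right d (by omega)) hle
        exact_mod_cast this
      have := hlog d hd' hdM
      apply one_div_le_one_div_of_le (by linarith)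
      apply Real.log_le_log (by positivity)
      exact div_le_self hx0.le hd'
    have e : (1 / c - 1) / L = 1 / (c * L) - 1 / L := by field_simp
    rw [e]
    linarith

end SieveAux

namespace SieveAux

theorem Pplus_spec (n : ℕ) (h : 2 ≤ n) : (Pplus n).Prime ∧ Pplus n ∣ n := by
  unfold Pplus
  rw [if_neg (by omega)]
  have hne : n.primeFactors.Nonempty := Nat.nonempty_primeFactors.mpr (by omega)
  obtain ⟨q, hq, he⟩ := Finset.exists_mem_eq_sup _ hne (id : ℕ → ℕ)
  rw [he]
  exact ⟨Nat.prime_of_mem_primeFactors hq, Nat.dvd_of_mem_primeFactors hq⟩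

theorem reduction (c x : ℝ) (hc1 : c < 1) (hx : 1 < x) (h2 : 2 < x ^ c)
    (z : ℕ → ℕ) (hz : ∀ m, 1 ≤ m → (z m : ℝ) < x ^ c) :
    T' c x ≤ ∑ m ∈ Ioc 0 ⌊x ^ (1 - c)⌋₊ with 2 ∣ m,
      ((Ioc 0 ⌊x / m⌋₊).filter
        (fun n => ∀ p : ℕ, p.Prime → p ≤ z m → ¬ (p ∣ n ∨ p ∣ m * n + 1))).card := by
  have hx0 : 0 < x := by linarith
  unfold T'
  refine le_trans (Finset.card_le_card (t := ((Ioc 0 ⌊x ^ (1 - c)⌋₊).filter (fun m => 2 ∣ m)).biUnion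
    (fun m => ((Ioc 0 ⌊x / m⌋₊).filter
        (fun n => ∀ p : ℕ, p.Prime → p ≤ z m → ¬ (p ∣ n ∨ p ∣ m * n + 1))).image
          (fun n => m * n + 1))) ?_) ?_
  · intro p hp
    simp only [Finset.mem_filter, Finset.mem_range] at hp
    obtain ⟨hpx, hpp, hle⟩ := hp
    have hpx' : (p : ℝ) ≤ x := (Nat.le_floor_iff hx0.le).mp (by omega)
    have hq2 : (2 : ℝ) < (Pplus (p - 1) : ℝ) := lt_of_lt_of_le h2 hle
    have hq2' : 2 < Pplus (p - 1) := by exact_mod_cast hq2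
    have hp3 : 2 ≤ p - 1 := by
      by_contra hcon
      have hp2 : p - 1 = 1 := by have := hpp.two_le; omega
      rw [hp2] at hq2'
      simp [Pplus] at hq2'
    obtain ⟨hqp, hqd⟩ := Pplus_spec (p - 1) hp3
    set q := Pplus (p - 1) with hq
    obtain ⟨m, hm⟩ := hqd
    have hmpos : 0 < m := by
      rcases Nat.eq_zero_or_pos m with h | h
      · subst h; omega
      · exact h
    have hpe : m * q + 1 = p := by
      have : p - 1 = m * q := by rw [hm, mul_comm]
      omega
    have hmq : ((m : ℝ)) * q ≤ x := by
      have : m * q ≤ p := by omega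
      calc (m : ℝ) * q = ((m * q : ℕ) : ℝ) := by push_cast; ring
        _ ≤ p := by exact_mod_cast this
        _ ≤ x := hpx'
    have hm0 : (0 : ℝ) < m := by exact_mod_cast hmpos
    have hqlt : q < p := by
      have : q ≤ m * q := Nat.le_mul_of_pos_left q hmpos
      omega
    have h2m : 2 ∣ m := by
      have hpodd : ¬ 2 ∣ p := by
        intro h
        have := (Nat.prime_dvd_prime_iff_eq Nat.prime_two hpp).mp h
        omega
      have hqodd : ¬ 2 ∣ q := by
        intro h
        have := (Nat.prime_dvd_prime_iff_eq Nat.prime_two hqp).mp h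
        omega
      have : 2 ∣ m * q := by omega
      exact (Nat.prime_two.dvd_mul.mp this).resolve_right hqodd
    simp only [Finset.mem_biUnion, Finset.mem_filter, Finset.mem_Ioc, Finset.mem_image]
    refine ⟨m, ⟨⟨hmpos, ?_⟩, h2m⟩, q, ⟨⟨hqp.pos, ?_⟩, ?_⟩, hpe⟩
    · apply Nat.le_floor
      rw [Real.rpow_sub hx0, Real.rpow_one, le_div_iff₀ (by linarith)]
      exact (mul_le_mul_of_nonneg_left hle hm0.le).trans hmq
    · apply Nat.le_floor
      rw [le_div_iff₀ hm0]
      linarith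
    · intro r hr hrz hor
      have hrq : r < q := by
        have h1 : (r : ℝ) ≤ z m := by exact_mod_cast hrz
        have : (r : ℝ) < q := h1.trans_lt ((hz m hmpos).trans_le hle)
        exact_mod_cast this
      rw [hpe] at hor
      rcases hor with h | h
      · have := (Nat.prime_dvd_prime_iff_eq hr hqp).mp h
        omega
      · have := (Nat.prime_dvd_prime_iff_eq hr hpp).mp h
        omega
  · refine Finset.card_biUnion_le.trans (Finset.sum_le_sum fun m _ => Finset.card_image_le)

end SieveAux

namespace SieveAux

theorem choose_param (ε : ℝ) (hε : 0 < ε) : ∃ n : ℕ, 8 < n ∧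
    Real.exp (2 / (n : ℝ)) / (1 - 4 * (1 / (n : ℝ))) ^ 2 ≤ 1 + ε := by
  have h1 : Filter.Tendsto (fun n : ℕ => (1 : ℝ) / n) Filter.atTop (nhds 0) :=
    tendsto_one_div_atTop_nhds_zero_nat
  have h2 : ContinuousAt (fun t : ℝ => Real.exp (2 * t) / (1 - 4 * t) ^ 2) 0 := by
    apply ContinuousAt.div
    · fun_prop
    · fun_prop
    · norm_num
  have h3 := h2.tendsto.comp h1
  have h4 : ∀ᶠ n : ℕ in Filter.atTop,
      ((fun t : ℝ => Real.exp (2 * t) / (1 - 4 * t) ^ 2) ∘ fun n : ℕ => (1 : ℝ) / n) n < 1 + ε := by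
    apply h3.eventually_lt_const
    norm_num
    exact hε
  obtain ⟨n, hn, hn8⟩ := (h4.and (Filter.eventually_gt_atTop 8)).exists
  refine ⟨n, hn8, ?_⟩
  have e : (2 : ℝ) / n = 2 * (1 / n) := by ring
  rw [e]
  exact hn.le

theorem level_bound (δ : ℝ) (hδ : 0 < δ) (hδ' : δ < 1 / 4) (W : ℕ) (hW : 0 < W) :
    ∃ Y : ℝ, 1 < Y ∧ ∀ y, Y ≤ y → 1 ≤ ⌊y ^ (1 / 2 - δ)⌋₊ / W ∧
      (1 / 2 - 2 * δ) * Real.log y ≤ Real.log ((⌊y ^ (1 / 2 - δ)⌋₊ / W : ℕ) : ℝ) := by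
  have h1 := (tendsto_rpow_atTop hδ).eventually_ge_atTop (3 * (W : ℝ))
  obtain ⟨Y, hY⟩ := Filter.eventually_atTop.mp h1
  refine ⟨max Y 2, lt_of_lt_of_le (by norm_num) (le_max_right _ _), ?_⟩
  intro y hy
  have hy2 : (2 : ℝ) ≤ y := (le_max_right _ _).trans hy
  have hy0 : 0 < y := by linarith
  have h2 := hY y ((le_max_left _ _).trans hy)
  have hW' : (1 : ℝ) ≤ W := by exact_mod_cast hW
  set b := y ^ (1 / 2 - 2 * δ) with hb
  have hb1 : 1 ≤ b := Real.one_le_rpow (by linarith) (by linarith)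
  have e : y ^ (1 / 2 - δ) = b * y ^ δ := by
    rw [hb, ← Real.rpow_add hy0]; congr 1; ring
  have h3 : 3 * W * b ≤ y ^ (1 / 2 - δ) := by
    rw [e]; nlinarith
  set z := ⌊y ^ (1 / 2 - δ)⌋₊ with hz
  have h4 : y ^ (1 / 2 - δ) < z + 1 := Nat.lt_floor_add_one _
  have h5 : z < W * (z / W) + W := by
    have := Nat.div_add_mod z W
    have := Nat.mod_lt z hW
    omega
  have h5' : (z : ℝ) + 1 ≤ W * ((z / W : ℕ) : ℝ) + W := by exact_mod_cast h5
  have h6 : b ≤ ((z / W : ℕ) : ℝ) := by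
    have : (W : ℝ) * b ≤ W * ((z / W : ℕ) : ℝ) := by nlinarith
    exact le_of_mul_le_mul_left this (by linarith)
  refine ⟨?_, ?_⟩
  · have : (1 : ℝ) ≤ ((z / W : ℕ) : ℝ) := hb1.trans h6
    exact_mod_cast this
  · rw [← Real.log_rpow hy0]
    exact Real.log_le_log (by linarith) h6

theorem count_bound (δ : ℝ) (hδ : 0 < δ) (hδ' : δ < 1 / 4) (m w : ℕ) (hm : 2 ∣ m) (hm0 : m ≠ 0)
    (y : ℝ) (hy : 1 < y)
    (h1 : 1 ≤ ⌊y ^ (1 / 2 - δ)⌋₊ / (∏ p ∈ PR w, p))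
    (h2 : (1 / 2 - 2 * δ) * Real.log y ≤
      Real.log ((⌊y ^ (1 / 2 - δ)⌋₊ / (∏ p ∈ PR w, p) : ℕ) : ℝ)) :
    (((Ioc 0 ⌊y⌋₊).filter (fun n => ∀ p : ℕ, p.Prime → p ≤ ⌊y ^ (1 / 2 - δ)⌋₊ →
      ¬ (p ∣ n ∨ p ∣ m * n + 1))).card : ℝ) ≤
      8 / (1 - 4 * δ) ^ 2 * (ff w m * (y / Real.log y ^ 2))
        + y * y ^ (-(2 * δ)) * (1 + Real.log y) ^ 2 := by
  set z := ⌊y ^ (1 / 2 - δ)⌋₊ with hz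
  set W := ∏ p ∈ PR w, p with hW
  have hy0 : 0 < y := by linarith
  have hz1 : 1 ≤ z := h1.trans (Nat.div_le_self _ _)
  have hz1' : (1 : ℝ) ≤ z := by exact_mod_cast hz1
  have hly : 0 < Real.log y := Real.log_pos hy
  refine (sieve_pair m ⌊y⌋₊ z hm hz1).trans (add_le_add ?_ ?_)
  · have hS := SS_lower m w z (z / W) hm hm0 h1 (Nat.mul_div_le z W)
    set S := SS (LV (PR z) z) (hh m) with hSdef
    have hSpos : 0 < S := by
      apply SS_pos
      · intro D hD p hp
        exact hh_pos hm (mem_PR.mp ((mem_LV.mp hD).1 hp)).1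
      · rw [mem_LV]; simpa using hz1
    set P := ∏ p ∈ PR w, (1 + hh m p) with hP
    set G := ∏ p ∈ PR w ∪ m.primeFactors, (1 + gs p) with hG
    have hPpos : 0 < P := by
      apply Finset.prod_pos
      intro p hp
      have := hh_pos (m := m) hm (mem_PR.mp hp).1
      linarith
    have hff : ff w m = G / P := rfl
    have hl : ((1 / 2 - 2 * δ) * Real.log y) ^ 2 ≤ Real.log ((z / W : ℕ) : ℝ) ^ 2 :=
      pow_le_pow_left₀ (mul_nonneg (by linarith) hly.le) h2 2
    have hS2 : P * (((1 / 2 - 2 * δ) * Real.log y) ^ 2 / 2) ≤ G * S := by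
      refine le_trans ?_ hS
      gcongr
    have hN : (⌊y⌋₊ : ℝ) ≤ y := Nat.floor_le hy0.le
    have hd4 : 0 < 1 - 4 * δ := by linarith
    have e : 8 / (1 - 4 * δ) ^ 2 * (ff w m * (y / Real.log y ^ 2)) =
        y * G / (P * (((1 / 2 - 2 * δ) * Real.log y) ^ 2 / 2)) := by
      have : (1 / 2 - 2 * δ) = (1 - 4 * δ) / 2 := by ring
      rw [hff, this]
      field_simp
      ring
    have hdpos : 0 < P * (((1 / 2 - 2 * δ) * Real.log y) ^ 2 / 2) := by
      have : 0 < 1 / 2 - 2 * δ := by linarith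
      positivity
    rw [e]
    refine (div_le_div_of_nonneg_right hN hSpos.le).trans ?_
    rw [div_le_div_iff₀ hSpos hdpos]
    calc _ ≤ y * (G * S) := mul_le_mul_of_nonneg_left hS2 hy0.le
      _ = _ := by ring
  · have hzle : (z : ℝ) ≤ y ^ (1 / 2 - δ) := Nat.floor_le (by positivity)
    have hlz : Real.log z ≤ Real.log y := by
      apply Real.log_le_log (by linarith)
      refine hzle.trans ?_
      calc y ^ (1 / 2 - δ) ≤ y ^ (1 : ℝ) :=
            Real.rpow_le_rpow_of_exponent_le hy.le (by linarith)
        _ = y := Real.rpow_one y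
    have hlz0 : 0 ≤ Real.log z := Real.log_nonneg hz1'
    have e : y * y ^ (-(2 * δ)) = (y ^ (1 / 2 - δ)) ^ 2 := by
      rw [← Real.rpow_natCast, ← Real.rpow_mul hy0.le, ← Real.rpow_one_add' hy0.le (by
        intro h; linarith)]
      congr 1
      push_cast
      ring
    rw [e, mul_pow]
    gcongr

theorem harm_bound (M : ℕ) : ∑ m ∈ Ioc 0 M, (1 : ℝ) / m ≤ 1 + Real.log M := by
  have h := harmonic_le_one_add_log M
  rw [harmonic_eq_sum_Icc] at h
  push_cast at h
  have e : Icc 1 M = Ioc 0 M := by ext; simp [Nat.succ_le_iff]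
  rw [e] at h
  simpa [one_div] using h

theorem T_bound (c : ℝ) (hc1 : 8 / 9 ≤ c) (hc2 : c < 1) (n : ℕ) (hn : 8 < n) :
    ∃ X : ℝ, ∀ x ≥ X, (T' c x : ℝ) ≤
      8 * (Real.exp (2 / (n : ℝ)) / (1 - 4 * (1 / (n : ℝ))) ^ 2) * x *
        ((1 / c - 1) / Real.log x + 1 / (c * Real.log x) ^ 2)
      + x * x ^ (-(2 * (1 / (n : ℝ)) * c)) * (1 + Real.log x) ^ 3 := by
  set δ : ℝ := 1 / n with hδdef
  have hn' : (8 : ℝ) < n := by exact_mod_cast hn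
  have hδ : 0 < δ := by positivity
  have hδ' : δ < 1 / 4 := by
    rw [hδdef]
    apply one_div_lt_one_div_of_lt <;> linarith
  have hc0 : 0 < c := by linarith
  set W := ∏ p ∈ PR (n + 1), p with hW
  have hWpos : 0 < W := Finset.prod_pos fun p hp => (mem_PR.mp hp).1.pos
  obtain ⟨Y, hY1, hY⟩ := level_bound δ hδ hδ' W hWpos
  have ev1 := (tendsto_rpow_atTop hc0).eventually_ge_atTop (max Y 3)
  have ev2 := Real.tendsto_log_atTop.eventually_ge_atTop (2 / c)
  obtain ⟨X, hX⟩ := Filter.eventually_atTop.mp (ev1.and (ev2.and (Filter.eventually_gt_atTop 1)))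
  refine ⟨X, ?_⟩
  intro x hx
  obtain ⟨hxc, hxl, hx1⟩ := hX x hx
  have hx0 : 0 < x := by linarith
  have hxY : Y ≤ x ^ c := (le_max_left _ _).trans hxc
  have hx3 : 3 ≤ x ^ c := (le_max_right _ _).trans hxc
  set L := Real.log x with hL
  have hLpos : 0 < L := Real.log_pos hx1
  have hcL : 2 ≤ c * L := by
    rw [div_le_iff₀ hc0] at hxl; linarith
  set M := ⌊x ^ (1 - c)⌋₊ with hM
  have hMle : (M : ℝ) ≤ x ^ (1 - c) := Nat.floor_le (by positivity)
  have hyl : ∀ m : ℕ, 1 ≤ m → m ≤ M → x ^ c ≤ x / m := by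
    intro m h1 h2
    have h1' : (1 : ℝ) ≤ m := by exact_mod_cast h1
    have h3 : (m : ℝ) ≤ x ^ (1 - c) := le_trans (by exact_mod_cast h2) hMle
    rw [Real.rpow_sub hx0, Real.rpow_one, le_div_iff₀ (by linarith)] at h3
    rw [le_div_iff₀ (by linarith)]
    linarith
  have hyu : ∀ m : ℕ, 1 ≤ m → x / m ≤ x := fun m h1 =>
    div_le_self hx0.le (by exact_mod_cast h1)
  have hred := reduction c x hc2 hx1 (by linarith) (fun m => ⌊(x / m) ^ (1 / 2 - δ)⌋₊) (by
    intro m hm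
    refine lt_of_le_of_lt (Nat.floor_le (by positivity)) ?_
    calc (x / m) ^ (1 / 2 - δ) ≤ x ^ (1 / 2 - δ) :=
          Real.rpow_le_rpow (by positivity) (hyu m hm) (by linarith)
      _ < x ^ c := Real.rpow_lt_rpow_of_exponent_lt hx1 (by linarith))
  have hred' : (T' c x : ℝ) ≤ ∑ m ∈ Ioc 0 M with 2 ∣ m,
      (8 / (1 - 4 * δ) ^ 2 * x * (ff (n + 1) m * (1 / ((m : ℝ) * Real.log (x / m) ^ 2)))
        + x * x ^ (-(2 * δ * c)) * (1 + L) ^ 2 * (1 / m)) := by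
    refine (Nat.cast_le.mpr hred).trans ?_
    rw [Nat.cast_sum]
    apply Finset.sum_le_sum
    intro m hm
    rw [Finset.mem_filter, Finset.mem_Ioc] at hm
    obtain ⟨⟨hm0, hmM⟩, h2m⟩ := hm
    have hy1 := hyl m hm0 hmM
    have hy2 := hyu m hm0
    obtain ⟨l1, l2⟩ := hY (x / m) (hxY.trans hy1)
    have hm0' : (0 : ℝ) < m := by exact_mod_cast hm0
    have hy1' : 1 < x / m := by linarith
    refine (count_bound δ hδ hδ' m (n + 1) h2m hm0.ne' (x / m) hy1' l1 l2).trans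
      (add_le_add (le_of_eq ?_) ?_)
    · have : 0 < Real.log (x / m) := Real.log_pos hy1'
      have : 0 < 1 - 4 * δ := by linarith
      field_simp
    · have e1 : (x / m) ^ (-(2 * δ)) ≤ x ^ (-(2 * δ * c)) := by
        calc (x / m) ^ (-(2 * δ)) ≤ (x ^ c) ^ (-(2 * δ)) :=
              Real.rpow_le_rpow_of_nonpos (by linarith) hy1 (by linarith)
          _ = _ := by rw [← Real.rpow_mul hx0.le]; congr 1; ring
      have e2 : Real.log (x / m) ≤ L := Real.log_le_log (by linarith) hy2
      have e3 : 0 ≤ Real.log (x / m) := Real.log_nonneg hy1'.le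
      calc x / m * (x / m) ^ (-(2 * δ)) * (1 + Real.log (x / m)) ^ 2
          ≤ x / m * x ^ (-(2 * δ * c)) * (1 + L) ^ 2 := by gcongr
        _ = _ := by ring
  refine hred'.trans ?_
  rw [Finset.sum_add_distrib, ← Finset.mul_sum, ← Finset.mul_sum]
  have hd4 : 0 < 1 - 4 * δ := by linarith
  have hK0 : 0 ≤ (1 / c - 1) / L + 1 / (c * L) ^ 2 := by
    have : 0 ≤ 1 / c - 1 := by
      rw [sub_nonneg, le_div_iff₀ hc0]; linarith
    positivity
  apply add_le_add
  · have h := sum_ff (n + 1) M (by omega) (fun m => 1 / ((m : ℝ) * Real.log (x / m) ^ 2))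
      (fun m => by positivity) _ hK0
      (fun d hd => phi_sum x c hc0 hc2 hx1 hcL M hMle d hd)
    have e : ((n + 1 : ℕ) : ℝ) - 1 = n := by push_cast; ring
    rw [e] at h
    calc _ ≤ 8 / (1 - 4 * δ) ^ 2 * x * (Real.exp (2 / (n : ℝ)) *
          ((1 / c - 1) / L + 1 / (c * L) ^ 2)) :=
          mul_le_mul_of_nonneg_left h (by positivity)
      _ = _ := by ring
  · have h1 : ∑ m ∈ Ioc 0 M with 2 ∣ m, (1 : ℝ) / m ≤ 1 + L := by
      refine (Finset.sum_le_sum_of_subset_of_nonneg (Finset.filter_subset _ _)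
        (fun m _ _ => by positivity)).trans ((harm_bound M).trans ?_)
      rcases Nat.eq_zero_or_pos M with h | h
      · rw [h]; simp; exact hLpos.le
      · have : Real.log M ≤ L := by
          apply Real.log_le_log (by exact_mod_cast h)
          refine hMle.trans ?_
          calc x ^ (1 - c) ≤ x ^ (1 : ℝ) :=
                Real.rpow_le_rpow_of_exponent_le hx1.le (by linarith)
            _ = x := Real.rpow_one x
        linarith
    calc _ ≤ x * x ^ (-(2 * δ * c)) * (1 + L) ^ 2 * (1 + L) :=
          mul_le_mul_of_nonneg_left h1 (by positivity)
      _ = _ := by ring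

end SieveAux

/-- For `8/9 ≤ c < 1`, `T'_c(x) ≤ (1+o(1))·8·(1/c − 1)·x/log x`. -/
theorem T'_upper_bound (c : ℝ) (hc1 : 8 / 9 ≤ c) (hc2 : c < 1) :
    ∀ ε > (0 : ℝ), ∃ x₀ : ℝ, ∀ x ≥ x₀,
      (T' c x : ℝ) ≤ (1 + ε) * 8 * (1 / c - 1) * x / Real.log x := by
  intro ε hε
  obtain ⟨n, hn, hA⟩ := SieveAux.choose_param (ε / 2) (by linarith)
  obtain ⟨X, hX⟩ := SieveAux.T_bound c hc1 hc2 n hn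
  set A := Real.exp (2 / (n : ℝ)) / (1 - 4 * (1 / (n : ℝ))) ^ 2 with hAdef
  have hn' : (8 : ℝ) < n := by exact_mod_cast hn
  have hc0 : 0 < c := by linarith
  set s : ℝ := 2 * (1 / (n : ℝ)) * c with hs
  have hs0 : 0 < s := by positivity
  have hk : 0 < 1 / c - 1 := by
    rw [sub_pos, lt_div_iff₀ hc0]; linarith
  set k := 1 / c - 1 with hkdef
  set η := ε * k with hη
  have hη0 : 0 < η := by positivity
  have ev1 := Real.tendsto_log_atTop.eventually_ge_atTop (max 1 (8 * A / (c ^ 2 * η)))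
  have ev2 := (isLittleO_log_rpow_rpow_atTop (s := s) (4 : ℝ) hs0).bound
    (show 0 < η / 8 by positivity)
  obtain ⟨X', hX'⟩ := Filter.eventually_atTop.mp (ev1.and (ev2.and (Filter.eventually_gt_atTop 1)))
  refine ⟨max X X', ?_⟩
  intro x hx
  have h1 := hX x ((le_max_left _ _).trans hx)
  obtain ⟨hl, ho, hx1⟩ := hX' x ((le_max_right _ _).trans hx)
  have hx0 : 0 < x := by linarith
  set L := Real.log x with hL
  have hL1 : 1 ≤ L := (le_max_left _ _).trans hl
  have hL2 : 8 * A / (c ^ 2 * η) ≤ L := (le_max_right _ _).trans hl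
  have hL0 : 0 < L := by linarith
  rw [Real.norm_of_nonneg (by positivity), Real.norm_of_nonneg (by positivity)] at ho
  have e4 : L ^ (4 : ℝ) = L ^ 4 := by
    rw [← Real.rpow_natCast]; norm_num
  rw [e4] at ho
  have hxs : 0 < x ^ s := by positivity
  refine h1.trans ?_
  have b1 : 8 * A / (c ^ 2 * L) ≤ η := by
    rw [div_le_iff₀ (by positivity)] at hL2 ⊢
    linarith
  have b2 : x ^ (-s) * (1 + L) ^ 3 * L ≤ η := by
    rw [Real.rpow_neg hx0.le]
    have : (1 + L) ^ 3 ≤ (2 * L) ^ 3 := by gcongr; linarith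
    calc (x ^ s)⁻¹ * (1 + L) ^ 3 * L ≤ (x ^ s)⁻¹ * (2 * L) ^ 3 * L := by gcongr
      _ = 8 * L ^ 4 / x ^ s := by field_simp; norm_num
      _ ≤ η := by rw [div_le_iff₀ hxs]; linarith
  have e : 8 * A * x * (k / L + 1 / (c * L) ^ 2) + x * x ^ (-s) * (1 + L) ^ 3
      = (8 * A * k + 8 * A / (c ^ 2 * L) + x ^ (-s) * (1 + L) ^ 3 * L) * x / L := by
    field_simp
  rw [e]
  have b3 : 8 * A * k ≤ 8 * (1 + ε / 2) * k := by gcongr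
  apply div_le_div_of_nonneg_right _ hL0.le
  apply mul_le_mul_of_nonneg_right _ hx0.le
  have : η = ε * k := rfl
  nlinarith
end

section
/- There exist constants ρ > 0 and c_ρ > 0 such that for all sufficiently large x: #{p ≤ (log x)^{1+ρ} : p prime, P⁺(p − 1) ≤ log x} > c_ρ · (log x)^{1+ρ}/log log x. -/
open Real Finset

attribute [local instance] Classical.propDecidable

section Selberg

variable {ι : Type*} [DecidableEq ι]

lemma alt_interval (W V : Finset ι) (h : W ⊆ V) :
    ∑ T ∈ V.powerset with W ⊆ T, (-1 : ℝ) ^ T.card = if W = V then (-1 : ℝ) ^ W.card else 0 := by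
  have h1 : ∑ T ∈ V.powerset with W ⊆ T, (-1 : ℝ) ^ T.card
      = ∑ T ∈ (V \ W).powerset, (-1 : ℝ) ^ W.card * (-1 : ℝ) ^ T.card := by
    refine Finset.sum_bij' (fun T _ => T \ W) (fun T _ => W ∪ T) ?_ ?_ ?_ ?_ ?_
    · intro T hT
      simp only [mem_filter, mem_powerset] at hT ⊢
      exact Finset.sdiff_subset_sdiff hT.1 le_rfl
    · intro T hT
      simp only [mem_filter, mem_powerset] at hT ⊢
      exact ⟨Finset.union_subset h (hT.trans sdiff_subset), subset_union_left⟩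
    · intro T hT
      simp only [mem_filter, mem_powerset] at hT
      exact Finset.union_sdiff_of_subset hT.2
    · intro T hT
      simp only [mem_powerset] at hT
      ext x
      have := @hT x
      simp only [mem_sdiff, mem_union] at *
      tauto
    · intro T hT
      simp only [mem_filter, mem_powerset] at hT
      rw [← pow_add, add_comm, Finset.card_sdiff_add_card_eq_card hT.2]
  rw [h1, ← Finset.mul_sum]
  have h2 := Finset.sum_powerset_neg_one_pow_card (x := V \ W)
  have h3 : ∑ T ∈ (V \ W).powerset, (-1 : ℝ) ^ T.card = if V \ W = ∅ then 1 else 0 := by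
    have := congrArg (fun z : ℤ => (z : ℝ)) h2
    push_cast at this
    rw [this]
  rw [h3]
  by_cases hWV : W = V
  · subst hWV; simp
  · have : V \ W ≠ ∅ := by
      intro h0
      exact hWV (h.antisymm (Finset.sdiff_eq_empty_iff_subset.1 h0))
    simp [hWV, this]

/-- Selberg's upper bound sieve, over a down-closed family of finite sets. -/
lemma selberg_finset {κ : Type*} (F : Finset (Finset ι))
    (hdown : ∀ T ∈ F, ∀ U, U ⊆ T → U ∈ F) (hne : ∅ ∈ F) (ν : ι → ℝ)
    (hν0 : ∀ T ∈ F, ∀ r ∈ T, 0 < ν r) (hν1 : ∀ T ∈ F, ∀ r ∈ T, ν r < 1)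
    (A : Finset κ) (B : κ → Finset ι) (X : ℝ) (w : Finset ι → ℝ)
    (hR : ∀ T ∈ F, ∀ U ∈ F, |((#{n ∈ A | T ∪ U ⊆ B n} : ℕ) : ℝ) - X * ∏ r ∈ T ∪ U, ν r|
      ≤ w T * w U) :
    ((#{n ∈ A | B n = ∅} : ℕ) : ℝ) ≤ X / (∑ T ∈ F, ∏ r ∈ T, ν r / (1 - ν r))
      + (∑ T ∈ F, |w T| / ∏ r ∈ T, ν r) ^ 2 := by
  set g : Finset ι → ℝ := fun T => ∏ r ∈ T, ν r / (1 - ν r) with hg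
  set N : Finset ι → ℝ := fun T => ∏ r ∈ T, ν r with hN
  set S : ℝ := ∑ T ∈ F, g T with hS
  have hgpos : ∀ T ∈ F, 0 < g T := fun T hT => Finset.prod_pos fun r hr =>
    div_pos (hν0 T hT r hr) (sub_pos.2 (hν1 T hT r hr))
  have hNpos : ∀ T ∈ F, 0 < N T := fun T hT => Finset.prod_pos fun r hr => hν0 T hT r hr
  have hSpos : 0 < S := Finset.sum_pos hgpos ⟨∅, hne⟩
  set lam : Finset ι → ℝ := fun T => (-1) ^ T.card / N T * ((∑ W ∈ F with T ⊆ W, g W) / S) with hlam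
  have hlam0 : lam ∅ = 1 := by
    simp only [hlam, hN]
    simp
    exact div_self hSpos.ne'
  have hlamabs : ∀ T ∈ F, |lam T| ≤ 1 / N T := by
    intro T hT
    simp only [hlam]
    rw [abs_mul, abs_div, abs_pow, abs_neg, abs_one, one_pow, abs_of_pos (hNpos T hT)]
    have h1 : |(∑ W ∈ F with T ⊆ W, g W) / S| ≤ 1 := by
      rw [abs_of_nonneg]
      · rw [div_le_one hSpos]
        exact Finset.sum_le_sum_of_subset_of_nonneg (Finset.filter_subset _ _)
          (fun i hi _ => (hgpos i hi).le)
      · exact div_nonneg (Finset.sum_nonneg fun i hi => (hgpos i (Finset.mem_filter.1 hi).1).le)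
          hSpos.le
    exact mul_le_of_le_one_right (div_pos one_pos (hNpos T hT)).le h1
  have hinv : ∀ W ∈ F, ∑ T ∈ F with W ⊆ T, N T * lam T = (-1) ^ W.card * g W / S := by
    intro W hW
    have e1 : ∀ T ∈ F.filter (W ⊆ ·), N T * lam T
        = ∑ V ∈ F, if T ⊆ V then (-1) ^ T.card * (g V / S) else 0 := by
      intro T hT
      have := (hNpos T (Finset.mem_filter.1 hT).1).ne'
      simp only [hlam]
      rw [← Finset.sum_filter, ← Finset.mul_sum, ← Finset.sum_div]
      field_simp
    rw [Finset.sum_congr rfl e1, Finset.sum_comm]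
    have e2 : ∀ V ∈ F, (∑ T ∈ F with W ⊆ T, if T ⊆ V then (-1 : ℝ) ^ T.card * (g V / S) else 0)
        = if W = V then (-1) ^ W.card * (g V / S) else 0 := by
      intro V hV
      rw [← Finset.sum_filter, ← Finset.sum_mul]
      have e3 : (F.filter (W ⊆ ·)).filter (· ⊆ V) = V.powerset.filter (W ⊆ ·) := by
        ext T
        simp only [mem_filter, mem_powerset]
        constructor
        · rintro ⟨⟨a, b⟩, c⟩; exact ⟨c, b⟩
        · rintro ⟨c, b⟩; exact ⟨⟨hdown V hV T c, b⟩, c⟩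
      rw [e3]
      by_cases hWV : W ⊆ V
      · rw [alt_interval W V hWV]
        split_ifs <;> simp
      · have : V.powerset.filter (W ⊆ ·) = ∅ := by
          ext T
          simp only [mem_filter, mem_powerset, notMem_empty, iff_false]
          rintro ⟨a, b⟩; exact hWV (b.trans a)
        rw [this]
        have : W ≠ V := by rintro rfl; exact hWV le_rfl
        simp [this]
    rw [Finset.sum_congr rfl e2, Finset.sum_ite_eq]
    rw [if_pos hW]; ring
  have hunion : ∀ T ∈ F, ∀ U ∈ F, N (T ∪ U) = N T * N U * ∑ W ∈ F with W ⊆ T ∧ W ⊆ U, 1 / g W := by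
    intro T hT U hU
    have e1 : F.filter (fun W => W ⊆ T ∧ W ⊆ U) = (T ∩ U).powerset := by
      ext W
      simp only [mem_filter, mem_powerset, subset_inter_iff]
      constructor
      · exact fun h => h.2
      · exact fun h => ⟨hdown T hT W h.1, h⟩
    have hI : T ∩ U ∈ F := hdown T hT _ inter_subset_left
    have e2 : ∑ W ∈ (T ∩ U).powerset, 1 / g W = 1 / N (T ∩ U) := by
      have := Finset.prod_one_add (f := fun r => (1 - ν r) / ν r) (T ∩ U)
      have e3 : ∀ W, ∏ r ∈ W, (1 - ν r) / ν r = 1 / g W := by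
        intro W
        simp only [hg, one_div]
        rw [← Finset.prod_inv_distrib]
        simp
      simp only [e3] at this
      rw [← this]
      simp only [hN, one_div]
      rw [← Finset.prod_inv_distrib]
      refine Finset.prod_congr rfl fun r hr => ?_
      have := (hν0 _ hI r hr).ne'
      field_simp
      ring
    rw [e1, e2]
    have := (hNpos _ hI).ne'
    field_simp
    exact Finset.prod_union_inter
  have hquad : ∑ T ∈ F, ∑ U ∈ F, lam T * lam U * N (T ∪ U) = 1 / S := by
    have e1 : ∀ T ∈ F, ∀ U ∈ F, lam T * lam U * N (T ∪ U)
        = ∑ W ∈ F, (if W ⊆ T then N T * lam T else 0) * (if W ⊆ U then N U * lam U else 0)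
          * (1 / g W) := by
      intro T hT U hU
      rw [hunion T hT U hU, Finset.sum_filter, Finset.mul_sum, Finset.mul_sum]
      refine Finset.sum_congr rfl fun W _ => ?_
      by_cases h1 : W ⊆ T <;> by_cases h2 : W ⊆ U <;> simp [h1, h2]
      ring
    rw [Finset.sum_congr rfl fun T hT => Finset.sum_congr rfl (e1 T hT)]
    have e2 : ∑ T ∈ F, ∑ U ∈ F, ∑ W ∈ F, (if W ⊆ T then N T * lam T else 0) *
        (if W ⊆ U then N U * lam U else 0) * (1 / g W)
        = ∑ W ∈ F, (∑ T ∈ F with W ⊆ T, N T * lam T) ^ 2 * (1 / g W) := by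
      rw [Finset.sum_congr rfl fun T _ => Finset.sum_comm, Finset.sum_comm]
      refine Finset.sum_congr rfl fun W _ => ?_
      rw [sq, Finset.sum_filter, Finset.sum_mul_sum, Finset.sum_mul]
      refine Finset.sum_congr rfl fun T _ => ?_
      rw [Finset.sum_mul]
    rw [e2]
    have e3 : ∀ W ∈ F, (∑ T ∈ F with W ⊆ T, N T * lam T) ^ 2 * (1 / g W) = g W / S ^ 2 := by
      intro W hW
      rw [hinv W hW]
      have := (hgpos W hW).ne'
      have h2 : ((-1 : ℝ) ^ W.card) ^ 2 = 1 := by rw [← pow_mul, mul_comm, pow_mul]; simp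
      rw [div_pow, mul_pow, h2]
      field_simp
    rw [Finset.sum_congr rfl e3, ← Finset.sum_div, ← hS]
    field_simp
  -- main inequality
  have hmain : ((#{n ∈ A | B n = ∅} : ℕ) : ℝ) ≤
      ∑ n ∈ A, (∑ T ∈ F, if T ⊆ B n then lam T else 0) ^ 2 := by
    rw [Finset.card_filter]
    push_cast
    refine Finset.sum_le_sum fun n _ => ?_
    split_ifs with h
    · rw [h]
      simp only [subset_empty]
      rw [Finset.sum_ite_eq' F ∅ lam, if_pos hne, hlam0]
      norm_num
    · positivity
  have hexp : ∑ n ∈ A, (∑ T ∈ F, if T ⊆ B n then lam T else 0) ^ 2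
      = ∑ T ∈ F, ∑ U ∈ F, lam T * lam U * ((#{n ∈ A | T ∪ U ⊆ B n} : ℕ) : ℝ) := by
    have e1 : ∀ n ∈ A, (∑ T ∈ F, if T ⊆ B n then lam T else 0) ^ 2
        = ∑ T ∈ F, ∑ U ∈ F, lam T * lam U * (if T ∪ U ⊆ B n then 1 else 0) := by
      intro n _
      rw [sq, Finset.sum_mul_sum]
      refine Finset.sum_congr rfl fun T _ => Finset.sum_congr rfl fun U _ => ?_
      by_cases h1 : T ⊆ B n <;> by_cases h2 : U ⊆ B n <;> simp [h1, h2, union_subset_iff]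
    rw [Finset.sum_congr rfl e1, Finset.sum_comm]
    refine Finset.sum_congr rfl fun T _ => ?_
    rw [Finset.sum_comm]
    refine Finset.sum_congr rfl fun U _ => ?_
    rw [← Finset.mul_sum, Finset.card_filter]
    push_cast
    rfl
  have hfin : ∑ T ∈ F, ∑ U ∈ F, lam T * lam U * ((#{n ∈ A | T ∪ U ⊆ B n} : ℕ) : ℝ)
      ≤ ∑ T ∈ F, ∑ U ∈ F, (X * (lam T * lam U * N (T ∪ U)) + (|w T| / N T) * (|w U| / N U)) := by
    refine Finset.sum_le_sum fun T hT => Finset.sum_le_sum fun U hU => ?_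
    have h1 := (hR T hT U hU).trans (le_abs_self _)
    rw [abs_mul] at h1
    have h2 : lam T * lam U * (((#{n ∈ A | T ∪ U ⊆ B n} : ℕ) : ℝ) - X * N (T ∪ U))
        ≤ (1 / N T * (1 / N U)) * (|w T| * |w U|) := by
      refine (le_abs_self _).trans ?_
      rw [abs_mul, abs_mul]
      have p1 := hNpos T hT
      have p2 := hNpos U hU
      gcongr
      · exact hlamabs T hT
      · exact hlamabs U hU
    calc _ = X * (lam T * lam U * N (T ∪ U)) +
        lam T * lam U * (((#{n ∈ A | T ∪ U ⊆ B n} : ℕ) : ℝ) - X * N (T ∪ U)) := by ring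
      _ ≤ X * (lam T * lam U * N (T ∪ U)) + (1 / N T * (1 / N U)) * (|w T| * |w U|) := by gcongr
      _ = _ := by ring
  refine hmain.trans (hexp.le.trans (hfin.trans (le_of_eq ?_)))
  simp only [Finset.sum_add_distrib, ← Finset.mul_sum, hquad]
  rw [sq, Finset.sum_mul_sum]
  simp only [Finset.mul_sum]
  ring

/-- lower bound for the Selberg sum in dimension two -/
lemma two_dim_lower (F G : Finset (Finset ι)) (M : Finset ι) (a b h : ι → ℝ)
    (ha : ∀ r, 0 ≤ a r) (hb : ∀ r, b r = if r ∈ M then 0 else a r)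
    (hFdown : ∀ T ∈ F, ∀ U, U ⊆ T → U ∈ F)
    (hG : ∀ T ∈ F, ∀ U ∈ F, T ∪ U ∈ G)
    (hh : ∀ T ∈ G, ∀ r ∈ T, a r * (1 + b r) + b r ≤ h r) :
    (∑ T ∈ F, ∏ r ∈ T, a r) ^ 2 ≤ (∏ r ∈ M, (1 + a r)) * ∑ T ∈ G, ∏ r ∈ T, h r := by
  have hb0 : ∀ r, 0 ≤ b r := by
    intro r; rw [hb]; split_ifs; exacts [le_rfl, ha r]
  have pa : ∀ T : Finset ι, 0 ≤ ∏ r ∈ T, a r := fun T => Finset.prod_nonneg fun r _ => ha r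
  have pb : ∀ T : Finset ι, 0 ≤ ∏ r ∈ T, b r := fun T => Finset.prod_nonneg fun r _ => hb0 r
  have h1 : ∑ T ∈ F, ∏ r ∈ T, a r ≤ (∏ r ∈ M, (1 + a r)) * ∑ T ∈ F, ∏ r ∈ T, b r := by
    rw [Finset.prod_one_add, Finset.sum_mul_sum, ← Finset.sum_product']
    have e1 : ∀ T ∈ F, ∏ r ∈ T, a r = (∏ r ∈ T ∩ M, a r) * ∏ r ∈ T \ M, b r := by
      intro T _
      rw [← Finset.prod_inter_mul_prod_sdiff T M]
      congr 1
      refine Finset.prod_congr rfl fun r hr => ?_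
      rw [hb, if_neg (Finset.mem_sdiff.1 hr).2]
    rw [Finset.sum_congr rfl e1]
    have e2 : Set.InjOn (fun T : Finset ι => (T ∩ M, T \ M)) (F : Set (Finset ι)) := by
      intro T _ U _ hTU
      simp only [Prod.mk.injEq] at hTU
      rw [← Finset.sdiff_union_inter T M, ← Finset.sdiff_union_inter U M, hTU.1, hTU.2]
    rw [← Finset.sum_image (f := fun x : Finset ι × Finset ι => (∏ r ∈ x.1, a r) * ∏ r ∈ x.2, b r) e2]
    refine Finset.sum_le_sum_of_subset_of_nonneg ?_ fun i _ _ => mul_nonneg (pa _) (pb _)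
    intro x hx
    obtain ⟨T, hT, rfl⟩ := Finset.mem_image.1 hx
    exact Finset.mem_product.2 ⟨Finset.mem_powerset.2 inter_subset_right,
      hFdown T hT _ sdiff_subset⟩
  have h2 : (∑ T ∈ F, ∏ r ∈ T, a r) * (∑ T ∈ F, ∏ r ∈ T, b r) ≤ ∑ T ∈ G, ∏ r ∈ T, h r := by
    have e0 : ∀ T ∈ G, ∑ A ∈ T.powerset, ∑ C ∈ A.powerset,
        (∏ r ∈ A, a r) * ((∏ r ∈ C, b r) * ∏ r ∈ T \ A, b r) ≤ ∏ r ∈ T, h r := by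
      intro T hT
      refine le_trans (le_of_eq ?_) (Finset.prod_le_prod
        (fun r _ => add_nonneg (mul_nonneg (ha r) (add_nonneg zero_le_one (hb0 r))) (hb0 r))
        (hh T hT))
      rw [Finset.prod_add]
      refine Finset.sum_congr rfl fun A _ => ?_
      rw [Finset.prod_mul_distrib, Finset.prod_one_add, ← Finset.mul_sum, ← Finset.sum_mul]
      ring
    refine le_trans ?_ (Finset.sum_le_sum e0)
    rw [Finset.sum_mul_sum, ← Finset.sum_product']
    have e3 : ∀ T ∈ G, ∑ A ∈ T.powerset, ∑ C ∈ A.powerset,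
        (∏ r ∈ A, a r) * ((∏ r ∈ C, b r) * ∏ r ∈ T \ A, b r)
        = ∑ y ∈ (T.powerset.sigma fun A => A.powerset),
          (∏ r ∈ y.1, a r) * ((∏ r ∈ y.2, b r) * ∏ r ∈ T \ y.1, b r) := by
      intro T _
      rw [Finset.sum_sigma]
    rw [Finset.sum_congr rfl e3, Finset.sum_sigma']
    set f : (Finset ι × Finset ι) → (Σ _ : Finset ι, Σ _ : Finset ι, Finset ι) :=
      fun x => ⟨x.1 ∪ x.2, x.1, x.1 ∩ x.2⟩ with hf
    have e2 : Set.InjOn f ((F ×ˢ F : Finset _) : Set (Finset ι × Finset ι)) := by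
      rintro ⟨A, B⟩ _ ⟨A', B'⟩ _ hx
      simp only [hf, Sigma.mk.injEq, heq_eq_eq] at hx
      obtain ⟨h1, h2, h3⟩ := hx
      subst h2
      refine Prod.ext rfl ?_
      ext r
      have q1 := Finset.ext_iff.1 h1 r
      have q3 := Finset.ext_iff.1 h3 r
      simp only [mem_union, mem_inter] at q1 q3
      tauto
    have e4 : ∀ x ∈ F ×ˢ F, (∏ r ∈ x.1, a r) * ∏ r ∈ x.2, b r
        = (fun y : (Σ _ : Finset ι, Σ _ : Finset ι, Finset ι) =>
          (∏ r ∈ y.2.1, a r) * ((∏ r ∈ y.2.2, b r) * ∏ r ∈ y.1 \ y.2.1, b r)) (f x) := by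
      rintro ⟨A, B⟩ _
      simp only [hf]
      rw [Finset.union_sdiff_left, Finset.inter_comm, Finset.prod_inter_mul_prod_sdiff]
    rw [Finset.sum_congr rfl e4, ← Finset.sum_image
      (f := fun y : (Σ _ : Finset ι, Σ _ : Finset ι, Finset ι) =>
          (∏ r ∈ y.2.1, a r) * ((∏ r ∈ y.2.2, b r) * ∏ r ∈ y.1 \ y.2.1, b r)) e2]
    refine Finset.sum_le_sum_of_subset_of_nonneg ?_ fun i _ _ =>
      mul_nonneg (pa _) (mul_nonneg (pb _) (pb _))
    intro y hy
    obtain ⟨⟨A, B⟩, hx, rfl⟩ := Finset.mem_image.1 hy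
    have hx := Finset.mem_product.1 hx
    simp only [hf, Finset.mem_sigma, Finset.mem_powerset]
    exact ⟨hG _ hx.1 _ hx.2, subset_union_left, inter_subset_left⟩
  calc (∑ T ∈ F, ∏ r ∈ T, a r) ^ 2
      = (∑ T ∈ F, ∏ r ∈ T, a r) * (∑ T ∈ F, ∏ r ∈ T, a r) := sq _
    _ ≤ (∑ T ∈ F, ∏ r ∈ T, a r) * ((∏ r ∈ M, (1 + a r)) * ∑ T ∈ F, ∏ r ∈ T, b r) :=
        mul_le_mul_of_nonneg_left h1 (Finset.sum_nonneg fun T _ => pa T)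
    _ = (∏ r ∈ M, (1 + a r)) * ((∑ T ∈ F, ∏ r ∈ T, a r) * (∑ T ∈ F, ∏ r ∈ T, b r)) := by ring
    _ ≤ _ := mul_le_mul_of_nonneg_left h2
        (Finset.prod_nonneg fun r _ => add_nonneg zero_le_one (ha r))

end Selberg
section Local

/-- number of roots of `x (m x + 1)` modulo `D` -/
noncomputable def nroots (m D : ℕ) : ℕ := #{x ∈ range D | D ∣ x * (m * x + 1)}

lemma dvd_congr (m D x y : ℕ) (h : x ≡ y [MOD D]) : D ∣ x * (m * x + 1) ↔ D ∣ y * (m * y + 1) := by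
  have h1 : x * (m * x + 1) ≡ y * (m * y + 1) [MOD D] := h.mul ((h.mul_left m).add_right 1)
  exact h1.dvd_iff dvd_rfl

lemma nroots_mul (m a b : ℕ) (ha : a ≠ 0) (hb : b ≠ 0) (hab : a.Coprime b) :
    nroots m (a * b) = nroots m a * nroots m b := by
  unfold nroots
  rw [← Finset.card_product]
  refine Finset.card_nbij' (fun x => (x % a, x % b)) (fun y => (Nat.chineseRemainder hab y.1 y.2 : ℕ))
    ?_ ?_ ?_ ?_
  · intro x hx
    simp only [coe_filter, mem_range, Set.mem_ofPred_eq] at hx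
    simp only [coe_product, coe_filter, mem_range, Set.mem_prod, Set.mem_ofPred_eq]
    refine ⟨⟨Nat.mod_lt _ (Nat.pos_of_ne_zero ha), ?_⟩, ⟨Nat.mod_lt _ (Nat.pos_of_ne_zero hb), ?_⟩⟩
    · exact (dvd_congr m a _ _ (Nat.mod_modEq x a)).2 ((Dvd.intro _ rfl).trans hx.2)
    · exact (dvd_congr m b _ _ (Nat.mod_modEq x b)).2 ((Dvd.intro_left _ rfl).trans hx.2)
  · rintro ⟨u, v⟩ hx
    simp only [coe_product, coe_filter, mem_range, Set.mem_prod, Set.mem_ofPred_eq] at hx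
    simp only [coe_filter, mem_range, Set.mem_ofPred_eq]
    refine ⟨Nat.chineseRemainder_lt_mul hab u v ha hb, ?_⟩
    have h := (Nat.chineseRemainder hab u v).2
    exact hab.mul_dvd_of_dvd_of_dvd ((dvd_congr m a _ _ h.1).2 hx.1.2)
      ((dvd_congr m b _ _ h.2).2 hx.2.2)
  · intro x hx
    simp only [coe_filter, mem_range, Set.mem_ofPred_eq] at hx
    have h := Nat.chineseRemainder_modEq_unique hab (a := x % a) (b := x % b) (z := x)
      (Nat.mod_modEq x a).symm (Nat.mod_modEq x b).symm
    have h2 := Nat.chineseRemainder_lt_mul hab (x % a) (x % b) ha hb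
    exact (Nat.ModEq.eq_of_lt_of_lt h hx.1 h2).symm
  · rintro ⟨u, v⟩ hx
    simp only [coe_product, coe_filter, mem_range, Set.mem_prod, Set.mem_ofPred_eq] at hx
    have h := (Nat.chineseRemainder hab u v).2
    refine Prod.ext ?_ ?_
    · have := h.1
      unfold Nat.ModEq at this
      simp only
      rw [this, Nat.mod_eq_of_lt hx.1.1]
    · have := h.2
      unfold Nat.ModEq at this
      simp only
      rw [this, Nat.mod_eq_of_lt hx.2.1]

lemma nroots_one (m : ℕ) : nroots m 1 = 1 := by
  simp [nroots]

lemma nroots_prime_dvd (m r : ℕ) (hr : r.Prime) (h : r ∣ m) : nroots m r = 1 := by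
  unfold nroots
  rw [Finset.card_eq_one]
  refine ⟨0, ?_⟩
  ext x
  simp only [mem_filter, mem_range, mem_singleton]
  constructor
  · rintro ⟨hx, hd⟩
    rcases hr.dvd_mul.1 hd with h1 | h1
    · exact Nat.eq_zero_of_dvd_of_lt h1 hx
    · exfalso
      have : r ∣ 1 := (Nat.dvd_add_right (h.mul_right x)).1 h1
      exact hr.one_lt.ne' (Nat.dvd_one.1 this)
  · rintro rfl
    exact ⟨hr.pos, by simp⟩

lemma nroots_prime_not_dvd (m r : ℕ) (hr : r.Prime) (h : ¬ r ∣ m) : nroots m r = 2 := by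
  unfold nroots
  have := Fact.mk hr
  have hm : (m : ZMod r) ≠ 0 := by
    rwa [Ne, ZMod.natCast_eq_zero_iff]
  set x0 : ℕ := (-(m : ZMod r)⁻¹).val with hx0
  have hx0c : ((x0 : ℕ) : ZMod r) = -(m : ZMod r)⁻¹ := by
    rw [hx0, ZMod.natCast_zmod_val]
  have hkey : ∀ x : ℕ, r ∣ m * x + 1 ↔ (x : ZMod r) = -(m : ZMod r)⁻¹ := by
    intro x
    rw [← ZMod.natCast_eq_zero_iff]
    push_cast
    constructor
    · intro h1
      have : (m : ZMod r) * x = -1 := eq_neg_of_add_eq_zero_left h1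
      field_simp
      rw [mul_comm, this]
    · intro h1
      rw [h1]
      field_simp
      ring
  have hx0lt : x0 < r := ZMod.val_lt _
  have hx00 : x0 ≠ 0 := by
    intro h0
    rw [h0] at hx0c
    simp at hx0c
    exact hm hx0c
  rw [Finset.card_eq_two]
  refine ⟨0, x0, hx00.symm, ?_⟩
  ext x
  simp only [mem_filter, mem_range, mem_singleton, mem_insert]
  constructor
  · rintro ⟨hx, hd⟩
    rcases hr.dvd_mul.1 hd with h1 | h1
    · exact Or.inl (Nat.eq_zero_of_dvd_of_lt h1 hx)
    · right
      rw [hkey, ← hx0c, ZMod.natCast_eq_natCast_iff] at h1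
      exact Nat.ModEq.eq_of_lt_of_lt h1 hx hx0lt
  · rintro (rfl | rfl)
    · exact ⟨hr.pos, by simp⟩
    · exact ⟨hx0lt, ((hkey _).2 hx0c).mul_left _⟩

/-- local density -/
noncomputable def locDens (m r : ℕ) : ℝ := (nroots m r : ℝ) / r

lemma nroots_prod (m : ℕ) (T : Finset ℕ) (hT : ∀ r ∈ T, r.Prime) :
    nroots m (∏ r ∈ T, r) = ∏ r ∈ T, nroots m r := by
  induction T using Finset.induction_on with
  | empty => simp [nroots_one]
  | insert a s has ih =>
    rw [Finset.prod_insert has, Finset.prod_insert has, nroots_mul, ih]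
    · exact fun r hr => hT r (Finset.mem_insert_of_mem hr)
    · exact (hT a (Finset.mem_insert_self _ _)).ne_zero
    · exact Finset.prod_ne_zero_iff.2 fun r hr => (hT r (Finset.mem_insert_of_mem hr)).ne_zero
    · refine Nat.Coprime.prod_right fun r hr => ?_
      refine (Nat.coprime_primes (hT a (Finset.mem_insert_self _ _))
        (hT r (Finset.mem_insert_of_mem hr))).2 ?_
      rintro rfl; exact has hr

lemma count_roots (m D K : ℕ) (hD : 0 < D) :
    |((#{n ∈ range K | D ∣ n * (m * n + 1)} : ℕ) : ℝ) - K * ((nroots m D : ℝ) / D)| ≤ D := by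
  set c : ℕ → ℕ := fun K => #{n ∈ range K | D ∣ n * (m * n + 1)} with hc
  have hstep : ∀ k s, c (D * k + s) = k * nroots m D + c s := by
    intro k s
    have h1 : ∀ j, c j = Nat.count (fun n => D ∣ n * (m * n + 1)) j := by
      intro j
      rw [Nat.count_eq_card_filter_range]
    induction k with
    | zero => simp
    | succ k ih =>
      have : D * (k + 1) + s = D + (D * k + s) := by ring
      rw [this, h1, Nat.count_add]
      have h2 : (fun j => D ∣ (D + j) * (m * (D + j) + 1)) = fun j => D ∣ j * (m * j + 1) := by
        funext j
        refine propext (dvd_congr m D _ _ ?_)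
        simp [Nat.ModEq]
      have h3 : Nat.count (fun n => D ∣ n * (m * n + 1)) D = nroots m D := by
        rw [← h1]; rfl
      simp only [h2]
      rw [h3]
      have h4 := h1 (D * k + s)
      rw [ih] at h4
      rw [← h4]
      ring
  have hK := hstep (K / D) (K % D)
  rw [Nat.div_add_mod] at hK
  have hs : K % D < D := Nat.mod_lt _ hD
  have hcs : c (K % D) ≤ nroots m D := by
    refine Finset.card_le_card ?_
    refine Finset.filter_subset_filter _ ?_
    exact Finset.range_subset_range.2 hs.le
  have hn : nroots m D ≤ D := by
    refine (Finset.card_filter_le _ _).trans (by simp)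
  have hDR : (0 : ℝ) < D := by exact_mod_cast hD
  have hKR : (K : ℝ) = D * ((K / D : ℕ) : ℝ) + ((K % D : ℕ) : ℝ) := by
    exact_mod_cast (Nat.div_add_mod K D).symm
  have e1 : ((c K : ℕ) : ℝ) - K * ((nroots m D : ℝ) / D)
      = (c (K % D) : ℝ) - ((K % D : ℕ) : ℝ) * ((nroots m D : ℝ) / D) := by
    rw [hK, hKR]
    push_cast
    field_simp
    ring
  have hnR : (nroots m D : ℝ) ≤ D := by exact_mod_cast hn
  have hcsR : (c (K % D) : ℝ) ≤ nroots m D := by exact_mod_cast hcs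
  have hsR : ((K % D : ℕ) : ℝ) ≤ D := by exact_mod_cast hs.le
  have e2 : ((K % D : ℕ) : ℝ) * ((nroots m D : ℝ) / D) ≤ D := by
    have : (nroots m D : ℝ) / D ≤ 1 := (div_le_one hDR).2 hnR
    calc _ ≤ ((K % D : ℕ) : ℝ) * 1 := by gcongr
      _ ≤ D := by simpa using hsR
  have e3 : 0 ≤ ((K % D : ℕ) : ℝ) * ((nroots m D : ℝ) / D) := by positivity
  have e4 : (0 : ℝ) ≤ (c (K % D) : ℝ) := by positivity
  rw [e1, abs_le]
  constructor <;> linarith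

/-- sets of primes with product at most `L` -/
noncomputable def fam (L : ℕ) : Finset (Finset ℕ) := {T ∈ (Nat.primesLE L).powerset | ∏ r ∈ T, r ≤ L}

lemma mem_fam {L : ℕ} {T : Finset ℕ} : T ∈ fam L ↔ (∀ r ∈ T, r.Prime) ∧ ∏ r ∈ T, r ≤ L := by
  unfold fam
  simp only [mem_filter, mem_powerset]
  constructor
  · rintro ⟨h1, h2⟩
    exact ⟨fun r hr => Nat.prime_of_mem_primesLE (h1 hr), h2⟩
  · rintro ⟨h1, h2⟩
    refine ⟨fun r hr => ?_, h2⟩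
    have h3 : r ∣ ∏ r ∈ T, r := Finset.dvd_prod_of_mem (fun r => r) hr
    have h4 : 0 < ∏ r ∈ T, r := Finset.prod_pos fun r hr => (h1 r hr).pos
    exact Nat.mem_primesLE.2 ⟨(Nat.le_of_dvd h4 h3).trans h2, h1 r hr⟩

lemma fam_down {L : ℕ} : ∀ T ∈ fam L, ∀ U, U ⊆ T → U ∈ fam L := by
  intro T hT U hU
  rw [mem_fam] at *
  refine ⟨fun r hr => hT.1 r (hU hr), le_trans ?_ hT.2⟩
  exact Finset.prod_le_prod_of_subset_of_one_le' hU fun r hr _ => (hT.1 r hr).one_le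

lemma fam_empty {L : ℕ} (hL : 1 ≤ L) : ∅ ∈ fam L := by
  rw [mem_fam]; simpa using hL

lemma prod_union_le (T U : Finset ℕ) (hT : ∀ r ∈ T, r.Prime) :
    ∏ r ∈ T ∪ U, r ≤ (∏ r ∈ T, r) * ∏ r ∈ U, r := by
  rw [← Finset.prod_union_inter]
  refine Nat.le_mul_of_pos_right _ (Finset.prod_pos fun r hr => (hT r (Finset.mem_inter.1 hr).1).pos)

lemma fam_union {L : ℕ} : ∀ T ∈ fam L, ∀ U ∈ fam L, T ∪ U ∈ fam (L ^ 2) := by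
  intro T hT U hU
  rw [mem_fam] at *
  refine ⟨fun r hr => ?_, ?_⟩
  · rcases Finset.mem_union.1 hr with h | h
    exacts [hT.1 r h, hU.1 r h]
  · refine (prod_union_le T U hT.1).trans ?_
    rw [sq]
    exact Nat.mul_le_mul hT.2 hU.2

lemma primeFactors_prod' (T : Finset ℕ) (hT : ∀ r ∈ T, r.Prime) : (∏ r ∈ T, r).primeFactors = T :=
  Nat.primeFactors_prod hT

lemma fam_card (L : ℕ) : #(fam L) ≤ L := by
  have : #(fam L) ≤ #(Finset.Icc 1 L) := by
    refine Finset.card_le_card_of_injOn (fun T => ∏ r ∈ T, r) ?_ ?_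
    · intro T hT
      have hT := mem_fam.1 (Finset.mem_coe.1 hT)
      simp only [coe_Icc, Set.mem_Icc]
      exact ⟨Finset.prod_pos fun r hr => (hT.1 r hr).pos, hT.2⟩
    · intro T hT U hU h
      have hT := mem_fam.1 (Finset.mem_coe.1 hT)
      have hU := mem_fam.1 (Finset.mem_coe.1 hU)
      simp only at h
      rw [← primeFactors_prod' T hT.1, h, primeFactors_prod' U hU.1]
  simpa using this

lemma harmonic_eq (n : ℕ) : ((harmonic n : ℚ) : ℝ) = ∑ i ∈ Finset.Icc 1 n, (1 : ℝ) / i := by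
  rw [harmonic_eq_sum_Icc]
  push_cast
  simp

lemma inv_sq_sum (n : ℕ) : ∑ i ∈ Finset.Icc 1 n, (1 : ℝ) / (i : ℝ) ^ 2 ≤ 2 := by
  have := sum_Ioo_inv_sq_le (α := ℝ) 0 (n + 1)
  have e : Finset.Ioo 0 (n + 1) = Finset.Icc 1 n := by ext x; simp; omega
  rw [e] at this
  simpa using this

lemma fam_sum_lower (L : ℕ) (hL : 1 ≤ L) :
    Real.log L / 2 ≤ ∑ T ∈ fam L, ∏ r ∈ T, (1 : ℝ) / r := by
  have h1 : Real.log L ≤ ∑ i ∈ Finset.Icc 1 L, (1 : ℝ) / i := by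
    rw [← harmonic_eq]
    refine le_trans ?_ (log_add_one_le_harmonic L)
    refine Real.log_le_log (by exact_mod_cast hL) (by push_cast; linarith)
  have h2 : ∑ i ∈ Finset.Icc 1 L, (1 : ℝ) / i ≤
      (∑ i ∈ Finset.Icc 1 L, (1 : ℝ) / (i : ℝ) ^ 2) * ∑ T ∈ fam L, ∏ r ∈ T, (1 : ℝ) / r := by
    rw [Finset.sum_mul_sum, ← Finset.sum_product']
    have hex : ∀ n : ℕ, ∃ y : ℕ × Finset ℕ, n ∈ Finset.Icc 1 L →
        (y ∈ Finset.Icc 1 L ×ˢ fam L ∧ y.1 ^ 2 * ∏ r ∈ y.2, r = n) := by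
      intro n
      by_cases hn : n ∈ Finset.Icc 1 L
      · have hn' := Finset.mem_Icc.1 hn
        obtain ⟨a, b, ha, hb, hab, hsq⟩ := Nat.sq_mul_squarefree_of_pos hn'.1
        refine ⟨(b, a.primeFactors), fun _ => ?_⟩
        have hp : ∏ r ∈ a.primeFactors, r = a := Nat.prod_primeFactors_of_squarefree hsq
        refine ⟨Finset.mem_product.2 ⟨Finset.mem_Icc.2 ⟨hb, ?_⟩, mem_fam.2 ⟨?_, ?_⟩⟩, ?_⟩
        · nlinarith
        · exact fun r hr => Nat.prime_of_mem_primeFactors hr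
        · simp only; rw [hp]; nlinarith [pow_pos hb 2]
        · simp only; rw [hp, hab]
      · exact ⟨(0, ∅), fun h => absurd h hn⟩
    choose f hf using hex
    have e1 : ∀ n ∈ Finset.Icc 1 L, (1 : ℝ) / n =
        1 / ((f n).1 : ℝ) ^ 2 * ∏ r ∈ (f n).2, (1 : ℝ) / r := by
      intro n hn
      have := (hf n hn).2
      rw [Finset.prod_div_distrib]
      simp only [prod_const_one]
      rw [← Nat.cast_prod, div_mul_div_comm, ← Nat.cast_pow, ← Nat.cast_mul, this]
      simp
    have e2 : Set.InjOn f (Finset.Icc 1 L : Finset ℕ) := by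
      intro n hn k hk h
      rw [← (hf n hn).2, ← (hf k hk).2, h]
    rw [Finset.sum_congr rfl e1, ← Finset.sum_image
      (f := fun y : ℕ × Finset ℕ => 1 / (y.1 : ℝ) ^ 2 * ∏ r ∈ y.2, (1 : ℝ) / r) e2]
    refine Finset.sum_le_sum_of_subset_of_nonneg ?_ fun y _ _ => ?_
    · intro y hy
      obtain ⟨n, hn, rfl⟩ := Finset.mem_image.1 hy
      exact (hf n hn).1
    · exact mul_nonneg (by positivity) (Finset.prod_nonneg fun r _ => by positivity)
  have h3 : 0 ≤ ∑ T ∈ fam L, ∏ r ∈ T, (1 : ℝ) / r :=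
    Finset.sum_nonneg fun T _ => Finset.prod_nonneg fun r _ => by positivity
  have h4 := mul_le_mul_of_nonneg_right (inv_sq_sum L) h3
  linarith

/-- sum of reciprocals of divisors -/
noncomputable def sig (m : ℕ) : ℝ := ∑ d ∈ m.divisors, (1 : ℝ) / d

lemma prod_le_sig (m : ℕ) (hm : m ≠ 0) : ∏ r ∈ m.primeFactors, (1 + (1 : ℝ) / r) ≤ sig m := by
  rw [Finset.prod_one_add]
  unfold sig
  have e2 : Set.InjOn (fun T : Finset ℕ => ∏ r ∈ T, r) (m.primeFactors.powerset : Set (Finset ℕ)) := by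
    intro T hT U hU h
    have hT := Finset.mem_powerset.1 (Finset.mem_coe.1 hT)
    have hU := Finset.mem_powerset.1 (Finset.mem_coe.1 hU)
    simp only at h
    rw [← primeFactors_prod' T fun r hr => Nat.prime_of_mem_primeFactors (hT hr), h,
      primeFactors_prod' U fun r hr => Nat.prime_of_mem_primeFactors (hU hr)]
  have e1 : ∀ T ∈ m.primeFactors.powerset, ∏ r ∈ T, (1 : ℝ) / r = 1 / ((∏ r ∈ T, r : ℕ) : ℝ) := by
    intro T _
    rw [Finset.prod_div_distrib]
    simp
  rw [Finset.sum_congr rfl e1, ← Finset.sum_image (f := fun d : ℕ => (1 : ℝ) / d) e2]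
  refine Finset.sum_le_sum_of_subset_of_nonneg ?_ fun y _ _ => by positivity
  intro y hy
  obtain ⟨T, hT, rfl⟩ := Finset.mem_image.1 hy
  have hT := Finset.mem_powerset.1 hT
  refine Nat.mem_divisors.2 ⟨?_, hm⟩
  exact (Finset.prod_dvd_prod_of_subset _ _ _ hT).trans (Nat.prod_primeFactors_dvd m)

lemma sig_nonneg (m : ℕ) : 0 ≤ sig m := Finset.sum_nonneg fun d _ => by positivity

lemma sig_sum (M : ℕ) : ∑ m ∈ Finset.Icc 1 M, sig m / m ≤ 2 * (1 + Real.log M) := by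
  have h1 : ∑ m ∈ Finset.Icc 1 M, sig m / m ≤
      (∑ i ∈ Finset.Icc 1 M, (1 : ℝ) / (i : ℝ) ^ 2) * ∑ k ∈ Finset.Icc 1 M, (1 : ℝ) / k := by
    rw [Finset.sum_mul_sum, ← Finset.sum_product']
    have e0 : ∀ m ∈ Finset.Icc 1 M, sig m / m = ∑ d ∈ m.divisors, (1 : ℝ) / d / m := by
      intro m _
      unfold sig
      rw [Finset.sum_div]
    rw [Finset.sum_congr rfl e0, Finset.sum_sigma']
    set f : (Σ _ : ℕ, ℕ) → ℕ × ℕ := fun x => (x.2, x.1 / x.2) with hf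
    have hmem : ∀ x ∈ (Finset.Icc 1 M).sigma (fun m => m.divisors), 0 < x.2 ∧ 0 < x.1 / x.2 ∧
        x.2 * (x.1 / x.2) = x.1 ∧ x.1 ≤ M := by
      intro x hx
      simp only [mem_sigma, mem_Icc, Nat.mem_divisors] at hx
      have hpos : 0 < x.2 := Nat.pos_of_dvd_of_pos hx.2.1 hx.1.1
      exact ⟨hpos, Nat.div_pos (Nat.le_of_dvd hx.1.1 hx.2.1) hpos, Nat.mul_div_cancel' hx.2.1,
        hx.1.2⟩
    have e2 : Set.InjOn f ((Finset.Icc 1 M).sigma (fun m => m.divisors) : Finset _) := by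
      rintro ⟨a, b⟩ hx ⟨a', b'⟩ hy h
      have h1 := (hmem _ hx).2.2.1
      have h2 := (hmem _ hy).2.2.1
      simp only [hf, Prod.mk.injEq] at h h1 h2
      rw [h.2, h.1] at h1
      have : a = a' := h1.symm.trans h2
      rw [this, h.1]
    have e1 : ∀ x ∈ (Finset.Icc 1 M).sigma (fun m => m.divisors), (1 : ℝ) / x.2 / x.1
        = (fun y : ℕ × ℕ => (1 : ℝ) / (y.1 : ℝ) ^ 2 * (1 / y.2)) (f x) := by
      intro x hx
      obtain ⟨p1, p2, p3, _⟩ := hmem x hx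
      simp only [hf]
      have : (x.1 : ℝ) = x.2 * ((x.1 / x.2 : ℕ) : ℝ) := by exact_mod_cast p3.symm
      conv_lhs => rw [this]
      rw [div_div, div_mul_div_comm]
      ring
    rw [Finset.sum_congr rfl e1, ← Finset.sum_image
      (f := fun y : ℕ × ℕ => (1 : ℝ) / (y.1 : ℝ) ^ 2 * (1 / y.2)) e2]
    refine Finset.sum_le_sum_of_subset_of_nonneg ?_ fun y _ _ => by positivity
    intro y hy
    obtain ⟨x, hx, rfl⟩ := Finset.mem_image.1 hy
    obtain ⟨p1, p2, p3, p4⟩ := hmem x hx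
    simp only [hf, mem_product, mem_Icc]
    refine ⟨⟨p1, ?_⟩, ⟨p2, ?_⟩⟩
    · nlinarith
    · nlinarith
  have h2 : ∑ k ∈ Finset.Icc 1 M, (1 : ℝ) / k ≤ 1 + Real.log M := by
    rw [← harmonic_eq]; exact harmonic_le_one_add_log M
  have h3 : (0 : ℝ) ≤ ∑ k ∈ Finset.Icc 1 M, (1 : ℝ) / k := Finset.sum_nonneg fun k _ => by positivity
  calc _ ≤ _ := h1
    _ ≤ 2 * ∑ k ∈ Finset.Icc 1 M, (1 : ℝ) / k := mul_le_mul_of_nonneg_right (inv_sq_sum M) h3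
    _ ≤ _ := by gcongr

lemma dens_pos (m r : ℕ) (hr : r.Prime) : 1 / (r : ℝ) ≤ locDens m r := by
  unfold locDens
  have : (1 : ℝ) ≤ nroots m r := by
    by_cases h : r ∣ m
    · rw [nroots_prime_dvd m r hr h]; simp
    · rw [nroots_prime_not_dvd m r hr h]; norm_num
  gcongr

lemma dens_lt_one (m r : ℕ) (hm : 2 ∣ m) (hr : r.Prime) : locDens m r < 1 := by
  unfold locDens
  have h0 : (0 : ℝ) < r := by exact_mod_cast hr.pos
  rw [div_lt_one h0]
  by_cases h : r ∣ m
  · rw [nroots_prime_dvd m r hr h]; exact_mod_cast hr.one_lt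
  · rw [nroots_prime_not_dvd m r hr h]
    have : r ≠ 2 := by rintro rfl; exact h hm
    have := hr.two_le
    have : 2 < r := by omega
    exact_mod_cast this

lemma dens_term (m r : ℕ) (hm : 2 ∣ m) (hm0 : m ≠ 0) (hr : r.Prime) :
    (1 : ℝ) / r * (1 + (if r ∈ m.primeFactors then 0 else (1 : ℝ) / r)) +
      (if r ∈ m.primeFactors then 0 else (1 : ℝ) / r) ≤ locDens m r / (1 - locDens m r) := by
  have h1 := dens_lt_one m r hm hr
  have h0 : (0 : ℝ) < r := by exact_mod_cast hr.pos
  rw [le_div_iff₀ (sub_pos.2 h1)]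
  unfold locDens
  by_cases h : r ∣ m
  · have : r ∈ m.primeFactors := Nat.mem_primeFactors.2 ⟨hr, h, hm0⟩
    rw [nroots_prime_dvd m r hr h, if_pos this]
    field_simp
    push_cast
    nlinarith
  · have : r ∉ m.primeFactors := fun h' => h (Nat.dvd_of_mem_primeFactors h')
    rw [nroots_prime_not_dvd m r hr h, if_neg this]
    field_simp
    push_cast
    nlinarith

set_option maxHeartbeats 1000000 in
/-- The upper bound sieve for pairs `n`, `m n + 1`. -/
lemma sieve_bound (m l K : ℕ) (hm : 2 ∣ m) (hm0 : m ≠ 0) (hl : 2 ≤ l) :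
    ((#{n ∈ range K | ∀ r : ℕ, r.Prime → r ≤ l ^ 2 → ¬ r ∣ n * (m * n + 1)} : ℕ) : ℝ) ≤
      4 * K * sig m / (Real.log l) ^ 2 + (l : ℝ) ^ 12 := by
  have hl1 : 1 ≤ l := by omega
  set B : ℕ → Finset ℕ := fun n => {r ∈ Nat.primesLE (l ^ 2) | r ∣ n * (m * n + 1)} with hB
  have hsub : ∀ T ∈ fam (l ^ 2), ∀ r ∈ T, r.Prime := fun T hT => (mem_fam.1 hT).1
  have hprime_le : ∀ T ∈ fam (l ^ 2), ∀ r ∈ T, r ∈ Nat.primesLE (l ^ 2) := by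
    intro T hT r hr
    unfold fam at hT
    exact (Finset.mem_powerset.1 (Finset.mem_filter.1 hT).1) hr
  have hmain := selberg_finset (fam (l ^ 2)) fam_down (fam_empty (Nat.one_le_pow _ _ hl1))
    (locDens m) (fun T hT r hr => lt_of_lt_of_le (by
      have := (hsub T hT r hr).pos
      positivity) (dens_pos m r (hsub T hT r hr)))
    (fun T hT r hr => dens_lt_one m r hm (hsub T hT r hr)) (range K) B K
    (fun T => ((∏ r ∈ T, r : ℕ) : ℝ)) (by
      intro T hT U hU
      have hTU : ∀ r ∈ T ∪ U, r.Prime := by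
        intro r hr
        rcases Finset.mem_union.1 hr with h | h
        exacts [hsub T hT r h, hsub U hU r h]
      have hTU' : ∀ r ∈ T ∪ U, r ∈ Nat.primesLE (l ^ 2) := by
        intro r hr
        rcases Finset.mem_union.1 hr with h | h
        exacts [hprime_le T hT r h, hprime_le U hU r h]
      have hpos : 0 < ∏ r ∈ T ∪ U, r := Finset.prod_pos fun r hr => (hTU r hr).pos
      have h1 := count_roots m (∏ r ∈ T ∪ U, r) K hpos
      have h2 : (nroots m (∏ r ∈ T ∪ U, r) : ℝ) / ((∏ r ∈ T ∪ U, r : ℕ) : ℝ)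
          = ∏ r ∈ T ∪ U, locDens m r := by
        rw [nroots_prod m _ hTU]
        unfold locDens
        rw [Finset.prod_div_distrib]
        push_cast
        rfl
      have h3 : ∀ n, (T ∪ U ⊆ B n) ↔ (∏ r ∈ T ∪ U, r) ∣ n * (m * n + 1) := by
        intro n
        constructor
        · intro h
          refine Finset.prod_primes_dvd _ (fun r hr => (hTU r hr).prime) fun r hr => ?_
          exact (Finset.mem_filter.1 (h hr)).2
        · intro h r hr
          exact Finset.mem_filter.2 ⟨hTU' r hr,
            (Finset.dvd_prod_of_mem (fun r => r) hr).trans h⟩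
      have h4 : #{n ∈ range K | T ∪ U ⊆ B n}
          = #{n ∈ range K | (∏ r ∈ T ∪ U, r) ∣ n * (m * n + 1)} := by
        congr 1
        ext n
        simp only [mem_filter, h3]
      rw [h2] at h1
      rw [h4]
      refine h1.trans ?_
      exact_mod_cast prod_union_le T U (hsub T hT))
  have hlow := two_dim_lower (fam l) (fam (l ^ 2)) m.primeFactors (fun r => (1 : ℝ) / r)
    (fun r => if r ∈ m.primeFactors then 0 else (1 : ℝ) / r) (fun r => locDens m r / (1 - locDens m r))
    (fun r => by positivity) (fun r => rfl) fam_down fam_union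
    (fun T hT r hr => dens_term m r hm hm0 (hsub T hT r hr))
  set S : ℝ := ∑ T ∈ fam (l ^ 2), ∏ r ∈ T, locDens m r / (1 - locDens m r) with hS
  have hlog : 0 < Real.log l := Real.log_pos (by exact_mod_cast (by omega : 1 < l))
  have hSnn : 0 ≤ S := by
    refine Finset.sum_nonneg fun T hT => Finset.prod_nonneg fun r hr => ?_
    have hp := hsub T hT r hr
    have := dens_lt_one m r hm hp
    exact div_nonneg (le_trans (by positivity) (dens_pos m r hp)) (by linarith)
  have h1 : (Real.log l / 2) ^ 2 ≤ sig m * S := by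
    calc (Real.log l / 2) ^ 2 ≤ (∑ T ∈ fam l, ∏ r ∈ T, (1 : ℝ) / r) ^ 2 := by
          have := fam_sum_lower l hl1
          gcongr
      _ ≤ _ := hlow
      _ ≤ _ := mul_le_mul_of_nonneg_right (prod_le_sig m hm0) hSnn
  have hSpos : 0 < S := by
    rcases hSnn.lt_or_eq with h | h
    · exact h
    · rw [← h, mul_zero] at h1
      have : 0 < (Real.log l / 2) ^ 2 := by positivity
      linarith
  have h2 : (K : ℝ) / S ≤ 4 * K * sig m / (Real.log l) ^ 2 := by
    rw [div_le_div_iff₀ hSpos (by positivity)]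
    have hK : (0 : ℝ) ≤ K := by positivity
    have h3 : (Real.log l) ^ 2 ≤ 4 * (sig m * S) := by nlinarith
    calc (K : ℝ) * (Real.log l) ^ 2 ≤ K * (4 * (sig m * S)) := by gcongr
      _ = _ := by ring
  have h3 : (∑ T ∈ fam (l ^ 2), |((∏ r ∈ T, r : ℕ) : ℝ)| / ∏ r ∈ T, locDens m r) ≤ (l : ℝ) ^ 6 := by
    have e1 : ∀ T ∈ fam (l ^ 2), |((∏ r ∈ T, r : ℕ) : ℝ)| / ∏ r ∈ T, locDens m r ≤ (l : ℝ) ^ 4 := by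
      intro T hT
      have hle : ((∏ r ∈ T, r : ℕ) : ℝ) ≤ (l : ℝ) ^ 2 := by exact_mod_cast (mem_fam.1 hT).2
      have hp : (0 : ℝ) < ((∏ r ∈ T, r : ℕ) : ℝ) := by
        exact_mod_cast Finset.prod_pos fun r hr => (hsub T hT r hr).pos
      have hd : 1 / ((∏ r ∈ T, r : ℕ) : ℝ) ≤ ∏ r ∈ T, locDens m r := by
        have : 1 / ((∏ r ∈ T, r : ℕ) : ℝ) = ∏ r ∈ T, 1 / (r : ℝ) := by
          rw [Finset.prod_div_distrib]; simp
        rw [this]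
        exact Finset.prod_le_prod (fun r _ => by positivity) fun r hr => dens_pos m r (hsub T hT r hr)
      rw [abs_of_pos hp]
      calc _ ≤ ((∏ r ∈ T, r : ℕ) : ℝ) / (1 / ((∏ r ∈ T, r : ℕ) : ℝ)) := by gcongr
        _ = ((∏ r ∈ T, r : ℕ) : ℝ) ^ 2 := by field_simp
        _ ≤ ((l : ℝ) ^ 2) ^ 2 := by gcongr
        _ = _ := by ring
    refine (Finset.sum_le_card_nsmul _ _ _ e1).trans ?_
    rw [nsmul_eq_mul]
    have : (#(fam (l ^ 2)) : ℝ) ≤ (l : ℝ) ^ 2 := by exact_mod_cast fam_card (l ^ 2)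
    calc _ ≤ (l : ℝ) ^ 2 * (l : ℝ) ^ 4 := by gcongr
      _ = _ := by ring
  have h3' : 0 ≤ (∑ T ∈ fam (l ^ 2), |((∏ r ∈ T, r : ℕ) : ℝ)| / ∏ r ∈ T, locDens m r) := by
    refine Finset.sum_nonneg fun T hT => div_nonneg (abs_nonneg _) (Finset.prod_nonneg fun r hr => ?_)
    exact le_trans (by positivity) (dens_pos m r (hsub T hT r hr))
  have h4 : #{n ∈ range K | ∀ r : ℕ, r.Prime → r ≤ l ^ 2 → ¬ r ∣ n * (m * n + 1)}
      = #{n ∈ range K | B n = ∅} := by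
    congr 1
    ext n
    simp only [mem_filter, hB, Finset.filter_eq_empty_iff, Nat.mem_primesLE]
    constructor
    · rintro ⟨a, b⟩; exact ⟨a, fun r hr => b r hr.2 hr.1⟩
    · rintro ⟨a, b⟩; exact ⟨a, fun r h1 h2 => b ⟨h2, h1⟩⟩
  rw [h4]
  refine hmain.trans ?_
  refine add_le_add h2 ?_
  calc _ ≤ ((l : ℝ) ^ 6) ^ 2 := by gcongr
    _ = _ := by ring

end Local
section Final

lemma bad_struct (y z : ℝ) (hy : 2 ≤ y) (p l : ℕ) (hl : (l : ℝ) ^ 2 ≤ y) (hp : p.Prime)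
    (hpz : (p : ℝ) ≤ z) (hbad : ¬ (Pplus (p - 1) : ℝ) ≤ y) :
    ∃ m q : ℕ, 1 ≤ m ∧ 2 ∣ m ∧ (m : ℝ) ≤ z / y ∧ (q : ℝ) ≤ z / m ∧ m * q + 1 = p ∧
      ∀ r : ℕ, r.Prime → r ≤ l ^ 2 → ¬ r ∣ q * (m * q + 1) := by
  have hp1 : p - 1 ≠ 1 := by
    intro h
    apply hbad
    unfold Pplus
    rw [if_pos h]
    push_cast
    linarith
  have hex : ∃ q ∈ (p - 1).primeFactors, y < q := by
    by_contra! hcon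
    apply hbad
    unfold Pplus
    rw [if_neg hp1]
    have h1 : (p - 1).primeFactors.sup id ≤ ⌊y⌋₊ := by
      refine Finset.sup_le fun q hq => ?_
      exact Nat.le_floor (hcon q hq)
    exact (Nat.cast_le.2 h1).trans (Nat.floor_le (by linarith))
  obtain ⟨q, hq, hyq⟩ := hex
  have hqp := Nat.prime_of_mem_primeFactors hq
  obtain ⟨m, hm⟩ := Nat.dvd_of_mem_primeFactors hq
  have hp2 : p - 1 ≠ 0 := fun h => by simp [h] at hq
  have hpe : m * q + 1 = p := by
    have := hp.one_lt
    rw [mul_comm, ← hm]; omega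
  have hm1 : 1 ≤ m := by
    rcases Nat.eq_zero_or_pos m with h | h
    · rw [h] at hm; simp at hm; exact absurd hm hp2
    · exact h
  have hq0 : (0 : ℝ) < q := by linarith
  have hm0 : (0 : ℝ) < m := by exact_mod_cast hm1
  have hmq : (m : ℝ) * q ≤ z := by
    have : ((m * q + 1 : ℕ) : ℝ) ≤ z := by rw [hpe]; exact hpz
    push_cast at this
    linarith
  have hq2 : 2 < q := by
    have : (2 : ℝ) < q := by linarith
    exact_mod_cast this
  have hqle : q < p := by nlinarith
  refine ⟨m, q, hm1, ?_, ?_, ?_, hpe, ?_⟩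
  · have hqodd : Odd q := hqp.odd_of_ne_two (by omega)
    have hpodd : Odd p := hp.odd_of_ne_two (by omega)
    by_contra hm2
    have hmodd : Odd m := by
      rw [← Nat.not_even_iff_odd, even_iff_two_dvd]; exact hm2
    have : Even p := by
      rw [← hpe]; exact (hmodd.mul hqodd).add_one
    exact (Nat.not_even_iff_odd.2 hpodd) this
  · rw [le_div_iff₀ (by linarith)]
    nlinarith
  · rw [le_div_iff₀ hm0]; linarith
  · intro r hr hrl hd
    have hrq : r < q := by
      have : (r : ℝ) < q := by
        have : (r : ℝ) ≤ (l : ℝ) ^ 2 := by exact_mod_cast hrl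
        linarith
      exact_mod_cast this
    rw [hpe] at hd
    rcases hr.dvd_mul.1 hd with h | h
    · have := (Nat.prime_dvd_prime_iff_eq hr hqp).1 h
      omega
    · have := (Nat.prime_dvd_prime_iff_eq hr hp).1 h
      omega

lemma bad_bound (y z : ℝ) (hy : 2 ≤ y) (hzy : y ≤ z) (l : ℕ) (hl2 : 2 ≤ l) (hl : (l : ℝ) ^ 2 ≤ y) :
    ((#{p ∈ range (⌊z⌋₊ + 1) | p.Prime ∧ ¬ (Pplus (p - 1) : ℝ) ≤ y} : ℕ) : ℝ) ≤
      16 * z * (1 + Real.log (z / y)) / (Real.log l) ^ 2 + z / y * (l : ℝ) ^ 12 := by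
  set M : ℕ := ⌊z / y⌋₊ with hM
  have hz0 : 0 < z := by linarith
  have hzy1 : 1 ≤ z / y := by rw [le_div_iff₀ (by linarith)]; linarith
  have hM1 : 1 ≤ M := Nat.le_floor (by simpa using hzy1)
  have hMle : (M : ℝ) ≤ z / y := Nat.floor_le (by linarith)
  set sif : ℕ → Finset ℕ := fun m => {n ∈ range (⌊z / m⌋₊ + 1) |
    ∀ r : ℕ, r.Prime → r ≤ l ^ 2 → ¬ r ∣ n * (m * n + 1)} with hsif
  have hsub : ({p ∈ range (⌊z⌋₊ + 1) | p.Prime ∧ ¬ (Pplus (p - 1) : ℝ) ≤ y} : Finset ℕ) ⊆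
      ((Finset.Icc 1 M).filter (2 ∣ ·)).biUnion fun m => (sif m).image fun n => m * n + 1 := by
    intro p hp
    obtain ⟨h1, h2, h3⟩ := Finset.mem_filter.1 hp
    have hpz : (p : ℝ) ≤ z := by
      have : p ≤ ⌊z⌋₊ := by have := Finset.mem_range.1 h1; omega
      exact (Nat.cast_le.2 this).trans (Nat.floor_le hz0.le)
    obtain ⟨m, q, a1, a2, a3, a4, a5, a6⟩ := bad_struct y z hy p l hl h2 hpz h3
    refine Finset.mem_biUnion.2 ⟨m, Finset.mem_filter.2 ⟨Finset.mem_Icc.2 ⟨a1, Nat.le_floor a3⟩, a2⟩,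
      Finset.mem_image.2 ⟨q, Finset.mem_filter.2 ⟨Finset.mem_range.2 ?_, a6⟩, a5⟩⟩
    exact Nat.lt_succ_of_le (Nat.le_floor a4)
  have hcard : #{p ∈ range (⌊z⌋₊ + 1) | p.Prime ∧ ¬ (Pplus (p - 1) : ℝ) ≤ y} ≤
      ∑ m ∈ (Finset.Icc 1 M).filter (2 ∣ ·), #(sif m) :=
    (Finset.card_le_card hsub).trans (Finset.card_biUnion_le.trans
      (Finset.sum_le_sum fun m _ => Finset.card_image_le))
  have hlog : 0 < Real.log l := Real.log_pos (by exact_mod_cast (by omega : 1 < l))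
  have hterm : ∀ m ∈ (Finset.Icc 1 M).filter (2 ∣ ·), (#(sif m) : ℝ) ≤
      8 * z / (Real.log l) ^ 2 * (sig m / m) + (l : ℝ) ^ 12 := by
    intro m hm
    obtain ⟨h1, h2⟩ := Finset.mem_filter.1 hm
    have h1 := Finset.mem_Icc.1 h1
    have hm0 : (0 : ℝ) < m := by exact_mod_cast h1.1
    have hmz : (m : ℝ) ≤ z := by
      have : (m : ℝ) ≤ M := by exact_mod_cast h1.2
      have : z / y ≤ z := div_le_self hz0.le (by linarith)
      linarith
    have hK : ((⌊z / m⌋₊ + 1 : ℕ) : ℝ) ≤ 2 * (z / m) := by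
      push_cast
      have e1 := Nat.floor_le (div_nonneg hz0.le hm0.le)
      have e2 : 1 ≤ z / m := by rw [le_div_iff₀ hm0]; linarith
      linarith
    refine (sieve_bound m l (⌊z / m⌋₊ + 1) h2 (by omega) hl2).trans ?_
    have hs := sig_nonneg m
    have : 4 * ((⌊z / m⌋₊ + 1 : ℕ) : ℝ) * sig m / (Real.log l) ^ 2 ≤
        4 * (2 * (z / m)) * sig m / (Real.log l) ^ 2 := by gcongr
    calc _ ≤ 4 * (2 * (z / m)) * sig m / (Real.log l) ^ 2 + (l : ℝ) ^ 12 := by gcongr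
      _ = _ := by ring
  calc ((#{p ∈ range (⌊z⌋₊ + 1) | p.Prime ∧ ¬ (Pplus (p - 1) : ℝ) ≤ y} : ℕ) : ℝ)
      ≤ ∑ m ∈ (Finset.Icc 1 M).filter (2 ∣ ·), (#(sif m) : ℝ) := by exact_mod_cast hcard
    _ ≤ ∑ m ∈ (Finset.Icc 1 M).filter (2 ∣ ·),
        (8 * z / (Real.log l) ^ 2 * (sig m / m) + (l : ℝ) ^ 12) := Finset.sum_le_sum hterm
    _ ≤ ∑ m ∈ Finset.Icc 1 M, (8 * z / (Real.log l) ^ 2 * (sig m / m) + (l : ℝ) ^ 12) := by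
        refine Finset.sum_le_sum_of_subset_of_nonneg (Finset.filter_subset _ _) fun m _ _ => ?_
        have hs := sig_nonneg m
        positivity
    _ = 8 * z / (Real.log l) ^ 2 * (∑ m ∈ Finset.Icc 1 M, sig m / m) + M * (l : ℝ) ^ 12 := by
        rw [Finset.sum_add_distrib, ← Finset.mul_sum]
        simp
    _ ≤ 8 * z / (Real.log l) ^ 2 * (2 * (1 + Real.log (z / y))) + z / y * (l : ℝ) ^ 12 := by
        have h1 := sig_sum M
        have h2 : Real.log M ≤ Real.log (z / y) :=
          Real.log_le_log (by exact_mod_cast hM1) hMle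
        have h3 : ∑ m ∈ Finset.Icc 1 M, sig m / m ≤ 2 * (1 + Real.log (z / y)) := by linarith
        gcongr
    _ = _ := by ring

lemma exists_level (y : ℝ) (hy : Real.exp 100 ≤ y) :
    ∃ l : ℕ, 2 ≤ l ∧ (l : ℝ) ^ 2 ≤ y ∧ (l : ℝ) ^ 12 ≤ y ^ (1 / 2 : ℝ) ∧
      Real.log y / 48 ≤ Real.log l := by
  have hy0 : 0 < y := (Real.exp_pos _).trans_le hy
  have hy1 : 1 ≤ y := le_trans (by simp) hy
  have hL : 100 ≤ Real.log y := (Real.le_log_iff_exp_le hy0).2 hy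
  set t : ℝ := y ^ (1 / 24 : ℝ) with ht
  have ht0 : 0 < t := Real.rpow_pos_of_pos hy0 _
  have hlogt : Real.log t = Real.log y / 24 := by rw [ht, Real.log_rpow hy0]; ring
  have ht4 : 4 ≤ t := by
    have h1 : (4 : ℝ) ≤ Real.exp 4 := by have := Real.add_one_le_exp (4 : ℝ); linarith
    refine h1.trans ?_
    rw [← Real.exp_log ht0, Real.exp_le_exp, hlogt]
    linarith
  have hfl : (⌊t⌋₊ : ℝ) ≤ t := Nat.floor_le ht0.le
  have hfl2 : t / 2 ≤ (⌊t⌋₊ : ℝ) := by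
    have := Nat.lt_floor_add_one t; linarith
  have ht24 : t ^ 24 = y := by
    rw [ht, ← Real.rpow_natCast, ← Real.rpow_mul hy0.le]; norm_num
  have ht12 : t ^ 12 = y ^ (1 / 2 : ℝ) := by
    rw [ht, ← Real.rpow_natCast, ← Real.rpow_mul hy0.le]; norm_num
  refine ⟨⌊t⌋₊, Nat.le_floor (by push_cast; linarith), ?_, ?_, ?_⟩
  · calc (⌊t⌋₊ : ℝ) ^ 2 ≤ t ^ 2 := by gcongr
      _ ≤ t ^ 24 := pow_le_pow_right₀ (by linarith) (by norm_num)
      _ = y := ht24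
  · rw [← ht12]; gcongr
  · have h1 : Real.log (t / 2) ≤ Real.log (⌊t⌋₊ : ℝ) := Real.log_le_log (by positivity) hfl2
    rw [Real.log_div ht0.ne' (by norm_num), hlogt] at h1
    have : Real.log 2 ≤ 1 := by have := Real.log_two_lt_d9; linarith
    linarith

lemma log_le_quarter (y : ℝ) (hy : 0 < y) : Real.log y ≤ 4 * y ^ (1 / 4 : ℝ) := by
  have := Real.log_le_rpow_div hy.le (show (0 : ℝ) < 1 / 4 by norm_num)
  linarith

lemma final_y (ρ y : ℝ) (hρ : ρ = 1 / 10 ^ 6) (hy : Real.exp (10 ^ 7) ≤ y) :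
    ((#{p ∈ range (⌊y ^ (1 + ρ)⌋₊ + 1) | p.Prime ∧ (Pplus (p - 1) : ℝ) ≤ y} : ℕ) : ℝ) >
      1 / 20 * y ^ (1 + ρ) / Real.log y := by
  have hy0 : 0 < y := (Real.exp_pos _).trans_le hy
  have hL : 10 ^ 7 ≤ Real.log y := (Real.le_log_iff_exp_le hy0).2 hy
  have hybig : 10 ^ 7 ≤ y := by
    have := Real.add_one_le_exp ((10 : ℝ) ^ 7); linarith
  set z : ℝ := y ^ (1 + ρ) with hz
  set L : ℝ := Real.log y with hLdef
  have hL0 : 0 < L := by linarith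
  have hρ0 : 0 < ρ := by rw [hρ]; norm_num
  have hzy : z / y = y ^ ρ := by
    rw [hz, Real.rpow_add hy0, Real.rpow_one]; field_simp
  have hyz : y ≤ z := by
    conv_lhs => rw [← Real.rpow_one y]
    exact Real.rpow_le_rpow_of_exponent_le (by linarith) (by linarith)
  have hz0 : 0 < z := by linarith
  have hlogz : Real.log z = (1 + ρ) * L := by rw [hz, Real.log_rpow hy0]
  have hlogzy : Real.log (z / y) = ρ * L := by rw [hzy, Real.log_rpow hy0]
  obtain ⟨l, l1, l2, l3, l4⟩ := exists_level y (le_trans (Real.exp_le_exp.2 (by norm_num)) hy)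
  have hbad := bad_bound y z (by linarith) hyz l l1 l2
  rw [hlogzy] at hbad
  -- Chebyshev
  have hpi := Chebyshev.pi_ge' (x := z) (by linarith)
  have hpi2 : 3 / 10 * z / L ≤ (Nat.primeCounting ⌊z⌋₊ : ℝ) := by
    refine le_trans ?_ hpi
    rw [hlogz, div_le_div_iff₀ hL0 (by positivity)]
    have e1 : Real.log (z + 2) ≤ z / 100 := by
      have h1 : Real.log (z + 2) ≤ Real.log (2 * z) := Real.log_le_log (by linarith) (by linarith)
      rw [Real.log_mul (by norm_num) hz0.ne'] at h1
      have h2 := Real.log_le_rpow_div hz0.le (show (0 : ℝ) < 1 / 2 by norm_num)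
      rw [← Real.sqrt_eq_rpow] at h2
      have h3 : (1000 : ℝ) ≤ √z := by
        rw [show (1000 : ℝ) = √(1000 ^ 2) by rw [Real.sqrt_sq]; norm_num]
        exact Real.sqrt_le_sqrt (by linarith)
      have h4 : √z * √z = z := Real.mul_self_sqrt hz0.le
      have h5 := Real.log_two_lt_d9
      nlinarith
    have e2 := Real.log_two_gt_d9
    have e3 : (z - 1) * Real.log 2 ≥ (z - 1) * 0.69 := by
      have : 0 ≤ z - 1 := by linarith
      exact mul_le_mul_of_nonneg_left (by linarith) this
    have e4 : 3 / 10 * z * (1 + ρ) ≤ (z - 1) * Real.log 2 - Real.log (z + 2) := by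
      rw [hρ]; linarith
    calc 3 / 10 * z * ((1 + ρ) * L) = (3 / 10 * z * (1 + ρ)) * L := by ring
      _ ≤ _ := by gcongr
  -- bad terms
  have hb1 : 16 * z * (1 + ρ * L) / (Real.log l) ^ 2 ≤ 1 / 10 * z / L := by
    have e1 : 16 * z * (1 + ρ * L) / (Real.log l) ^ 2 ≤ 16 * z * (1 + ρ * L) / (L / 48) ^ 2 := by
      gcongr
    refine e1.trans ?_
    rw [div_le_div_iff₀ (by positivity) hL0]
    have e2 : 16 * (1 + ρ * L) * 48 ^ 2 ≤ 1 / 10 * L := by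
      rw [hρ]; linarith
    have : 16 * (1 + ρ * L) ≤ 1 / 10 * L / 48 ^ 2 := by linarith
    calc 16 * z * (1 + ρ * L) * L = (16 * (1 + ρ * L)) * (z * L) := by ring
      _ ≤ (1 / 10 * L / 48 ^ 2) * (z * L) := by gcongr
      _ = _ := by ring
  have hb2 : z / y * (l : ℝ) ^ 12 ≤ 1 / 10 * z / L := by
    have e1 : z / y * (l : ℝ) ^ 12 ≤ z / y * y ^ (1 / 2 : ℝ) := by
      have : 0 ≤ z / y := by positivity
      gcongr
    refine e1.trans ?_
    rw [le_div_iff₀ hL0]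
    have e2 := log_le_quarter y hy0
    set s : ℝ := y ^ (1 / 4 : ℝ) with hs
    have hs0 : 0 < s := Real.rpow_pos_of_pos hy0 _
    have hs4 : s ^ 4 = y := by
      rw [hs, ← Real.rpow_natCast, ← Real.rpow_mul hy0.le]; norm_num
    have hs2 : y ^ (1 / 2 : ℝ) = s ^ 2 := by
      rw [hs, ← Real.rpow_natCast, ← Real.rpow_mul hy0.le]; norm_num
    have hs40 : 40 ≤ s := by
      by_contra! h
      have : s ^ 4 ≤ 40 ^ 4 := by gcongr
      rw [hs4] at this
      linarith
    rw [hs2, ← hs4]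
    calc z / s ^ 4 * s ^ 2 * L ≤ z / s ^ 4 * s ^ 2 * (4 * s) := by gcongr
      _ = 4 * z / s := by field_simp
      _ ≤ 4 * z / 40 := by gcongr
      _ = _ := by ring
  have hsplit : (Nat.primeCounting ⌊z⌋₊ : ℝ) =
      (#{p ∈ range (⌊z⌋₊ + 1) | p.Prime ∧ (Pplus (p - 1) : ℝ) ≤ y} : ℝ) +
      (#{p ∈ range (⌊z⌋₊ + 1) | p.Prime ∧ ¬ (Pplus (p - 1) : ℝ) ≤ y} : ℝ) := by
    rw [Nat.primeCounting, Nat.primeCounting', Nat.count_eq_card_filter_range]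
    rw [← Finset.card_filter_add_card_filter_not (fun p : ℕ => (Pplus (p - 1) : ℝ) ≤ y),
      Finset.filter_filter, Finset.filter_filter]
    push_cast
    congr!
  have hpos : 0 < z / L := by positivity
  have r1 : 3 / 10 * z / L = 3 / 10 * (z / L) := by ring
  have r2 : 1 / 10 * z / L = 1 / 10 * (z / L) := by ring
  have r3 : 1 / 20 * z / L = 1 / 20 * (z / L) := by ring
  rw [r1] at hpi2
  rw [r2] at hb1 hb2
  rw [r3, gt_iff_lt]
  linarith

end Final

/-- Erdős (1935): there exist `ρ, c_ρ > 0` such that for all large `x`,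
`#{p ≤ (log x)^{1+ρ} : p prime, P⁺(p−1) ≤ log x} > c_ρ·(log x)^{1+ρ}/log log x`. -/
theorem erdos_shifted_primes_small_factor :
    ∃ ρ : ℝ, 0 < ρ ∧ ∃ cρ : ℝ, 0 < cρ ∧ ∃ x₀ : ℝ, ∀ x ≥ x₀,
      ((((Finset.range (⌊(Real.log x) ^ (1 + ρ)⌋₊ + 1)).filter
          (fun p : ℕ => p.Prime ∧ (Pplus (p - 1) : ℝ) ≤ Real.log x)).card : ℝ)) >
        cρ * (Real.log x) ^ (1 + ρ) / Real.log (Real.log x) := by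
  refine ⟨1 / 10 ^ 6, by norm_num, 1 / 20, by norm_num, Real.exp (Real.exp (10 ^ 7)), ?_⟩
  intro x hx
  have hx0 : 0 < x := (Real.exp_pos _).trans_le hx
  have hy : Real.exp (10 ^ 7) ≤ Real.log x := (Real.le_log_iff_exp_le hx0).2 hx
  exact final_y _ _ rfl hy
end
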